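/- Let $N\ge 2$, let $\Omega\subset\mathbb R^N$ be a bounded domain with smooth boundary, let $1<p<\infty$ and $1\le q<p_*$, where $p_*=p(N-1)/(N-p)$ if $p<N$ and $p_*=\infty$ if $p\ge N$. Let $\mathcal H^{N-1}$ be the $(N-1)$-dimensional Hausdorff measure, and let boundary values of Sobolev functions be understood in the sense of traces. Put $\mathcal X:=W^{1,p}(\Omega)\setminus W^{1,p}_0(\Omega)$ and, for $\mathcal H^{N-1}$-measurable $\Gamma\subset\partial\Omega$, $\mathcal X_\Gamma:=\{u\in\mathcal X: u=0\ \mathcal H^{N-1}\text{-a.e. on }\Gamma\}$, $$S(\Gamma):=\inf_{u\in\mathcal X_\Gamma}\frac{\int_\Omega |\nabla u|^p+|u|^p\,dx}{\left(\int_{\partial\Omega}|u|^q\,d\mathcal H^{N-1}\right)^{p/q}}\qquad(\inf\emptyset=\infty),$$ and, for $0<\alpha<1$, $$\mathcal S(\alpha):=\inf\{S(\Gamma):\Gamma\subset\partial\Omega\ \ \mathcal H^{N-1}\text{-measurable},\ \mathcal H^{N-1}(\Gamma)=\alpha\,\mathcal H^{N-1}(\partial\Omega)\}.$$ Then for every $\alpha\in(0,1)$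 there exists $u\in\mathcal X$ with $\mathcal H^{N-1}(\{x\in\partial\Omega: u(x)=0\})\ge\alpha\,\mathcal H^{N-1}(\partial\Omega)$ such that $$\mathcal S(\alpha)=\frac{\|u\|^p_{W^{1,p}(\Omega)}}{\|u\|^p_{L^q(\partial\Omega)}},$$ where $\|u\|^p_{W^{1,p}(\Omega)}=\int_\Omega|\nabla u|^p+|u|^p\,dx$ and $\|u\|_{L^q(\partial\Omega)}=\left(\int_{\partial\Omega}|u|^q\,d\mathcal H^{N-1}\right)^{1/q}$. -/

import Mathlib

open MeasureTheory Set Filter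
open scoped ENNReal Topology ContDiff RealInnerProductSpace

noncomputable section

/-- `N`-dimensional Euclidean space. -/
abbrev Euc (N : ℕ) : Type := EuclideanSpace ℝ (Fin N)

/-- The boundary of `Ω` is smooth: near each boundary point, `Ω` is the sublevel set `{f < 0}` of a
smooth function whose gradient does not vanish at that point. -/
def HasSmoothBoundary {N : ℕ} (Ω : Set (Euc N)) : Prop :=
  ∀ x ∈ frontier Ω, ∃ (U : Set (Euc N)) (f : Euc N → ℝ), IsOpen U ∧ x ∈ U ∧
    ContDiff ℝ ∞ f ∧ gradient f x ≠ 0 ∧ Ω ∩ U = {y ∈ U | f y < 0}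

/-- The surface measure `H^{N-1}` restricted to `∂Ω`. -/
def surf {N : ℕ} (Ω : Set (Euc N)) : Measure (Euc N) :=
  (μH[(N : ℝ) - 1]).restrict (frontier Ω)

/-- `g` is the weak gradient of `u` in `Ω`. -/
def IsWeakGradient {N : ℕ} (Ω : Set (Euc N)) (u : Euc N → ℝ) (g : Euc N → Euc N) : Prop :=
  ∀ φ : Euc N → ℝ, ContDiff ℝ ∞ φ → HasCompactSupport φ → tsupport φ ⊆ Ω →
    ∀ v : Euc N, ∫ x in Ω, u x * fderiv ℝ φ x v = - ∫ x in Ω, φ x * ⟪g x, v⟫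

/-- `u ∈ W^{1,p}(Ω)`, with weak gradient `g`. -/
def MemW1p {N : ℕ} (Ω : Set (Euc N)) (p : ℝ) (u : Euc N → ℝ) (g : Euc N → Euc N) : Prop :=
  MemLp u (ENNReal.ofReal p) (volume.restrict Ω) ∧
    MemLp g (ENNReal.ofReal p) (volume.restrict Ω) ∧ IsWeakGradient Ω u g

/-- The differentiable functions `φ n` converge in `W^{1,p}(Ω)` to `u`, whose weak gradient
is `g`. -/
def TendstoW1p {N : ℕ} (Ω : Set (Euc N)) (p : ℝ) (φ : ℕ → Euc N → ℝ)
    (u : Euc N → ℝ) (g : Euc N → Euc N) : Prop :=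
  Tendsto (fun n => eLpNorm (fun x => φ n x - u x) (ENNReal.ofReal p) (volume.restrict Ω))
      atTop (𝓝 0) ∧
    Tendsto (fun n => eLpNorm (fun x => gradient (φ n) x - g x) (ENNReal.ofReal p)
      (volume.restrict Ω)) atTop (𝓝 0)

/-- `u ∈ W^{1,p}_0(Ω)`, the closure of `C_c^∞(Ω)` in `W^{1,p}(Ω)`; `g` is the weak gradient. -/
def MemW1p0 {N : ℕ} (Ω : Set (Euc N)) (p : ℝ) (u : Euc N → ℝ) (g : Euc N → Euc N) : Prop :=
  MemW1p Ω p u g ∧ ∃ φ : ℕ → Euc N → ℝ,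
    (∀ n, ContDiff ℝ ∞ (φ n) ∧ HasCompactSupport (φ n) ∧ tsupport (φ n) ⊆ Ω) ∧
    TendstoW1p Ω p φ u g

/-- `T` is (a representative of) the trace on `∂Ω` of `u ∈ W^{1,p}(Ω)`: the limit in `L^p(∂Ω)` of
the boundary values of functions smooth up to the boundary that converge to `u` in
`W^{1,p}(Ω)`. The values of `T` off `∂Ω` play no role. -/
def IsTrace {N : ℕ} (Ω : Set (Euc N)) (p : ℝ) (u : Euc N → ℝ) (g : Euc N → Euc N)
    (T : Euc N → ℝ) : Prop :=
  MemLp T (ENNReal.ofReal p) (surf Ω) ∧ ∃ φ : ℕ → Euc N → ℝ,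
    (∀ n, ContDiff ℝ ∞ (φ n)) ∧ TendstoW1p Ω p φ u g ∧
    Tendsto (fun n => eLpNorm (fun x => φ n x - T x) (ENNReal.ofReal p) (surf Ω)) atTop (𝓝 0)

/-- `u` is admissible, i.e. `u ∈ W^{1,p}(Ω) \ W^{1,p}_0(Ω)`; here `g` is its weak gradient and `T`
its trace. -/
def Admissible {N : ℕ} (Ω : Set (Euc N)) (p : ℝ) (u : Euc N → ℝ) (g : Euc N → Euc N)
    (T : Euc N → ℝ) : Prop :=
  MemW1p Ω p u g ∧ ¬ MemW1p0 Ω p u g ∧ IsTrace Ω p u g T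

/-- `∫_Ω |∇u|^p + |u|^p dx`. -/
def sobolevEnergy {N : ℕ} (Ω : Set (Euc N)) (p : ℝ) (u : Euc N → ℝ) (g : Euc N → Euc N) : ℝ≥0∞ :=
  ∫⁻ x in Ω, (‖g x‖ₑ ^ p + ‖u x‖ₑ ^ p)

/-- `∫_{∂Ω} |T|^q dH^{N-1}`. -/
def bdryLqPow {N : ℕ} (Ω : Set (Euc N)) (q : ℝ) (T : Euc N → ℝ) : ℝ≥0∞ :=
  ∫⁻ x, ‖T x‖ₑ ^ q ∂(surf Ω)

/-- `(∫_Ω |∇u|^p + |u|^p dx) / (∫_{∂Ω} |T|^q dH^{N-1})^{p/q}`. -/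
def rayleighQuot {N : ℕ} (Ω : Set (Euc N)) (p q : ℝ) (u : Euc N → ℝ) (g : Euc N → Euc N)
    (T : Euc N → ℝ) : ℝ≥0∞ :=
  sobolevEnergy Ω p u g / (bdryLqPow Ω q T) ^ (p / q)

/-- `S(Γ)`: the infimum of the quotient over the admissible functions whose trace vanishes
`H^{N-1}`-a.e. on `Γ` (it is `∞` if there are none). -/
def traceConst {N : ℕ} (Ω : Set (Euc N)) (p q : ℝ) (Γ : Set (Euc N)) : ℝ≥0∞ :=
  sInf {r | ∃ u g T, Admissible Ω p u g T ∧
    (∀ᵐ x ∂(μH[(N : ℝ) - 1] : Measure (Euc N)), x ∈ Γ → T x = 0) ∧ r = rayleighQuot Ω p q u g T}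

/-- `𝒮(α)`: the infimum of `S(Γ)` over the `H^{N-1}`-measurable sets `Γ ⊆ ∂Ω` with
`H^{N-1}(Γ) = α H^{N-1}(∂Ω)`. -/
def optTraceConst {N : ℕ} (Ω : Set (Euc N)) (p q α : ℝ) : ℝ≥0∞ :=
  sInf {r | ∃ Γ : Set (Euc N), Γ ⊆ frontier Ω ∧
    NullMeasurableSet Γ (μH[(N : ℝ) - 1] : Measure (Euc N)) ∧
    μH[(N : ℝ) - 1] Γ = ENNReal.ofReal α * μH[(N : ℝ) - 1] (frontier Ω) ∧
    r = traceConst Ω p q Γ}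

end

/-! The direct method, with two substitutes for weak compactness in `W^{1,p}(Ω)`.

A bounded open set with smooth boundary has interior cones: `x + t v ∈ Ω` for `x ∈ ∂Ω` close to a
given boundary point, `v` close to a fixed direction and `t` small. Averaging a function over such
cones bounds its trace on `∂Ω` by its `W^{1,p}(Ω)` norm and approximates the trace, uniformly on
bounded sets, by equi-Lipschitz functions; so, below the critical exponent, traces of bounded
sequences are precompact in `L^r(∂Ω)`, `r = max p q`, by Arzelà–Ascoli.

Given smooth functions, normalized in `L^q(∂Ω)` in the limit, whose energies tend to `𝒮(α)`, a
subsequence of their traces converges strongly to some `T`; the constraints pass to `T`, since the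
measure of the zero set is upper semicontinuous. Among smooth functions with boundary values closer
and closer to `T`, almost minimizers of the energy form a Cauchy sequence by uniform convexity, and
their limit is extremal. -/

noncomputable section

open Metric Module
open scoped NNReal

/-! ### Interior cones -/

/-- Uniform interior cone condition near `x₀`, with the same cone
`{t • y | 0 < t < R, y ∈ ball e ρ}` at all boundary points close to `x₀`. The axis is normalised
and the aperture is bounded by `1`, which loses no generality. -/
structure IsInteriorCone {E : Type*} [NormedAddCommGroup E] [NormedSpace ℝ E] (Ω : Set E)
    (x₀ e : E) (ρ R : ℝ) : Prop where
  norm_axis : ‖e‖ = 1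
  aperture_pos : 0 < ρ
  aperture_le_one : ρ ≤ 1
  radius_pos : 0 < R
  add_smul_mem : ∀ x ∈ frontier Ω, dist x x₀ < R → ∀ y ∈ ball e ρ, ∀ t, 0 < t → t < R →
    x + t • y ∈ Ω

/-- `Ω` satisfies the uniform interior cone condition near each of its boundary points. -/
def HasInteriorCones {E : Type*} [NormedAddCommGroup E] [NormedSpace ℝ E] (Ω : Set E) : Prop :=
  ∀ x₀ ∈ frontier Ω, ∃ e ρ R, IsInteriorCone Ω x₀ e ρ R

section Cone

variable {E : Type*} [NormedAddCommGroup E] [NormedSpace ℝ E]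

lemma exists_unit_vector_neg {f' : E →L[ℝ] ℝ} (hf' : f' ≠ 0) : ∃ e, ‖e‖ = 1 ∧ f' e < 0 := by
  obtain ⟨v, hv⟩ : ∃ v, f' v < 0 := by
    obtain ⟨w, hw⟩ := DFunLike.ne_iff.1 hf'
    rcases lt_or_gt_of_ne hw with h | h
    · exact ⟨w, h⟩
    · exact ⟨-w, by simpa using h⟩
  have hv0 : v ≠ 0 := by rintro rfl; simp at hv
  refine ⟨‖v‖⁻¹ • v, norm_smul_inv_norm hv0, ?_⟩
  rw [map_smul, smul_eq_mul]
  exact mul_neg_of_pos_of_neg (inv_pos.2 (norm_pos_iff.2 hv0)) hv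

lemma nonpos_of_mem_closure {X : Type*} [TopologicalSpace X] {Ω U : Set X} {f : X → ℝ}
    (hf : Continuous f) (hU : IsOpen U) (hΩU : Ω ∩ U = {y ∈ U | f y < 0}) {x : X}
    (hx : x ∈ closure Ω) (hxU : x ∈ U) : f x ≤ 0 := by
  have hmem : x ∈ closure (Ω ∩ U) := by rw [inter_comm]; exact hU.inter_closure ⟨hxU, hx⟩
  refine closure_minimal (fun y hy => ?_) (isClosed_Iic.preimage hf) hmem
  rw [hΩU] at hy
  exact hy.2.le

lemma exists_isInteriorCone_of_hasStrictFDerivAt {Ω U : Set E} {x₀ : E} {f : E → ℝ}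
    {f' : E →L[ℝ] ℝ} (hU : IsOpen U) (hx₀ : x₀ ∈ U) (hfc : Continuous f)
    (hf : HasStrictFDerivAt f f' x₀) (hf' : f' ≠ 0) (hΩU : Ω ∩ U = {y ∈ U | f y < 0}) :
    ∃ e ρ R, IsInteriorCone Ω x₀ e ρ R := by
  obtain ⟨e, he, hneg⟩ := exists_unit_vector_neg hf'
  have : 0 < ‖f'‖ := norm_pos_iff.2 hf'
  set c := -f' e / 4
  have hc : 0 < c := by simp only [c]; linarith
  obtain ⟨R, hR, hball⟩ : ∃ R > 0, ∀ z, dist z x₀ < R → ∀ x, dist x x₀ < R →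
      z ∈ U ∧ ‖f z - f x - f' (z - x)‖ ≤ c * ‖z - x‖ := by
    obtain ⟨δ, hδ, h⟩ := Metric.eventually_nhds_iff.1
      ((((hU.eventually_mem hx₀).prod_inl_nhds x₀)).and (hf.isLittleO.bound hc))
    exact ⟨δ, hδ, fun z hz x hx => h (y := (z, x)) (max_lt hz hx)⟩
  set ρ := min 1 (c / ‖f'‖)
  have hρ : 0 < ρ := by positivity
  refine ⟨e, ρ, R / 3, he, hρ, min_le_left _ _, by positivity,
    fun x hx hxR y hy t ht htR => ?_⟩
  have hye : ‖y - e‖ < ρ := mem_ball_iff_norm.1 hy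
  have hy2 : ‖y‖ ≤ 2 := by
    linarith [norm_le_insert' y e, min_le_left 1 (c / ‖f'‖)]
  have hty : ‖t • y‖ ≤ t * 2 := by
    rw [norm_smul, Real.norm_of_nonneg ht.le]; gcongr
  have hz : dist (x + t • y) x₀ < R := by
    have : dist (x + t • y) x = ‖t • y‖ := by rw [dist_eq_norm, add_sub_cancel_left]
    linarith [dist_triangle (x + t • y) x x₀]
  have hxR' : dist x x₀ < R := by linarith
  obtain ⟨hzU, hbound⟩ := hball _ hz x hxR'
  have hfx : f x ≤ 0 := nonpos_of_mem_closure hfc hU hΩU hx.1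
    (hball x hxR' x hxR').1
  have hslope : f' y < -(2 * c) := by
    have h1 : f' (y - e) < c := calc
      f' (y - e) ≤ ‖f'‖ * ‖y - e‖ := (le_abs_self _).trans (f'.le_opNorm _)
      _ < ‖f'‖ * (c / ‖f'‖) := by gcongr; exact hye.trans_le (min_le_right _ _)
      _ = c := by field_simp
    have h2 : f' y = f' e + f' (y - e) := by rw [← map_add, add_sub_cancel]
    simp only [c] at h1 ⊢
    linarith
  have hfz : f (x + t • y) < 0 := by
    rw [add_sub_cancel_left, map_smul, smul_eq_mul] at hbound
    have h1 := (le_abs_self _).trans (hbound.trans (mul_le_mul_of_nonneg_left hty hc.le))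
    nlinarith
  exact (hΩU.symm.subset ⟨hzU, hfz⟩).1

lemma HasSmoothBoundary.hasInteriorCones {N : ℕ} {Ω : Set (Euc N)} (hΩ : HasSmoothBoundary Ω) :
    HasInteriorCones Ω := by
  intro x₀ hx₀
  obtain ⟨U, f, hU, hxU, hf, hgrad, hΩU⟩ := hΩ x₀ hx₀
  refine exists_isInteriorCone_of_hasStrictFDerivAt hU hxU hf.continuous
    (hf.contDiffAt.hasStrictFDerivAt (by simp)) (fun h => hgrad ?_) hΩU
  rw [gradient, h, map_zero]

end Cone

section Hausdorff

lemma hausdorffMeasure_inter_ball_le {X Y : Type*} [MetricSpace X] [MeasurableSpace X]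
    [BorelSpace X] [MetricSpace Y] [MeasurableSpace Y] [BorelSpace Y] {f : X → Y}
    (hf : LipschitzWith 1 f) {K : NNReal} {A : Set X}
    (hA : AntilipschitzWith K (A.domRestrict f)) {d : ℝ} (hd : 0 ≤ d) (z : X) (t : ℝ) :
    μH[d] (A ∩ ball z t) ≤ (K : ℝ≥0∞) ^ d * μH[d] (ball (f z) t) := by
  have hsub : A.domRestrict f '' (Subtype.val ⁻¹' ball z t) ⊆ ball (f z) t := by
    rintro _ ⟨x, hx, rfl⟩
    exact (hf.dist_le_mul x.1 z).trans_lt (by simpa using hx)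
  calc μH[d] (A ∩ ball z t) = μH[d] (Subtype.val '' (Subtype.val ⁻¹' ball z t : Set A)) := by
        rw [Subtype.image_preimage_coe]
    _ = μH[d] (Subtype.val ⁻¹' ball z t : Set A) :=
        isometry_subtype_coe.hausdorffMeasure_image (Or.inl hd) _
    _ ≤ (K : ℝ≥0∞) ^ d * μH[d] (A.domRestrict f '' (Subtype.val ⁻¹' ball z t)) :=
        hA.le_hausdorffMeasure_image hd _
    _ ≤ (K : ℝ≥0∞) ^ d * μH[d] (ball (f z) t) := by gcongr

variable {E : Type*} [NormedAddCommGroup E] [InnerProductSpace ℝ E] {Ω : Set E}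
  {x₀ e : E} {ρ R : ℝ}

lemma norm_orthogonalProjectionOnto_span_singleton_orthogonal (he : ‖e‖ = 1) (w : E) :
    ‖(ℝ ∙ e)ᗮ.orthogonalProjectionOnto w‖ = ‖w - ⟪e, w⟫ • e‖ := by
  rw [← Submodule.norm_coe, ← Submodule.starProjection_apply,
    Submodule.starProjection_orthogonal_val, Submodule.starProjection_unit_singleton ℝ he]

namespace IsInteriorCone

/-- Otherwise `x'` would lie in the cone at `x`, hence in `Ω`. -/
lemma aperture_mul_inner_sub_le (hc : IsInteriorCone Ω x₀ e ρ R) (hΩ : IsOpen Ω) {x x' : E}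
    (hx : x ∈ frontier Ω ∩ ball x₀ (R / 4)) (hx' : x' ∈ frontier Ω ∩ ball x₀ (R / 4)) :
    ρ * ⟪e, x' - x⟫ ≤ ‖(ℝ ∙ e)ᗮ.orthogonalProjectionOnto (x' - x)‖ := by
  rw [norm_orthogonalProjectionOnto_span_singleton_orthogonal hc.norm_axis]
  have hxR := mem_ball.1 hx.2
  have hxR' := mem_ball.1 hx'.2
  set s := ⟪e, x' - x⟫
  rcases le_or_gt s 0 with hs | hs
  · exact (mul_nonpos_of_nonneg_of_nonpos hc.aperture_pos.le hs).trans (norm_nonneg _)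
  by_contra! hlt
  have hsR : s < R := by
    have h1 : s ≤ ‖e‖ * ‖x' - x‖ := real_inner_le_norm _ _
    rw [hc.norm_axis, one_mul, ← dist_eq_norm] at h1
    linarith [dist_triangle_right x' x x₀, hc.radius_pos]
  have hmem : s⁻¹ • (x' - x) ∈ ball e ρ := by
    have : s⁻¹ • (x' - x) - e = s⁻¹ • ((x' - x) - s • e) := by
      rw [smul_sub s⁻¹ (x' - x), inv_smul_smul₀ hs.ne']
    rwa [mem_ball_iff_norm, this, norm_smul, norm_inv, Real.norm_of_nonneg hs.le,
      inv_mul_lt_iff₀ hs, mul_comm]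
  have hx'Ω := hc.add_smul_mem x hx.1 (by linarith [hc.radius_pos]) _ hmem s hs hsR
  rw [smul_inv_smul₀ hs.ne', add_sub_cancel] at hx'Ω
  exact disjoint_left.1 (disjoint_frontier_iff_isOpen.2 hΩ) hx'.1 hx'Ω

lemma norm_sub_le_mul_norm_orthogonalProjectionOnto (hc : IsInteriorCone Ω x₀ e ρ R)
    (hΩ : IsOpen Ω) {x x' : E} (hx : x ∈ frontier Ω ∩ ball x₀ (R / 4))
    (hx' : x' ∈ frontier Ω ∩ ball x₀ (R / 4)) :
    ‖x' - x‖ ≤ (1 + ρ⁻¹) * ‖(ℝ ∙ e)ᗮ.orthogonalProjectionOnto (x' - x)‖ := by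
  set s := ⟪e, x' - x⟫
  set n := ‖(ℝ ∙ e)ᗮ.orthogonalProjectionOnto (x' - x)‖ with hn
  have habs : ρ * |s| ≤ n := by
    rcases abs_choice s with h | h <;> rw [h]
    · exact hc.aperture_mul_inner_sub_le hΩ hx hx'
    · have h' := hc.aperture_mul_inner_sub_le hΩ hx' hx
      rwa [← neg_sub x' x, inner_neg_right, map_neg, norm_neg] at h'
  calc ‖x' - x‖ = ‖((x' - x) - s • e) + s • e‖ := by rw [sub_add_cancel]
    _ ≤ ‖(x' - x) - s • e‖ + ‖s • e‖ := norm_add_le _ _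
    _ = n + |s| := by
        rw [hn, norm_orthogonalProjectionOnto_span_singleton_orthogonal hc.norm_axis, norm_smul,
          hc.norm_axis, mul_one, Real.norm_eq_abs]
    _ ≤ n + ρ⁻¹ * n := by
        gcongr
        rwa [le_inv_mul_iff₀ hc.aperture_pos]
    _ = (1 + ρ⁻¹) * n := by ring

end IsInteriorCone

/-- Upper Ahlfors regularity of dimension `d`: `ν` has at most the growth of a `d`-dimensional
surface. -/
def UpperAhlforsRegular {X : Type*} [PseudoMetricSpace X] [MeasurableSpace X] (ν : Measure X)
    (d : ℝ) (C : ℝ≥0∞) : Prop :=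
  ∀ (z : X) (s : ℝ), 0 < s → ν (ball z s) ≤ C * ENNReal.ofReal (s ^ d)

lemma exists_add_smul_mem_frontier {Ω : Set E} (hb : Bornology.IsBounded Ω) {x : E} (hx : x ∈ Ω)
    (he : ‖e‖ = 1) : ∃ t : ℝ, x + t • e ∈ frontier Ω := by
  obtain ⟨C, hC⟩ := hb.exists_norm_le
  have hline : Continuous fun t : ℝ => x + t • e := by fun_prop
  suffices (frontier ((fun t : ℝ => x + t • e) ⁻¹' Ω)).Nonempty from
    this.mono (hline.frontier_preimage_subset Ω)
  rw [nonempty_frontier_iff]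
  refine ⟨⟨0, by simpa using hx⟩, fun huniv => ?_⟩
  have hmem : x + (C + ‖x‖ + 1) • e ∈ Ω := huniv.symm.subset (mem_univ (C + ‖x‖ + 1))
  have h1 : C + ‖x‖ + 1 ≤ ‖(C + ‖x‖ + 1) • e‖ := by
    rw [norm_smul, he, mul_one]; exact le_abs_self _
  have h2 := norm_le_add_norm_add ((C + ‖x‖ + 1) • e) x
  rw [add_comm _ x] at h2
  linarith [hC _ hmem]

variable [FiniteDimensional ℝ E]

lemma cast_finrank_span_singleton_orthogonal (he : ‖e‖ = 1) :
    (finrank ℝ (ℝ ∙ e)ᗮ : ℝ) = finrank ℝ E - 1 := by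
  have h := (ℝ ∙ e).finrank_add_finrank_orthogonal
  rw [finrank_span_singleton (by rintro rfl; simp at he)] at h
  rw [← h]
  push_cast
  ring

variable [MeasurableSpace E] [BorelSpace E]

lemma isAddHaarMeasure_hausdorffMeasure_orthogonal (he : ‖e‖ = 1) :
    (μH[(finrank ℝ E : ℝ) - 1] : Measure (ℝ ∙ e)ᗮ).IsAddHaarMeasure := by
  rw [← cast_finrank_span_singleton_orthogonal he]
  infer_instance

/-- The projection onto `e^⊥` is bi-Lipschitz on the boundary near `x₀`. -/
lemma IsInteriorCone.exists_upperAhlforsRegular (hc : IsInteriorCone Ω x₀ e ρ R)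
    (hΩ : IsOpen Ω) :
    ∃ C ≠ ⊤, UpperAhlforsRegular
      (μH[(finrank ℝ E : ℝ) - 1].restrict (frontier Ω ∩ ball x₀ (R / 4)))
      ((finrank ℝ E : ℝ) - 1) C := by
  have := isAddHaarMeasure_hausdorffMeasure_orthogonal hc.norm_axis
  have hd := cast_finrank_span_singleton_orthogonal hc.norm_axis
  have hd0 : (0 : ℝ) ≤ finrank ℝ E - 1 := hd ▸ Nat.cast_nonneg _
  set K : NNReal := ⟨1 + ρ⁻¹, by have := hc.aperture_pos; positivity⟩
  have hanti : AntilipschitzWith K ((frontier Ω ∩ ball x₀ (R / 4)).domRestrict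
      (ℝ ∙ e)ᗮ.orthogonalProjectionOnto) := by
    refine AntilipschitzWith.of_le_mul_dist fun x x' => ?_
    rw [Subtype.dist_eq, dist_eq_norm, dist_eq_norm, domRestrict_apply, domRestrict_apply,
      ← map_sub]
    exact hc.norm_sub_le_mul_norm_orthogonalProjectionOnto hΩ x'.2 x.2
  refine ⟨(K : ℝ≥0∞) ^ ((finrank ℝ E : ℝ) - 1) *
    μH[(finrank ℝ E : ℝ) - 1] (ball (0 : (ℝ ∙ e)ᗮ) 1), ENNReal.mul_ne_top
      (ENNReal.rpow_ne_top_of_nonneg hd0 ENNReal.coe_ne_top) measure_ball_lt_top.ne,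
    fun z t ht => ?_⟩
  rw [Measure.restrict_apply measurableSet_ball, inter_comm]
  refine (hausdorffMeasure_inter_ball_le (ℝ ∙ e)ᗮ.lipschitzWith_orthogonalProjectionOnto hanti hd0
    z t).trans_eq ?_
  rw [Measure.addHaar_ball_of_pos _ _ ht, ← hd, Real.rpow_natCast]
  ring

/-- The projection of `∂Ω` onto a hyperplane contains that of `Ω`, which is open. -/
lemma hausdorffMeasure_frontier_pos [Nontrivial E] {Ω : Set E} (hΩ : IsOpen Ω)
    (hb : Bornology.IsBounded Ω) (hne : Ω.Nonempty) :
    0 < μH[(finrank ℝ E : ℝ) - 1] (frontier Ω) := by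
  obtain ⟨e, he⟩ := exists_norm_eq E zero_le_one
  have := isAddHaarMeasure_hausdorffMeasure_orthogonal he
  set P := (ℝ ∙ e)ᗮ.orthogonalProjectionOnto
  have hPe : P e = 0 := Submodule.orthogonalProjectionOnto_orthogonalComplement_singleton_eq_zero e
  have hsub : P '' Ω ⊆ P '' frontier Ω := by
    rintro _ ⟨x, hx, rfl⟩
    obtain ⟨t, ht⟩ := exists_add_smul_mem_frontier hb hx he
    exact ⟨_, ht, by rw [map_add, map_smul, hPe, smul_zero, add_zero]⟩
  have hopen : IsOpen (P '' Ω) :=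
    P.isOpenMap (fun v => ⟨v, Submodule.orthogonalProjectionOnto_mem_subspace_eq_self v⟩) _ hΩ
  have hd0 : (0 : ℝ) ≤ finrank ℝ E - 1 :=
    cast_finrank_span_singleton_orthogonal he ▸ Nat.cast_nonneg _
  calc 0 < μH[(finrank ℝ E : ℝ) - 1] (P '' Ω) := hopen.measure_pos _ (hne.image P)
    _ ≤ μH[(finrank ℝ E : ℝ) - 1] (P '' frontier Ω) := measure_mono hsub
    _ ≤ μH[(finrank ℝ E : ℝ) - 1] (frontier Ω) :=
        hausdorffMeasure_orthogonalProjectionOnto_le _ _ _ hd0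

end Hausdorff

/-! ### Measures without atoms -/

lemma continuous_measure_Iic (ν : Measure ℝ) [IsFiniteMeasure ν] [NullSingletonClass ν] :
    Continuous fun t => ν (Iic t) := by
  refine continuous_iff_continuousAt.2 fun t => ?_
  refine tendsto_measure_of_ae_tendsto_indicator_of_isFiniteMeasure _ measurableSet_Iic
    (fun _ => measurableSet_Iic) ?_
  filter_upwards [ν.ae_ne t] with x hx
  rcases lt_or_gt_of_ne hx with h | h
  · filter_upwards [lt_mem_nhds h] with s hs using by simp [h.le, hs.le]
  · filter_upwards [gt_mem_nhds h] with s hs using by simp [h.not_ge, hs.not_ge]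

lemma tendsto_measure_Iic_atBot_zero (ν : Measure ℝ) [IsFiniteMeasure ν] :
    Tendsto (fun t => ν (Iic t)) atBot (𝓝 0) := by
  rw [← measure_empty (μ := ν)]
  refine tendsto_measure_of_ae_tendsto_indicator_of_isFiniteMeasure _ MeasurableSet.empty
    (fun _ => measurableSet_Iic) (ae_of_all _ fun x => ?_)
  filter_upwards [eventually_lt_atBot x] with s hs using by simp [hs]

lemma exists_measurableSet_subset_measure_eq {X : Type*} [MeasurableSpace X] [StandardBorelSpace X]
    (μ : Measure X) [IsFiniteMeasure μ] [NullSingletonClass μ] {A : Set X} (hA : MeasurableSet A)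
    {c : ℝ≥0∞} (hc : c ≤ μ A) : ∃ B ⊆ A, MeasurableSet B ∧ μ B = c := by
  rcases eq_or_ne c 0 with rfl | hc0
  · exact ⟨∅, empty_subset _, MeasurableSet.empty, measure_empty⟩
  rcases hc.eq_or_lt with rfl | hclt
  · exact ⟨A, Subset.rfl, hA, rfl⟩
  obtain ⟨f, hf⟩ := exists_measurableEmbedding_real X
  set ν := (μ.restrict A).map f with hν
  have : NullSingletonClass ν := ⟨fun x => by
    rw [hν, hf.map_apply]
    exact (subsingleton_singleton.preimage hf.injective).measure_zero _⟩
  have hνA : ν univ = μ A := by rw [hν, hf.map_apply, preimage_univ, Measure.restrict_apply_univ]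
  obtain ⟨a, ha⟩ := ((tendsto_measure_Iic_atBot_zero ν).eventually_lt_const
    (pos_iff_ne_zero.2 hc0)).exists
  obtain ⟨b, hb⟩ := ((tendsto_measure_Iic_atTop ν).eventually_const_lt
    (hclt.trans_eq hνA.symm)).exists
  obtain ⟨t, ht⟩ := mem_range_of_exists_le_of_exists_ge (continuous_measure_Iic ν)
    ⟨a, ha.le⟩ ⟨b, hb.le⟩
  have hmeas : MeasurableSet (f ⁻¹' Iic t) := hf.measurable measurableSet_Iic
  refine ⟨A ∩ f ⁻¹' Iic t, inter_subset_left, hA.inter hmeas, Eq.trans ?_ ht⟩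
  simp only [hν, hf.map_apply, Measure.restrict_apply hmeas, inter_comm]

/-! ### Integration over cones -/

section Lebesgue

variable {X : Type*} [MeasurableSpace X] {μ : Measure X} {f : X → ℝ≥0∞}

lemma rpow_lintegral_le_measure_univ_mul {p : ℝ} (hp : 1 ≤ p) (hf : AEMeasurable f μ) :
    (∫⁻ x, f x ∂μ) ^ p ≤ μ univ ^ (p - 1) * ∫⁻ x, f x ^ p ∂μ := by
  have hp0 : 0 < p := by positivity
  have h := eLpNorm'_le_eLpNorm'_mul_rpow_measure_univ one_pos hp hf.aestronglyMeasurable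
  simp only [eLpNorm', enorm_eq_self, ENNReal.rpow_one, div_one] at h
  calc (∫⁻ x, f x ∂μ) ^ p ≤ ((∫⁻ x, f x ^ p ∂μ) ^ (1 / p) * μ univ ^ (1 - 1 / p)) ^ p := by gcongr
    _ = μ univ ^ (p - 1) * ∫⁻ x, f x ^ p ∂μ := by
        rw [ENNReal.mul_rpow_of_nonneg _ _ hp0.le, ← ENNReal.rpow_mul, ← ENNReal.rpow_mul,
          one_div_mul_cancel hp0.ne', ENNReal.rpow_one, sub_mul, one_div_mul_cancel hp0.ne',
          one_mul, mul_comm]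

lemma rpow_lintegral_le_measure_univ_mul_rpow {p r : ℝ} (hp : 1 ≤ p) (hr : 0 ≤ r)
    (hf : AEMeasurable f μ) :
    (∫⁻ x, f x ∂μ) ^ r ≤ μ univ ^ ((p - 1) * (r / p)) * (∫⁻ x, f x ^ p ∂μ) ^ (r / p) := by
  have hp0 : 0 < p := by positivity
  calc (∫⁻ x, f x ∂μ) ^ r = ((∫⁻ x, f x ∂μ) ^ p) ^ (r / p) := by
        rw [← ENNReal.rpow_mul, mul_div_cancel₀ _ hp0.ne']
    _ ≤ (μ univ ^ (p - 1) * ∫⁻ x, f x ^ p ∂μ) ^ (r / p) := by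
        gcongr
        exact rpow_lintegral_le_measure_univ_mul hp hf
    _ = μ univ ^ ((p - 1) * (r / p)) * (∫⁻ x, f x ^ p ∂μ) ^ (r / p) := by
        rw [ENNReal.mul_rpow_of_nonneg _ _ (by positivity), ← ENNReal.rpow_mul]

lemma lintegral_rpow_le_rpow_sub_one_mul {s : ℝ} (hs : 1 ≤ s) (hf : Measurable f) {B : ℝ≥0∞}
    (hfB : ∀ x, f x ≤ B) : ∫⁻ x, f x ^ s ∂μ ≤ B ^ (s - 1) * ∫⁻ x, f x ∂μ := by
  rw [← lintegral_const_mul _ hf]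
  refine lintegral_mono fun x => ?_
  calc f x ^ s = f x ^ (s - 1) * f x := by
        nth_rw 3 [← ENNReal.rpow_one (f x)]
        rw [← ENNReal.rpow_add_of_nonneg _ _ (sub_nonneg.2 hs) zero_le_one, sub_add_cancel]
    _ ≤ B ^ (s - 1) * f x := by
        gcongr
        exact hfB x

lemma lintegral_Ioc_ofReal_rpow {s ε : ℝ} (hs : -1 < s) (hε : 0 < ε) :
    ∫⁻ t in Ioc 0 ε, ENNReal.ofReal (t ^ s) = ENNReal.ofReal (ε ^ (s + 1) / (s + 1)) := by
  have hint : IntegrableOn (fun t : ℝ => t ^ s) (Ioc 0 ε) := by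
    rw [← intervalIntegrable_iff_integrableOn_Ioc_of_le hε.le]
    exact intervalIntegral.intervalIntegrable_rpow' hs
  rw [← ofReal_integral_eq_lintegral_ofReal hint, ← intervalIntegral.integral_of_le hε.le,
    integral_rpow (Or.inl hs), Real.zero_rpow (by linarith), sub_zero]
  exact (ae_restrict_mem measurableSet_Ioc).mono fun t ht => Real.rpow_nonneg ht.1.le s

/-- Hölder's inequality with the weights `t ^ (-β)` and `t ^ β`. -/
lemma exists_rpow_lintegral_Ioc_le {r β : ℝ} (hr : 1 < r) (hβ : β < 1 - r⁻¹) :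
    ∃ K ≠ ⊤, ∀ ε ≤ 1, ∀ f : ℝ → ℝ≥0∞, Measurable f →
      (∫⁻ t in Ioc 0 ε, f t) ^ r ≤
        K * ∫⁻ t in Ioc 0 ε, ENNReal.ofReal (t ^ (β * r)) * f t ^ r := by
  have hr0 : 0 < r := by linarith
  have hconj : r.conjExponent.HolderConjugate r := (Real.HolderConjugate.conjExponent hr).symm
  set r' := r.conjExponent
  have hr' : 0 < r' := hconj.pos
  have hweight : -1 < -β * r' := by
    have := mul_lt_mul_of_pos_right hβ hr'
    rw [hconj.symm.one_sub_inv, inv_mul_cancel₀ hr'.ne'] at this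
    linarith
  have hpow : ∀ t : ℝ, 0 < t → ∀ a s : ℝ, 0 ≤ s →
      ENNReal.ofReal (t ^ a) ^ s = ENNReal.ofReal (t ^ (a * s)) := fun t ht a s hs => by
    rw [ENNReal.ofReal_rpow_of_nonneg (Real.rpow_nonneg ht.le _) hs, ← Real.rpow_mul ht.le]
  refine ⟨(∫⁻ t in Ioc 0 1, ENNReal.ofReal (t ^ (-β * r'))) ^ (1 / r' * r), ?_,
    fun ε hε f hf => ?_⟩
  · rw [lintegral_Ioc_ofReal_rpow hweight one_pos]
    exact ENNReal.rpow_ne_top_of_nonneg (by positivity) ENNReal.ofReal_ne_top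
  calc (∫⁻ t in Ioc 0 ε, f t) ^ r
      = (∫⁻ t in Ioc 0 ε, ENNReal.ofReal (t ^ (-β)) * (ENNReal.ofReal (t ^ β) * f t)) ^ r := by
        congr 1
        refine setLIntegral_congr_fun measurableSet_Ioc fun t ht => ?_
        simp only [← mul_assoc]
        rw [← ENNReal.ofReal_mul (Real.rpow_nonneg ht.1.le _), ← Real.rpow_add ht.1,
          neg_add_cancel, Real.rpow_zero, ENNReal.ofReal_one, one_mul]
    _ ≤ ((∫⁻ t in Ioc 0 ε, ENNReal.ofReal (t ^ (-β)) ^ r') ^ (1 / r') *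
          (∫⁻ t in Ioc 0 ε, (ENNReal.ofReal (t ^ β) * f t) ^ r) ^ (1 / r)) ^ r := by
        gcongr
        exact ENNReal.lintegral_mul_le_Lp_mul_Lq _ hconj (by fun_prop) (by fun_prop)
    _ = (∫⁻ t in Ioc 0 ε, ENNReal.ofReal (t ^ (-β * r'))) ^ (1 / r' * r) *
          ∫⁻ t in Ioc 0 ε, ENNReal.ofReal (t ^ (β * r)) * f t ^ r := by
        rw [ENNReal.mul_rpow_of_nonneg _ _ hr0.le, ← ENNReal.rpow_mul, ← ENNReal.rpow_mul,
          one_div_mul_cancel hr0.ne', ENNReal.rpow_one]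
        congr 1
        · congr 1
          refine setLIntegral_congr_fun measurableSet_Ioc fun t ht => ?_
          exact hpow t ht.1 _ _ hr'.le
        · refine setLIntegral_congr_fun measurableSet_Ioc fun t ht => ?_
          simp only [ENNReal.mul_rpow_of_nonneg _ _ hr0.le, hpow t ht.1 _ _ hr0.le]
    _ ≤ _ := by gcongr

end Lebesgue

lemma preimage_add_smul_ball {E : Type*} [SeminormedAddCommGroup E] [NormedSpace ℝ E]
    (x e : E) (ρ : ℝ) {t : ℝ} (ht : 0 < t) :
    (fun y => x + t • y) ⁻¹' ball (x + t • e) (t * ρ) = ball e ρ := by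
  ext y
  rw [mem_preimage, mem_ball, mem_ball, dist_add_left, dist_smul₀, Real.norm_of_nonneg ht.le,
    mul_lt_mul_iff_right₀ ht]

section AddHaar

variable {E : Type*} [NormedAddCommGroup E] [NormedSpace ℝ E] [FiniteDimensional ℝ E]
  [MeasurableSpace E] [BorelSpace E] (μ : Measure E) [μ.IsAddHaarMeasure] {F : E → ℝ≥0∞}

lemma lintegral_comp_add_smul (hF : Measurable F) (x : E) {t : ℝ} (ht : 0 < t) :
    ∫⁻ y, F (x + t • y) ∂μ = ENNReal.ofReal (t ^ finrank ℝ E)⁻¹ * ∫⁻ z, F z ∂μ := by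
  rw [← lintegral_map (f := fun w => F (x + w)) (hF.comp (measurable_const_add x))
    (measurable_const_smul t), Measure.map_addHaar_smul _ ht.ne', lintegral_smul_measure,
    lintegral_add_left_eq_self F x, abs_of_pos (by positivity), smul_eq_mul]

lemma setLIntegral_ball_comp_add_smul (hF : Measurable F) (x e : E) (ρ : ℝ) {t : ℝ}
    (ht : 0 < t) :
    ∫⁻ y in ball e ρ, F (x + t • y) ∂μ =
      ENNReal.ofReal (t ^ finrank ℝ E)⁻¹ * ∫⁻ z in ball (x + t • e) (t * ρ), F z ∂μ := by
  rw [← lintegral_indicator measurableSet_ball, ← lintegral_indicator measurableSet_ball,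
    ← lintegral_comp_add_smul μ (hF.indicator measurableSet_ball) x ht,
    ← preimage_add_smul_ball x e ρ ht]
  rfl

lemma measurable_setLIntegral_ball_comp_add_smul (hF : Measurable F) (e : E) (ρ : ℝ) :
    Measurable fun w : E × ℝ => ∫⁻ y in ball e ρ, F (w.1 + w.2 • y) ∂μ :=
  Measurable.lintegral_prod_right' (f := fun w : (E × ℝ) × E => F (w.1.1 + w.1.2 • w.2))
    (hF.comp (by fun_prop))

variable {ν : Measure E} [SFinite ν] {C : ℝ≥0∞} {d : ℝ}

lemma UpperAhlforsRegular.lintegral_setLIntegral_ball_le (hν : UpperAhlforsRegular ν d C)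
    (hF : Measurable F) (v : E) {s : ℝ} (hs : 0 < s) :
    ∫⁻ x, ∫⁻ z in ball (x + v) s, F z ∂μ ∂ν ≤
      C * ENNReal.ofReal (s ^ d) * ∫⁻ z, F z ∂μ := by
  have hmeas : Measurable fun w : E × E => (ball (w.1 + v) s).indicator F w.2 :=
    (hF.comp measurable_snd).indicator
      (isOpen_lt (f := fun w : E × E => dist w.2 (w.1 + v)) (by fun_prop)
        continuous_const).measurableSet
  have hmem : ∀ x z, z ∈ ball (x + v) s ↔ x ∈ ball (z - v) s := fun x z => by
    rw [mem_ball', mem_ball, dist_eq_norm, dist_eq_norm, sub_sub_eq_add_sub]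
  have hswap : ∀ x z, (ball (x + v) s).indicator F z =
      (ball (z - v) s).indicator (fun _ => F z) x := fun x z => by
    classical rw [indicator_apply, indicator_apply, hmem]
  calc ∫⁻ x, ∫⁻ z in ball (x + v) s, F z ∂μ ∂ν
      = ∫⁻ x, ∫⁻ z, (ball (x + v) s).indicator F z ∂μ ∂ν := by
        simp_rw [lintegral_indicator measurableSet_ball]
    _ = ∫⁻ z, ∫⁻ x, (ball (x + v) s).indicator F z ∂ν ∂μ :=
        lintegral_lintegral_swap hmeas.aemeasurable
    _ = ∫⁻ z, F z * ν (ball (z - v) s) ∂μ := by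
        simp_rw [hswap, lintegral_indicator measurableSet_ball, setLIntegral_const]
    _ ≤ ∫⁻ z, F z * (C * ENNReal.ofReal (s ^ d)) ∂μ := by
        gcongr with z
        exact hν _ _ hs
    _ = C * ENNReal.ofReal (s ^ d) * ∫⁻ z, F z ∂μ := by
        rw [lintegral_mul_const _ hF, mul_comm]

lemma UpperAhlforsRegular.lintegral_setLIntegral_ball_comp_le (hν : UpperAhlforsRegular ν d C)
    {e : E} {ρ : ℝ} (hρ : 0 < ρ) (hρ1 : ρ ≤ 1) (hd : 0 ≤ d) (hF : Measurable F) {t : ℝ}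
    (ht : 0 < t) :
    ∫⁻ x, ∫⁻ y in ball e ρ, F (x + t • y) ∂μ ∂ν ≤
      C * ENNReal.ofReal (t ^ (d - finrank ℝ E)) * ∫⁻ z, F z ∂μ := by
  simp_rw [setLIntegral_ball_comp_add_smul μ hF _ _ _ ht]
  rw [lintegral_const_mul' _ _ ENNReal.ofReal_ne_top]
  calc _ ≤ ENNReal.ofReal (t ^ finrank ℝ E)⁻¹ *
        (C * ENNReal.ofReal ((t * ρ) ^ d) * ∫⁻ z, F z ∂μ) := by
        gcongr
        exact hν.lintegral_setLIntegral_ball_le μ hF (t • e) (mul_pos ht hρ)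
    _ ≤ ENNReal.ofReal (t ^ finrank ℝ E)⁻¹ * (C * ENNReal.ofReal (t ^ d) * ∫⁻ z, F z ∂μ) := by
        gcongr; exact mul_le_of_le_one_right ht.le hρ1
    _ = C * ENNReal.ofReal (t ^ (d - finrank ℝ E)) * ∫⁻ z, F z ∂μ := by
        rw [Real.rpow_sub_natCast ht.ne', div_eq_mul_inv, ENNReal.ofReal_mul (by positivity)]; ring

/-- Averages over the balls `x + t • ball e ρ` map `L^p(μ)` to `L^r(ν)`: the `L^p(ν)` bound and
the trivial `L^∞` bound are interpolated. -/
lemma UpperAhlforsRegular.lintegral_ballAverage_rpow_le (hν : UpperAhlforsRegular ν d C)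
    (hd : 0 ≤ d) {p r : ℝ} (hp : 1 ≤ p) (hpr : p ≤ r) {e : E} {ρ : ℝ} (hρ : 0 < ρ) (hρ1 : ρ ≤ 1)
    {G : E → ℝ≥0∞} (hG : Measurable G) {t : ℝ} (ht : 0 < t) :
    ∫⁻ x, (∫⁻ y in ball e ρ, G (x + t • y) ∂μ) ^ r ∂ν ≤
      μ (ball e ρ) ^ ((p - 1) * (r / p)) * C *
        ENNReal.ofReal (t ^ (-(finrank ℝ E * (r / p - 1) + finrank ℝ E - d))) *
          (∫⁻ z, G z ^ p ∂μ) ^ (r / p) := by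
  have hp0 : 0 < p := by positivity
  have hs : 1 ≤ r / p := (one_le_div hp0).2 hpr
  set n := finrank ℝ E
  set J := ∫⁻ z, G z ^ p ∂μ
  set V := μ (ball e ρ)
  set I : E → ℝ≥0∞ := fun x => ∫⁻ y in ball e ρ, G (x + t • y) ^ p ∂μ
  have hGp : Measurable fun z => G z ^ p := hG.pow_const p
  have hI : Measurable I :=
    (measurable_setLIntegral_ball_comp_add_smul μ hGp e ρ).comp measurable_prodMk_right
  have hI_le : ∀ x, I x ≤ ENNReal.ofReal (t ^ n)⁻¹ * J := fun x => by
    rw [← lintegral_comp_add_smul μ hGp x ht]; exact setLIntegral_le_lintegral _ _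
  have hGI : ∀ x, (∫⁻ y in ball e ρ, G (x + t • y) ∂μ) ^ r ≤
      V ^ ((p - 1) * (r / p)) * I x ^ (r / p) := fun x => by
    simpa only [Measure.restrict_apply_univ] using rpow_lintegral_le_measure_univ_mul_rpow
      (μ := μ.restrict (ball e ρ)) (f := fun y => G (x + t • y)) hp (hp0.le.trans hpr)
      (hG.comp (by fun_prop)).aemeasurable
  calc ∫⁻ x, (∫⁻ y in ball e ρ, G (x + t • y) ∂μ) ^ r ∂ν
      ≤ ∫⁻ x, V ^ ((p - 1) * (r / p)) * I x ^ (r / p) ∂ν := lintegral_mono hGI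
    _ = V ^ ((p - 1) * (r / p)) * ∫⁻ x, I x ^ (r / p) ∂ν := lintegral_const_mul _ (by fun_prop)
    _ ≤ V ^ ((p - 1) * (r / p)) * ((ENNReal.ofReal (t ^ n)⁻¹ * J) ^ (r / p - 1) *
          (C * ENNReal.ofReal (t ^ (d - n)) * J)) := by
        gcongr
        refine (lintegral_rpow_le_rpow_sub_one_mul hs hI hI_le).trans ?_
        gcongr
        exact hν.lintegral_setLIntegral_ball_comp_le μ hρ hρ1 hd hGp ht
    _ = V ^ ((p - 1) * (r / p)) * C *
          (ENNReal.ofReal (t ^ n)⁻¹ ^ (r / p - 1) * ENNReal.ofReal (t ^ (d - n))) *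
            (J ^ (r / p - 1) * J) := by
        rw [ENNReal.mul_rpow_of_nonneg _ _ (sub_nonneg.2 hs)]; ring
    _ = _ := by
        congr 2
        · rw [ENNReal.ofReal_rpow_of_nonneg (by positivity) (sub_nonneg.2 hs),
            ← ENNReal.ofReal_mul (by positivity), ← Real.rpow_natCast, ← Real.rpow_neg ht.le,
            ← Real.rpow_mul ht.le, ← Real.rpow_add ht]
          congr 2; ring
        · nth_rw 2 [← ENNReal.rpow_one J]
          rw [← ENNReal.rpow_add_of_nonneg _ _ (sub_nonneg.2 hs) zero_le_one, sub_add_cancel]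

lemma exists_lt_one_sub_inv_of_subcritical {n d p r : ℝ} (hr : 0 < r) (hsub : n / p - d / r < 1) :
    ∃ β < 1 - r⁻¹, -1 < β * r - (n * (r / p - 1) + n - d) := by
  obtain ⟨β, hβ, hβr⟩ : ∃ β, n / p - d / r - r⁻¹ < β ∧ β < 1 - r⁻¹ :=
    exists_between (by linarith)
  refine ⟨β, hβr, ?_⟩
  calc -1 = (n / p - d / r - r⁻¹) * r - (n * (r / p - 1) + n - d) := by field_simp; ring
    _ < β * r - (n * (r / p - 1) + n - d) := by gcongr

/-- A fractional integral estimate; the subcriticality of `r` produces the small factor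
`ε ^ κ`. -/
lemma UpperAhlforsRegular.exists_lintegral_coneIntegral_rpow_le (hν : UpperAhlforsRegular ν d C)
    (hC : C ≠ ⊤) (hd : 0 ≤ d) {p r : ℝ} (hp : 1 < p) (hpr : p ≤ r)
    (hsub : (finrank ℝ E : ℝ) / p - d / r < 1) {e : E} {ρ : ℝ} (hρ : 0 < ρ) (hρ1 : ρ ≤ 1) :
    ∃ K ≠ ⊤, ∃ κ > (0 : ℝ), ∀ ε ∈ Ioc (0 : ℝ) 1, ∀ G : E → ℝ≥0∞, Measurable G →
      ∫⁻ x, (∫⁻ t in Ioc 0 ε, ∫⁻ y in ball e ρ, G (x + t • y) ∂μ) ^ r ∂ν ≤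
        K * ENNReal.ofReal (ε ^ κ) * (∫⁻ z, G z ^ p ∂μ) ^ (r / p) := by
  have hr0 : 0 < r := by linarith
  set n : ℝ := (finrank ℝ E : ℝ)
  obtain ⟨β, hβ, hs⟩ := exists_lt_one_sub_inv_of_subcritical hr0 hsub
  obtain ⟨Q, hQ, hholder⟩ := exists_rpow_lintegral_Ioc_le (hp.trans_le hpr) hβ
  set s := β * r - (n * (r / p - 1) + n - d)
  set W := μ (ball e ρ) ^ ((p - 1) * (r / p)) * C
  have hW : W ≠ ⊤ := ENNReal.mul_ne_top (ENNReal.rpow_ne_top_of_nonneg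
    (mul_nonneg (by linarith) (by positivity)) measure_ball_lt_top.ne) hC
  refine ⟨Q * W * ENNReal.ofReal (s + 1)⁻¹,
    ENNReal.mul_ne_top (ENNReal.mul_ne_top hQ hW) ENNReal.ofReal_ne_top, s + 1, by linarith,
    fun ε hε G hG => ?_⟩
  set M : E → ℝ → ℝ≥0∞ := fun x t => ∫⁻ y in ball e ρ, G (x + t • y) ∂μ
  set J := ∫⁻ z, G z ^ p ∂μ
  have hM : Measurable fun w : E × ℝ => M w.1 w.2 :=
    measurable_setLIntegral_ball_comp_add_smul μ hG e ρ
  have hM' : Measurable fun w : E × ℝ => ENNReal.ofReal (w.2 ^ (β * r)) * M w.1 w.2 ^ r :=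
    (measurable_snd.pow_const (β * r)).ennreal_ofReal.mul (hM.pow_const r)
  calc ∫⁻ x, (∫⁻ t in Ioc 0 ε, M x t) ^ r ∂ν
      ≤ ∫⁻ x, Q * (∫⁻ t in Ioc 0 ε, ENNReal.ofReal (t ^ (β * r)) * M x t ^ r) ∂ν :=
        lintegral_mono fun x => hholder ε hε.2 (M x) (hM.comp measurable_prodMk_left)
    _ = Q * ∫⁻ t in Ioc 0 ε, ENNReal.ofReal (t ^ (β * r)) * ∫⁻ x, M x t ^ r ∂ν := by
        rw [lintegral_const_mul _ hM'.lintegral_prod_right',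
          lintegral_lintegral_swap hM'.aemeasurable]
        simp_rw [lintegral_const_mul' _ _ ENNReal.ofReal_ne_top]
    _ ≤ Q * ∫⁻ t in Ioc 0 ε, ENNReal.ofReal (t ^ s) * (W * J ^ (r / p)) := by
        gcongr 1
        refine setLIntegral_mono' measurableSet_Ioc fun t ht => ?_
        calc _ ≤ ENNReal.ofReal (t ^ (β * r)) *
              (W * ENNReal.ofReal (t ^ (-(n * (r / p - 1) + n - d))) * J ^ (r / p)) := by
              gcongr
              exact hν.lintegral_ballAverage_rpow_le μ hd hp.le hpr hρ hρ1 hG ht.1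
          _ = ENNReal.ofReal (t ^ s) * (W * J ^ (r / p)) := by
              simp only [s, sub_eq_add_neg (β * r), Real.rpow_add ht.1]
              rw [ENNReal.ofReal_mul (Real.rpow_nonneg ht.1.le _)]
              ring
    _ = Q * (ENNReal.ofReal (ε ^ (s + 1) / (s + 1)) * (W * J ^ (r / p))) := by
        rw [lintegral_mul_const _ (by fun_prop), lintegral_Ioc_ofReal_rpow hs hε.1]
    _ = _ := by
        rw [div_eq_mul_inv, ENNReal.ofReal_mul (Real.rpow_nonneg hε.1.le _)]; ring

end AddHaar

/-! ### Sequences in `L^p` -/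

section Lp

variable {X F : Type*} [MeasurableSpace X] {μ ν : Measure X} [NormedAddCommGroup F] {p : ℝ≥0∞}
  {f : ℕ → X → F} {g h : X → F}

lemma eLpNorm_add_measure_le (hp : 1 ≤ p) (hp' : p ≠ ⊤) (f : X → F) :
    eLpNorm f p (μ + ν) ≤ eLpNorm f p μ + eLpNorm f p ν := by
  have hp0 : p ≠ 0 := (zero_lt_one.trans_le hp).ne'
  have hp1 : 1 ≤ p.toReal := by simpa using ENNReal.toReal_mono hp' hp
  simp only [eLpNorm_eq_lintegral_rpow_enorm_toReal hp0 hp', lintegral_add_measure]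
  exact ENNReal.rpow_add_le_add_rpow _ _ (by positivity) ((div_le_one (by positivity)).2 hp1)

/-- `f` is a Cauchy sequence in `L^p(μ)`, for functions rather than classes of functions. -/
def CauchySeqLp (p : ℝ≥0∞) (μ : Measure X) (f : ℕ → X → F) : Prop :=
  Tendsto (fun k : ℕ × ℕ => eLpNorm (f k.1 - f k.2) p μ) atTop (𝓝 0)

lemma CauchySeqLp.comp (hf : CauchySeqLp p μ f) {ns : ℕ → ℕ} (hns : StrictMono ns) :
    CauchySeqLp p μ (f ∘ ns) := by
  have hmap : Tendsto (Prod.map ns ns) atTop atTop := by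
    rw [← prod_atTop_atTop_eq]
    exact hns.tendsto_atTop.prodMap hns.tendsto_atTop
  exact Tendsto.comp (f := Prod.map ns ns)
    (g := fun k : ℕ × ℕ => eLpNorm (f k.1 - f k.2) p μ) hf hmap

lemma CauchySeqLp.mono_measure (hf : CauchySeqLp p μ f) (hle : ν ≤ μ) : CauchySeqLp p ν f :=
  tendsto_of_tendsto_of_tendsto_of_le_of_le tendsto_const_nhds hf (fun _ => zero_le)
    fun _ => eLpNorm_mono_measure _ hle

lemma CauchySeqLp.add_measure (hp : 1 ≤ p) (hp' : p ≠ ⊤) (hμ : CauchySeqLp p μ f)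
    (hν : CauchySeqLp p ν f) : CauchySeqLp p (μ + ν) f :=
  tendsto_of_tendsto_of_tendsto_of_le_of_le tendsto_const_nhds
    (by simpa using Tendsto.add hμ hν) (fun _ => zero_le)
    fun _ => eLpNorm_add_measure_le hp hp' _

lemma CauchySeqLp.of_forall_approx (hp : 1 ≤ p) (hf : ∀ n, AEStronglyMeasurable (f n) μ)
    (happ : ∀ δ > 0, ∃ ψ : ℕ → X → F, (∀ n, AEStronglyMeasurable (ψ n) μ) ∧
      CauchySeqLp p μ ψ ∧ ∀ n, eLpNorm (f n - ψ n) p μ ≤ δ) : CauchySeqLp p μ f := by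
  refine ENNReal.tendsto_nhds_zero.2 fun δ hδ => ?_
  have hδ3 : 0 < δ / 3 := ENNReal.div_pos hδ.ne' (by simp)
  obtain ⟨ψ, hψm, hψ, hfψ⟩ := happ (δ / 3) hδ3
  filter_upwards [ENNReal.tendsto_nhds_zero.1 hψ _ hδ3] with k hk
  calc eLpNorm (f k.1 - f k.2) p μ
      = eLpNorm ((f k.1 - ψ k.1) + (ψ k.1 - ψ k.2) - (f k.2 - ψ k.2)) p μ := by
        congr 1; abel
    _ ≤ eLpNorm (f k.1 - ψ k.1) p μ + eLpNorm (ψ k.1 - ψ k.2) p μ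
          + eLpNorm (f k.2 - ψ k.2) p μ := by
        have hm := fun n => (hf n).sub (hψm n)
        have hmψ := (hψm k.1).sub (hψm k.2)
        refine (eLpNorm_sub_le ((hm _).add hmψ) (hm _) hp).trans ?_
        gcongr
        exact eLpNorm_add_le (hm _) hmψ hp
    _ ≤ δ / 3 + δ / 3 + δ / 3 := by gcongr <;> apply hfψ
    _ = δ := ENNReal.add_thirds δ

lemma CauchySeqLp.of_tendsto (hp : 1 ≤ p) (hf : ∀ n, AEStronglyMeasurable (f n) μ)
    (hg : AEStronglyMeasurable g μ) (hlim : Tendsto (fun n => eLpNorm (f n - g) p μ) atTop (𝓝 0)) :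
    CauchySeqLp p μ f := by
  have hsum : Tendsto (fun k : ℕ × ℕ => eLpNorm (f k.1 - g) p μ + eLpNorm (f k.2 - g) p μ)
      atTop (𝓝 0) := by
    rw [← prod_atTop_atTop_eq]
    simpa using (hlim.comp tendsto_fst).add (hlim.comp tendsto_snd)
  refine tendsto_of_tendsto_of_tendsto_of_le_of_le tendsto_const_nhds hsum (fun _ => zero_le)
    fun k => ?_
  simp only
  rw [← sub_sub_sub_cancel_right (f k.1) (f k.2) g]
  exact eLpNorm_sub_le ((hf _).sub hg) ((hf _).sub hg) hp

lemma CauchySeqLp.exists_tendsto [CompleteSpace F] (hp : 1 ≤ p) (hf : ∀ n, MemLp (f n) p μ)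
    (hc : CauchySeqLp p μ f) : ∃ g, StronglyMeasurable g ∧ MemLp g p μ ∧
      Tendsto (fun n => eLpNorm (f n - g) p μ) atTop (𝓝 0) := by
  have : Fact (1 ≤ p) := ⟨hp⟩
  have hcauchy : CauchySeq fun n => (hf n).toLp (f n) := by
    rw [EMetric.cauchySeq_iff]
    intro ε hε
    obtain ⟨⟨m, n⟩, hmn⟩ := eventually_atTop.1 (hc.eventually_lt_const hε)
    refine ⟨max m n, fun k hk l hl => ?_⟩
    rw [Lp.edist_toLp_toLp]
    exact hmn (k, l) ⟨(le_max_left _ _).trans hk, (le_max_right _ _).trans hl⟩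
  obtain ⟨g, hg⟩ := cauchySeq_tendsto_of_complete hcauchy
  refine ⟨g, Lp.stronglyMeasurable g, Lp.memLp g, ?_⟩
  refine ((Lp.tendsto_Lp_iff_tendsto_eLpNorm' _ _).1 hg).congr fun n => eLpNorm_congr_ae ?_
  exact (hf n).coeFn_toLp.sub .rfl

lemma ae_eq_of_tendsto_eLpNorm (hp : 1 ≤ p) (hf : ∀ n, AEStronglyMeasurable (f n) μ)
    (hg : AEStronglyMeasurable g μ) (hh : AEStronglyMeasurable h μ)
    (hfg : Tendsto (fun n => eLpNorm (f n - g) p μ) atTop (𝓝 0))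
    (hfh : Tendsto (fun n => eLpNorm (f n - h) p μ) atTop (𝓝 0)) : g =ᵐ[μ] h := by
  have hle : ∀ n, eLpNorm (g - h) p μ ≤ eLpNorm (f n - h) p μ + eLpNorm (f n - g) p μ := fun n => by
    rw [← sub_sub_sub_cancel_left h g (f n)]
    exact eLpNorm_sub_le ((hf n).sub hh) ((hf n).sub hg) hp
  have hzero : eLpNorm (g - h) p μ = 0 :=
    nonpos_iff_eq_zero.1 (ge_of_tendsto' (by simpa using hfh.add hfg) hle)
  have hae := (eLpNorm_eq_zero_iff (hg.sub hh) (zero_lt_one.trans_le hp).ne').1 hzero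
  filter_upwards [hae] with x hx using sub_eq_zero.1 hx

lemma tendsto_eLpNorm_of_tendsto_eLpNorm_sub (hp : 1 ≤ p)
    (hf : ∀ n, AEStronglyMeasurable (f n) μ) (hg : MemLp g p μ)
    (hlim : Tendsto (fun n => eLpNorm (f n - g) p μ) atTop (𝓝 0)) :
    Tendsto (fun n => eLpNorm (f n) p μ) atTop (𝓝 (eLpNorm g p μ)) := by
  refine tendsto_of_tendsto_of_tendsto_of_le_of_le
    (g := fun n => eLpNorm g p μ - eLpNorm (f n - g) p μ)
    (h := fun n => eLpNorm g p μ + eLpNorm (f n - g) p μ) ?_ ?_ (fun n => ?_) fun n => ?_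
  · simpa using ENNReal.Tendsto.sub tendsto_const_nhds hlim (Or.inl hg.eLpNorm_ne_top)
  · simpa using tendsto_const_nhds.add hlim
  · simp only [tsub_le_iff_right]
    nth_rw 1 [← sub_sub_cancel (f n) g]
    exact eLpNorm_sub_le (hf n) ((hf n).sub hg.1) hp
  · simp only
    nth_rw 1 [← add_sub_cancel g (f n)]
    exact eLpNorm_add_le hg.1 ((hf n).sub hg.1) hp

lemma tendsto_eLpNorm_of_exponent_le [IsFiniteMeasure μ] {r : ℝ≥0∞} (hp : 1 ≤ p) (hpr : p ≤ r)
    (hr : r ≠ ⊤) (hf : ∀ n, AEStronglyMeasurable (f n) μ)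
    (hlim : Tendsto (fun n => eLpNorm (f n) r μ) atTop (𝓝 0)) :
    Tendsto (fun n => eLpNorm (f n) p μ) atTop (𝓝 0) := by
  have hp0 : 0 < p.toReal := ENNReal.toReal_pos (zero_lt_one.trans_le hp).ne'
    (ne_top_of_le_ne_top hr hpr)
  have hexp : 0 ≤ 1 / p.toReal - 1 / r.toReal :=
    sub_nonneg.2 (one_div_le_one_div_of_le hp0 (ENNReal.toReal_mono hr hpr))
  refine tendsto_of_tendsto_of_tendsto_of_le_of_le tendsto_const_nhds ?_ (fun _ => zero_le)
    fun n => eLpNorm_le_eLpNorm_mul_rpow_measure_univ hpr (hf n)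
  simpa using ENNReal.Tendsto.mul_const hlim
    (Or.inr (ENNReal.rpow_ne_top_of_nonneg hexp (measure_ne_top μ univ)))

lemma tendsto_eLpNorm_sub_of_bounded [IsFiniteMeasure μ] (hp : 1 ≤ p) (hp' : p ≠ ⊤)
    (hf : ∀ n, AEStronglyMeasurable (f n) μ) {B : ℝ≥0} (hB : ∀ n x, ‖f n x‖ ≤ B)
    (hlim : ∀ x, Tendsto (fun n => f n x) atTop (𝓝 (g x))) :
    Tendsto (fun n => eLpNorm (f n - g) p μ) atTop (𝓝 0) := by
  have hg : MemLp g p μ := by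
    refine MemLp.of_bound (aestronglyMeasurable_of_tendsto_ae atTop hf (ae_of_all _ hlim)) B
      (ae_of_all _ fun x => ?_)
    exact le_of_tendsto' (hlim x).norm fun n => hB n x
  refine tendsto_Lp_finite_of_tendsto_ae hp hp' hf hg ?_ (ae_of_all _ hlim)
  refine unifIntegrable_of hp hp' hf fun ε _ => ⟨B + 1, fun n => ?_⟩
  have hempty : {x | B + 1 ≤ ‖f n x‖₊} = ∅ := by
    refine eq_empty_of_forall_notMem fun x hx => ?_
    exact ((mem_ofPred.1 hx).trans (hB n x)).not_gt (lt_add_one B)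
  simp only [hempty, indicator_empty, eLpNorm_zero', zero_le]

end Lp

/-! ### Compactness of bounded families of Lipschitz functions -/

section Lipschitz

variable {X : Type*} [PseudoMetricSpace X] [SecondCountableTopology X]

lemma exists_subseq_tendsto_of_lipschitzWith {ι : Type*} [Countable ι] (f : ℕ → ι → X → ℝ)
    (K : ι → ℝ≥0) (hlip : ∀ n i, LipschitzWith (K i) (f n i)) (hK : ∀ n i x, ‖f n i x‖ ≤ K i) :
    ∃ ns : ℕ → ℕ, StrictMono ns ∧
      ∀ i, ∃ g : X → ℝ, ∀ x, Tendsto (fun k => f (ns k) i x) atTop (𝓝 (g x)) := by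
  obtain ⟨D, hDc, hD⟩ := TopologicalSpace.exists_countable_dense X
  have := hDc.to_subtype
  obtain ⟨a, -, ns, hns, hlim⟩ := (isCompact_univ_pi fun j : ι × D =>
      isCompact_Icc (a := -(K j.1 : ℝ)) (b := K j.1)).isSeqCompact
    (x := fun n j => f n j.1 j.2) fun n j _ => abs_le.1 (hK n j.1 _)
  rw [tendsto_pi_nhds] at hlim
  suffices ∀ i x, ∃ l, Tendsto (fun k => f (ns k) i x) atTop (𝓝 l) from
    ⟨ns, hns, fun i => Classical.skolem.1 (this i)⟩
  refine fun i x => cauchySeq_tendsto_of_complete (Metric.cauchySeq_iff.2 fun δ hδ => ?_)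
  obtain ⟨d, hdD, hd⟩ := hD.exists_dist_lt x (ε := δ / 3 / (K i + 1)) (by positivity)
  have hnear : ∀ n, dist (f n i x) (f n i d) ≤ δ / 3 := fun n => calc
    _ ≤ K i * dist x d := (hlip n i).dist_le_mul x d
    _ ≤ (K i + 1) * (δ / 3 / (K i + 1)) := by gcongr; linarith
    _ = δ / 3 := by field_simp
  obtain ⟨n₀, hn₀⟩ := Metric.cauchySeq_iff.1 (hlim (i, ⟨d, hdD⟩)).cauchySeq (δ / 3) (by positivity)
  refine ⟨n₀, fun m hm n hn => ?_⟩
  have htri := dist_triangle4_right (f (ns m) i x) (f (ns n) i x) (f (ns m) i d) (f (ns n) i d)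
  have hmn : dist (f (ns m) i d) (f (ns n) i d) < δ / 3 := hn₀ m hm n hn
  linarith [hnear (ns m), hnear (ns n)]

lemma exists_subseq_cauchySeqLp_of_lipschitz_approx [MeasurableSpace X] [BorelSpace X]
    {ν : Measure X} [IsFiniteMeasure ν] {r : ℝ≥0∞} (hr : 1 ≤ r) (hr' : r ≠ ⊤) {φ : ℕ → X → ℝ}
    (hφ : ∀ n, AEStronglyMeasurable (φ n) ν)
    (happ : ∀ δ > 0, ∃ K : ℝ≥0, ∀ n, ∃ ψ : X → ℝ,
      LipschitzWith K ψ ∧ (∀ x, ‖ψ x‖ ≤ K) ∧ eLpNorm (φ n - ψ) r ν ≤ δ) :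
    ∃ ns : ℕ → ℕ, StrictMono ns ∧ CauchySeqLp r ν (φ ∘ ns) := by
  obtain ⟨δ, -, hδ, hδ0⟩ := exists_seq_strictAnti_tendsto' (zero_lt_one (α := ℝ≥0∞))
  choose K ψ hlip hK hψ using fun i => happ (δ i) (hδ i).1
  have hψm : ∀ i n, AEStronglyMeasurable (ψ i n) ν := fun i n =>
    (hlip i n).continuous.aestronglyMeasurable
  obtain ⟨ns, hns, hlim⟩ := exists_subseq_tendsto_of_lipschitzWith (fun n i => ψ i n) K
    (fun n i => hlip i n) fun n i => hK i n
  refine ⟨ns, hns, .of_forall_approx hr (fun n => hφ _) fun ε hε => ?_⟩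
  obtain ⟨i, hi⟩ := (hδ0.eventually_le_const hε).exists
  obtain ⟨g, hg⟩ := hlim i
  have hψns : ∀ n, AEStronglyMeasurable (ψ i (ns n)) ν := fun n => hψm i _
  refine ⟨fun n => ψ i (ns n), hψns, .of_tendsto hr hψns
    (aestronglyMeasurable_of_tendsto_ae atTop hψns (ae_of_all _ hg))
    (tendsto_eLpNorm_sub_of_bounded hr hr' hψns (fun n => hK i _) hg), fun n => ?_⟩
  exact (hψ i _).trans hi

end Lipschitz

/-! ### Averages over cones -/

section KernelMean

variable {E : Type*} [NormedAddCommGroup E] [NormedSpace ℝ E] [MeasurableSpace E] {Ω : Set E}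
  {μ : Measure E} {k : E → ℝ} {e : E} {ρ ε : ℝ} {K : ℝ≥0}

/-- `k` is a Lipschitz weight of total mass `1` supported in `ball e ρ`; the constant `K` bounds
both its size and its Lipschitz constant. -/
structure IsAveragingKernel (μ : Measure E) (k : E → ℝ) (e : E) (ρ : ℝ) (K : ℝ≥0) : Prop where
  lipschitz : LipschitzWith K k
  norm_le : ∀ y, ‖k y‖ ≤ K
  support_subset : Function.support k ⊆ ball e ρ
  integral_eq_one : ∫ y, k y ∂μ = 1

/-- The average of `f` over `x + ε • ball e ρ` with respect to the weight `k` on `ball e ρ`. -/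
def kernelMean (μ : Measure E) (k : E → ℝ) (ε : ℝ) (f : E → ℝ) (x : E) : ℝ :=
  ∫ y, k y * f (x + ε • y) ∂μ

variable [BorelSpace E]

lemma IsAveragingKernel.integrable_mul (hk : IsAveragingKernel μ k e ρ K) {f : E → ℝ}
    (hf : Integrable f μ) (x : E) : Integrable (fun z => k (ε⁻¹ • (z - x)) * f z) μ :=
  hf.bdd_mul (hk.lipschitz.continuous.comp (by fun_prop)).aestronglyMeasurable
    (ae_of_all _ fun _ => hk.norm_le _)

variable [FiniteDimensional ℝ E] [μ.IsAddHaarMeasure]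

lemma exists_isAveragingKernel (μ : Measure E) [μ.IsAddHaarMeasure] (e : E) (hρ : 0 < ρ) :
    ∃ k K, IsAveragingKernel μ k e ρ K := by
  let b : ContDiffBump e := ⟨ρ / 2, ρ, half_pos hρ, half_lt_self hρ⟩
  have hk : ContDiff ℝ 1 (b.normed μ) := b.contDiff_normed
  obtain ⟨L, hL⟩ := hk.lipschitzWith_of_hasCompactSupport b.hasCompactSupport_normed one_ne_zero
  obtain ⟨B, hB⟩ := b.hasCompactSupport_normed.exists_bound_of_continuous hk.continuous
  refine ⟨b.normed μ, max L B.toNNReal, hL.weaken (le_max_left _ _), fun y => ?_,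
    b.support_normed_eq.subset, b.integral_normed⟩
  exact (hB y).trans ((Real.le_coe_toNNReal B).trans (by simp))

lemma kernelMean_eq (μ : Measure E) [μ.IsAddHaarMeasure] (k f : E → ℝ) (hε : 0 < ε) (x : E) :
    kernelMean μ k ε f x =
      (ε ^ finrank ℝ E)⁻¹ * ∫ z, k (ε⁻¹ • (z - x)) * f z ∂μ := by
  have hscale := Measure.integral_comp_smul μ (fun w => k (ε⁻¹ • w) * f (x + w)) ε
  simp only [smul_smul, inv_mul_cancel₀ hε.ne', one_smul] at hscale
  have hshift := integral_add_left_eq_self (μ := μ) (fun z => k (ε⁻¹ • (z - x)) * f z) x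
  simp only [add_sub_cancel_left] at hshift
  rw [kernelMean, hscale, hshift, abs_of_pos (by positivity), smul_eq_mul]

namespace IsAveragingKernel

lemma norm_kernelMean_le (hk : IsAveragingKernel μ k e ρ K) (hε : 0 < ε) {f : E → ℝ}
    (hf : Integrable f μ) (x : E) :
    ‖kernelMean μ k ε f x‖ ≤ (ε ^ finrank ℝ E)⁻¹ * (K * ∫ z, ‖f z‖ ∂μ) := by
  rw [kernelMean_eq μ k f hε, norm_mul, Real.norm_of_nonneg (by positivity), ← integral_const_mul]
  gcongr
  refine norm_integral_le_of_norm_le (hf.norm.const_mul _) (ae_of_all _ fun z => ?_)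
  rw [norm_mul]
  gcongr
  exact hk.norm_le _

lemma dist_kernelMean_le (hk : IsAveragingKernel μ k e ρ K) (hε : 0 < ε) {f : E → ℝ}
    (hf : Integrable f μ) (x x' : E) :
    dist (kernelMean μ k ε f x) (kernelMean μ k ε f x') ≤
      (ε ^ finrank ℝ E)⁻¹ * (K * ε⁻¹ * ∫ z, ‖f z‖ ∂μ) * dist x x' := by
  rw [dist_eq_norm, kernelMean_eq μ k f hε, kernelMean_eq μ k f hε, ← mul_sub,
    ← integral_sub (hk.integrable_mul hf x) (hk.integrable_mul hf x'), norm_mul,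
    Real.norm_of_nonneg (by positivity), mul_assoc, mul_right_comm _ _ (dist x x'),
    ← integral_const_mul]
  gcongr
  refine norm_integral_le_of_norm_le (hf.norm.const_mul _) (ae_of_all _ fun z => ?_)
  rw [← sub_mul, norm_mul]
  gcongr
  calc ‖k (ε⁻¹ • (z - x)) - k (ε⁻¹ • (z - x'))‖
      ≤ K * dist (ε⁻¹ • (z - x)) (ε⁻¹ • (z - x')) := hk.lipschitz.dist_le_mul _ _
    _ = K * ε⁻¹ * dist x x' := by
      rw [dist_smul₀, dist_sub_left, norm_inv, Real.norm_of_nonneg hε.le, mul_assoc]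

lemma lipschitzWith_kernelMean (hk : IsAveragingKernel μ k e ρ K) (hε : 0 < ε) (hε1 : ε ≤ 1)
    {f : E → ℝ} (hf : Integrable f μ) {A : ℝ≥0} (hA : ∫ z, ‖f z‖ ∂μ ≤ A) :
    LipschitzWith (((ε ^ finrank ℝ E)⁻¹ * (K * ε⁻¹)).toNNReal * A) (kernelMean μ k ε f) ∧
      ∀ x, ‖kernelMean μ k ε f x‖ ≤ ((ε ^ finrank ℝ E)⁻¹ * (K * ε⁻¹)).toNNReal * A := by
  have hL : 0 ≤ (ε ^ finrank ℝ E)⁻¹ * (K * ε⁻¹) := by positivity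
  refine ⟨.of_dist_le_mul fun x x' => (hk.dist_kernelMean_le hε hf x x').trans ?_,
    fun x => (hk.norm_kernelMean_le hε hf x).trans ?_⟩
  · rw [NNReal.coe_mul, Real.coe_toNNReal _ hL, mul_assoc (_⁻¹) _ (A : ℝ)]
    gcongr
  · rw [Real.coe_toNNReal _ hL, mul_assoc]
    gcongr
    exact le_mul_of_one_le_right K.2 ((one_le_inv₀ hε).2 hε1)

end IsAveragingKernel

lemma enorm_sub_le_lintegral_fderiv {F G : Type*} [NormedAddCommGroup F] [NormedSpace ℝ F]
    [NormedAddCommGroup G] [NormedSpace ℝ G] {φ : F → G} (hφ : ContDiff ℝ 1 φ)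
    (hε : 0 ≤ ε) (x y : F) :
    ‖φ (x + ε • y) - φ x‖ₑ ≤ ‖y‖ₑ * ∫⁻ t in Ioc 0 ε, ‖fderiv ℝ φ (x + t • y)‖ₑ := by
  have hd : ∀ t : ℝ, HasDerivAt (fun s : ℝ => φ (x + s • y)) (fderiv ℝ φ (x + t • y) y) t :=
    fun t => ((hφ.differentiable one_ne_zero) _).hasFDerivAt.comp_hasDerivAt t
      (by simpa using ((hasDerivAt_id t).smul_const y).const_add x)
  have hc : ContDiff ℝ 1 fun s : ℝ => φ (x + s • y) := by fun_prop
  have hftc := enorm_sub_le_lintegral_deriv_of_contDiffOn_Icc hc.contDiffOn hε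
  simp only [zero_smul, add_zero, (hd _).deriv, ← restrict_Ioc_eq_restrict_Icc] at hftc
  refine hftc.trans ?_
  rw [← lintegral_const_mul' _ _ enorm_ne_top]
  refine lintegral_mono fun t => ?_
  rw [mul_comm]
  exact (fderiv ℝ φ (x + t • y)).le_opENorm y

lemma IsAveragingKernel.sub_kernelMean_indicator (hk : IsAveragingKernel μ k e ρ K) {φ : E → ℝ}
    (hφ : Continuous φ) {x : E} (hx : ∀ y ∈ ball e ρ, x + ε • y ∈ Ω) :
    φ x - kernelMean μ k ε (Ω.indicator φ) x = ∫ y, k y * (φ x - φ (x + ε • y)) ∂μ := by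
  have hcs : HasCompactSupport k := .of_support_subset_isCompact (isCompact_closedBall e ρ)
    (hk.support_subset.trans ball_subset_closedBall)
  have hkc := hk.lipschitz.continuous
  have hmean : kernelMean μ k ε (Ω.indicator φ) x = ∫ y, k y * φ (x + ε • y) ∂μ := by
    refine integral_congr_ae (ae_of_all _ fun y => ?_)
    by_cases hy : k y = 0
    · simp [hy]
    · simp [indicator_of_mem (hx y (hk.support_subset hy))]
  have hint : Integrable (fun y => k y * φ (x + ε • y)) μ :=
    (hkc.mul (hφ.comp (by fun_prop))).integrable_of_hasCompactSupport hcs.mul_right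
  have hint' : Integrable (fun y => k y * φ x) μ :=
    (hkc.integrable_of_hasCompactSupport hcs).mul_const _
  simp only [mul_sub]
  rw [integral_sub hint' hint, integral_mul_const, hk.integral_eq_one, one_mul, hmean]

lemma IsAveragingKernel.enorm_sub_kernelMean_le (hk : IsAveragingKernel μ k e ρ K) (he : ‖e‖ ≤ 1)
    (hρ : ρ ≤ 1) (hε : 0 < ε) {φ : E → ℝ} (hφ : ContDiff ℝ 1 φ) {x : E}
    (hx : ∀ y ∈ ball e ρ, ∀ t, 0 < t → t ≤ ε → x + t • y ∈ Ω) :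
    ‖φ x - kernelMean μ k ε (Ω.indicator φ) x‖ₑ ≤ (2 * K : ℝ≥0) *
      ∫⁻ t in Ioc 0 ε, ∫⁻ y in ball e ρ, Ω.indicator (‖fderiv ℝ φ ·‖ₑ) (x + t • y) ∂μ := by
  have hy2 : ∀ y ∈ ball e ρ, ‖y‖ₑ ≤ (2 : ℝ≥0) := fun y hy => by
    refine enorm_le_coe.2 (?_ : ‖y‖ ≤ 2)
    linarith [norm_le_norm_add_norm_sub' y e, mem_ball_iff_norm.1 hy]
  have hdiff : ∀ y, ‖k y * (φ x - φ (x + ε • y))‖ₑ ≤ (ball e ρ).indicator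
      (fun y => (2 * K : ℝ≥0) * ∫⁻ t in Ioc 0 ε, ‖fderiv ℝ φ (x + t • y)‖ₑ) y := fun y => by
    by_cases hy : y ∈ ball e ρ
    · rw [indicator_of_mem hy, enorm_mul, enorm_sub_rev, mul_comm 2, ENNReal.coe_mul, mul_assoc]
      gcongr
      · exact enorm_le_coe.2 (hk.norm_le y)
      · exact (enorm_sub_le_lintegral_fderiv hφ hε.le x y).trans (by gcongr; exact hy2 y hy)
    · simp [Function.notMem_support.1 fun h => hy (hk.support_subset h)]
  have hmeas : Measurable fun w : E × ℝ => ‖fderiv ℝ φ (x + w.2 • w.1)‖ₑ :=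
    ((hφ.continuous_fderiv one_ne_zero).comp (by fun_prop)).measurable.enorm
  rw [hk.sub_kernelMean_indicator hφ.continuous fun y hy => hx y hy ε hε le_rfl]
  calc ‖∫ y, k y * (φ x - φ (x + ε • y)) ∂μ‖ₑ
      ≤ ∫⁻ y, ‖k y * (φ x - φ (x + ε • y))‖ₑ ∂μ := enorm_integral_le_lintegral_enorm _
    _ ≤ ∫⁻ y in ball e ρ, (2 * K : ℝ≥0) * (∫⁻ t in Ioc 0 ε, ‖fderiv ℝ φ (x + t • y)‖ₑ) ∂μ := by
        rw [← lintegral_indicator measurableSet_ball]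
        exact lintegral_mono hdiff
    _ = (2 * K : ℝ≥0) * ∫⁻ t in Ioc 0 ε, ∫⁻ y in ball e ρ, ‖fderiv ℝ φ (x + t • y)‖ₑ ∂μ := by
        rw [lintegral_const_mul' _ _ ENNReal.coe_ne_top,
          lintegral_lintegral_swap hmeas.aemeasurable]
    _ = _ := by
        congr 1
        refine setLIntegral_congr_fun measurableSet_Ioc fun t ht => ?_
        refine setLIntegral_congr_fun measurableSet_ball fun y hy => ?_
        simp only [indicator_of_mem (hx y hy t ht.1 ht.2)]

end KernelMean

/-! ### Trace inequality and compactness of traces -/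

section Indicator

variable {X : Type*} [MeasurableSpace X] {μ : Measure X} {Ω : Set X} {p : ℝ} {f : X → ℝ}
  {M : ℝ≥0}

lemma setLIntegral_enorm_le_of_eLpNorm_le (hp : 1 ≤ p)
    (hf : AEStronglyMeasurable f (μ.restrict Ω))
    (hM : eLpNorm f (ENNReal.ofReal p) (μ.restrict Ω) ≤ M) :
    ∫⁻ x in Ω, ‖f x‖ₑ ∂μ ≤ μ Ω ^ (1 - 1 / p) * M := by
  have hholder := eLpNorm_le_eLpNorm_mul_rpow_measure_univ (p := 1) (q := ENNReal.ofReal p)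
    (by simpa using hp) hf
  rw [ENNReal.toReal_ofReal (by linarith), ENNReal.toReal_one, div_one,
    Measure.restrict_apply_univ, eLpNorm_one_eq_lintegral_enorm, mul_comm] at hholder
  exact hholder.trans (by gcongr)

lemma integrable_indicator_of_eLpNorm_le (hΩ : MeasurableSet Ω) (hμΩ : μ Ω ≠ ⊤) (hp : 1 ≤ p)
    (hf : AEStronglyMeasurable f (μ.restrict Ω))
    (hM : eLpNorm f (ENNReal.ofReal p) (μ.restrict Ω) ≤ M) : Integrable (Ω.indicator f) μ := by
  have : IsFiniteMeasure (μ.restrict Ω) := ⟨by simpa using hμΩ.lt_top⟩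
  exact (integrable_indicator_iff hΩ).2
    (MemLp.integrable (by simpa using hp) ⟨hf, hM.trans_lt ENNReal.coe_lt_top⟩)

lemma integral_norm_indicator_le (hΩ : MeasurableSet Ω) (hμΩ : μ Ω ≠ ⊤) (hp : 1 ≤ p)
    (hf : AEStronglyMeasurable f (μ.restrict Ω))
    (hM : eLpNorm f (ENNReal.ofReal p) (μ.restrict Ω) ≤ M) :
    ∫ x, ‖Ω.indicator f x‖ ∂μ ≤ ((μ Ω ^ (1 - 1 / p)).toNNReal * M : ℝ≥0) := by
  have hexp : 0 ≤ 1 - 1 / p := sub_nonneg.2 ((div_le_one (by linarith)).2 hp)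
  simp only [norm_indicator_eq_indicator_norm]
  rw [integral_indicator hΩ, integral_norm_eq_lintegral_enorm hf]
  refine ENNReal.toReal_le_coe_of_le_coe
    ((setLIntegral_enorm_le_of_eLpNorm_le hp hf hM).trans_eq ?_)
  rw [ENNReal.coe_mul, ENNReal.coe_toNNReal (ENNReal.rpow_ne_top_of_nonneg hexp hμΩ)]

end Indicator

section Trace

variable {E : Type*} [NormedAddCommGroup E] [NormedSpace ℝ E] [MeasurableSpace E]
  {μ ν ν' : Measure E} {p r : ℝ≥0∞}

/-- The norm of `W^{1,p}(μ)`, up to equivalence, for differentiable functions. -/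
def smoothW1pNorm (p : ℝ≥0∞) (μ : Measure E) (φ : E → ℝ) : ℝ≥0∞ :=
  eLpNorm φ p μ + eLpNorm (fderiv ℝ φ) p μ

/-- The trace inequality `‖φ‖_{L^r(ν)} ≤ C ‖φ‖_{W^{1,p}(μ)}` for functions of class `C^1`. -/
def TraceBounded (p r : ℝ≥0∞) (μ ν : Measure E) : Prop :=
  ∃ C : ℝ≥0, ∀ φ : E → ℝ, ContDiff ℝ 1 φ → eLpNorm φ r ν ≤ C * smoothW1pNorm p μ φ

/-- Relative compactness in `L^r(ν)` of the traces of sequences of functions of class `C^1` which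
are bounded in `W^{1,p}(μ)`. -/
def TraceCompact (p r : ℝ≥0∞) (μ ν : Measure E) : Prop :=
  ∀ φ : ℕ → E → ℝ, (∀ n, ContDiff ℝ 1 (φ n)) → ∀ M : ℝ≥0, (∀ n, smoothW1pNorm p μ (φ n) ≤ M) →
    ∃ ns : ℕ → ℕ, StrictMono ns ∧ CauchySeqLp r ν (φ ∘ ns)

/-- In `L^r(ν)`, the unit ball of `W^{1,p}(μ)` is uniformly approximable by equibounded and
equi-Lipschitz functions. -/
def HasLipschitzApproximation (p r : ℝ≥0∞) (μ ν : Measure E) : Prop :=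
  ∀ δ > 0, ∃ K : ℝ≥0, ∀ (φ : E → ℝ) (M : ℝ≥0), ContDiff ℝ 1 φ → smoothW1pNorm p μ φ ≤ M →
    ∃ ψ : E → ℝ, LipschitzWith (K * M) ψ ∧ (∀ x, ‖ψ x‖ ≤ K * M) ∧ eLpNorm (φ - ψ) r ν ≤ δ * M

lemma TraceBounded.mono_measure (h : TraceBounded p r μ ν) (hle : ν' ≤ ν) :
    TraceBounded p r μ ν' :=
  let ⟨C, hC⟩ := h
  ⟨C, fun φ hφ => (eLpNorm_mono_measure φ hle).trans (hC φ hφ)⟩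

lemma TraceBounded.add_measure (hr : 1 ≤ r) (hr' : r ≠ ⊤) (h : TraceBounded p r μ ν)
    (h' : TraceBounded p r μ ν') : TraceBounded p r μ (ν + ν') := by
  obtain ⟨C, hC⟩ := h
  obtain ⟨D, hD⟩ := h'
  refine ⟨C + D, fun φ hφ => (eLpNorm_add_measure_le hr hr' φ).trans ?_⟩
  rw [ENNReal.coe_add, add_mul]
  exact add_le_add (hC φ hφ) (hD φ hφ)

lemma TraceCompact.mono_measure (h : TraceCompact p r μ ν) (hle : ν' ≤ ν) :
    TraceCompact p r μ ν' := fun φ hφ M hM =>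
  let ⟨ns, hns, hc⟩ := h φ hφ M hM
  ⟨ns, hns, hc.mono_measure hle⟩

lemma TraceCompact.add_measure (hr : 1 ≤ r) (hr' : r ≠ ⊤) (h : TraceCompact p r μ ν)
    (h' : TraceCompact p r μ ν') : TraceCompact p r μ (ν + ν') := by
  intro φ hφ M hM
  obtain ⟨ns, hns, hc⟩ := h φ hφ M hM
  obtain ⟨ms, hms, hc'⟩ := h' (φ ∘ ns) (fun n => hφ _) M fun n => hM _
  exact ⟨ns ∘ ms, hns.comp hms, (hc.comp hms).add_measure hr hr' hc'⟩

variable [BorelSpace E]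

lemma HasLipschitzApproximation.traceBounded [IsFiniteMeasure ν] (hr : 1 ≤ r)
    (h : HasLipschitzApproximation p r μ ν) : TraceBounded p r μ ν := by
  obtain ⟨K, hK⟩ := h 1 one_pos
  refine ⟨(ν univ ^ r.toReal⁻¹).toNNReal * K + 1, fun φ hφ => ?_⟩
  rcases eq_or_ne (smoothW1pNorm p μ φ) ⊤ with htop | htop
  · simp [htop]
  lift smoothW1pNorm p μ φ to ℝ≥0 using htop with M hM
  obtain ⟨ψ, hlip, hψ, hφψ⟩ := hK φ M hφ hM.ge
  have hψm : AEStronglyMeasurable ψ ν := hlip.continuous.aestronglyMeasurable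
  have hνtop : ν univ ^ r.toReal⁻¹ ≠ ⊤ :=
    ENNReal.rpow_ne_top_of_nonneg (by positivity) (measure_ne_top _ _)
  have hψr : eLpNorm ψ r ν ≤ ν univ ^ r.toReal⁻¹ * (K * M : ℝ≥0) := by
    refine (eLpNorm_le_of_ae_bound (ae_of_all _ hψ)).trans_eq ?_
    rw [← NNReal.coe_mul, ENNReal.ofReal_coe_nnreal]
  calc eLpNorm φ r ν = eLpNorm (ψ + (φ - ψ)) r ν := by rw [add_sub_cancel]
    _ ≤ eLpNorm ψ r ν + eLpNorm (φ - ψ) r ν :=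
      eLpNorm_add_le hψm (hφ.continuous.aestronglyMeasurable.sub hψm) hr
    _ ≤ ν univ ^ r.toReal⁻¹ * (K * M : ℝ≥0) + 1 * M := add_le_add hψr hφψ
    _ = _ := by
      push_cast
      rw [ENNReal.coe_toNNReal hνtop]
      ring

lemma HasLipschitzApproximation.traceCompact [SecondCountableTopology E] [IsFiniteMeasure ν]
    (hr : 1 ≤ r) (hr' : r ≠ ⊤) (h : HasLipschitzApproximation p r μ ν) : TraceCompact p r μ ν := by
  intro φ hφ M hM
  refine exists_subseq_cauchySeqLp_of_lipschitz_approx hr hr'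
    (fun n => (hφ n).continuous.aestronglyMeasurable) fun δ hδ => ?_
  obtain ⟨K, hK⟩ := h (δ / (M + 1)) (ENNReal.div_pos hδ.ne' (by finiteness))
  refine ⟨K * M, fun n => ?_⟩
  obtain ⟨ψ, hlip, hψ, hφψ⟩ := hK (φ n) M (hφ n) (hM n)
  refine ⟨ψ, hlip, hψ, hφψ.trans ?_⟩
  calc δ / (M + 1) * M ≤ δ / (M + 1) * (M + 1) := by gcongr; exact le_self_add
    _ = δ := ENNReal.div_mul_cancel (by simp) (by finiteness)

variable [FiniteDimensional ℝ E] [SFinite ν] {Ω : Set E} [μ.IsAddHaarMeasure] {e : E} {ρ R d : ℝ}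
  {C : ℝ≥0∞} {p r : ℝ}

lemma UpperAhlforsRegular.exists_eLpNorm_sub_kernelMean_le {k : E → ℝ} {K : ℝ≥0}
    (hν : UpperAhlforsRegular ν d C) (hC : C ≠ ⊤) (hd : 0 ≤ d) (hp : 1 < p) (hpr : p ≤ r)
    (hsub : (finrank ℝ E : ℝ) / p - d / r < 1) (hk : IsAveragingKernel μ k e ρ K) (he : ‖e‖ ≤ 1)
    (hρ : 0 < ρ) (hρ1 : ρ ≤ 1) (hΩ : MeasurableSet Ω)
    (hcone : ∀ᵐ x ∂ν, ∀ y ∈ ball e ρ, ∀ t, 0 < t → t < R → x + t • y ∈ Ω) :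
    ∃ D ≠ ⊤, ∃ κ > (0 : ℝ), ∀ ε ∈ Ioc (0 : ℝ) 1, ε < R → ∀ φ : E → ℝ, ContDiff ℝ 1 φ →
      eLpNorm (φ - kernelMean μ k ε (Ω.indicator φ)) (ENNReal.ofReal r) ν ≤
        D * ENNReal.ofReal (ε ^ κ) *
          eLpNorm (fderiv ℝ φ) (ENNReal.ofReal p) (μ.restrict Ω) := by
  obtain ⟨D, hD, κ, hκ, hest⟩ :=
    hν.exists_lintegral_coneIntegral_rpow_le μ hC hd hp hpr hsub (e := e) hρ hρ1
  have hp0 : 0 < p := by linarith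
  have hr0 : 0 < r := by linarith
  refine ⟨(2 * K : ℝ≥0) * D ^ r⁻¹, by finiteness, κ / r, by positivity,
    fun ε hε hεR φ hφ => ?_⟩
  set G : E → ℝ≥0∞ := Ω.indicator (‖fderiv ℝ φ ·‖ₑ)
  have hG : Measurable G :=
    (hφ.continuous_fderiv one_ne_zero).measurable.enorm.indicator hΩ
  have hGp : eLpNorm (fderiv ℝ φ) (ENNReal.ofReal p) (μ.restrict Ω) =
      (∫⁻ z, G z ^ p ∂μ) ^ p⁻¹ := by
    rw [eLpNorm_eq_lintegral_rpow_enorm_toReal (by simpa using hp0) ENNReal.ofReal_ne_top,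
      ENNReal.toReal_ofReal hp0.le, one_div, ← lintegral_indicator hΩ]
    congr 2 with z
    exact (Ω.indicator_comp_of_zero (g := (· ^ p)) (ENNReal.zero_rpow_of_pos hp0)).symm ▸ rfl
  rw [eLpNorm_eq_lintegral_rpow_enorm_toReal (by simpa using hr0) ENNReal.ofReal_ne_top,
    ENNReal.toReal_ofReal hr0.le, one_div, hGp]
  calc (∫⁻ x, ‖φ x - kernelMean μ k ε (Ω.indicator φ) x‖ₑ ^ r ∂ν) ^ r⁻¹
      ≤ (∫⁻ x, ((2 * K : ℝ≥0) * ∫⁻ t in Ioc 0 ε, ∫⁻ y in ball e ρ, G (x + t • y) ∂μ) ^ r ∂ν)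
          ^ r⁻¹ := by
        gcongr 1
        refine lintegral_mono_ae (hcone.mono fun x hx => ?_)
        gcongr
        exact hk.enorm_sub_kernelMean_le he hρ1 hε.1 hφ
          fun y hy t ht htε => hx y hy t ht (htε.trans_lt hεR)
    _ ≤ ((2 * K : ℝ≥0) ^ r * (D * ENNReal.ofReal (ε ^ κ) * (∫⁻ z, G z ^ p ∂μ) ^ (r / p)))
          ^ r⁻¹ := by
        simp only [ENNReal.mul_rpow_of_nonneg _ _ hr0.le]
        rw [lintegral_const_mul' _ _ (by finiteness)]
        gcongr
        exact hest ε hε G hG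
    _ = _ := by
        have hr1 : 0 ≤ r⁻¹ := by positivity
        simp only [ENNReal.mul_rpow_of_nonneg _ _ hr1, ← ENNReal.rpow_mul]
        rw [ENNReal.ofReal_rpow_of_nonneg (by have := hε.1; positivity) hr1,
          ← Real.rpow_mul hε.1.le, mul_inv_cancel₀ hr0.ne', ENNReal.rpow_one,
          show r / p * r⁻¹ = p⁻¹ by field_simp, ← div_eq_mul_inv, ← mul_assoc, ← mul_assoc]

lemma UpperAhlforsRegular.hasLipschitzApproximation (hν : UpperAhlforsRegular ν d C)
    (hC : C ≠ ⊤) (hd : 0 ≤ d) (hp : 1 < p) (hpr : p ≤ r)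
    (hsub : (finrank ℝ E : ℝ) / p - d / r < 1) (he : ‖e‖ ≤ 1) (hρ : 0 < ρ) (hρ1 : ρ ≤ 1)
    (hR : 0 < R) (hΩ : MeasurableSet Ω) (hμΩ : μ Ω ≠ ⊤)
    (hcone : ∀ᵐ x ∂ν, ∀ y ∈ ball e ρ, ∀ t, 0 < t → t < R → x + t • y ∈ Ω) :
    HasLipschitzApproximation (ENNReal.ofReal p) (ENNReal.ofReal r) (μ.restrict Ω) ν := by
  intro δ hδ
  obtain ⟨k, K, hk⟩ := exists_isAveragingKernel μ e hρ
  obtain ⟨D, hD, κ, hκ, hest⟩ :=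
    hν.exists_eLpNorm_sub_kernelMean_le hC hd hp hpr hsub hk he hρ hρ1 hΩ hcone
  obtain ⟨ε, hε, hεR, hεδ⟩ : ∃ ε ∈ Ioc (0 : ℝ) 1, ε < R ∧ D * ENNReal.ofReal (ε ^ κ) ≤ δ := by
    have hlim : Tendsto (fun ε : ℝ => D * ENNReal.ofReal (ε ^ κ)) (𝓝[>] 0) (𝓝 0) := by
      have hpow : Tendsto (fun ε : ℝ => ε ^ κ) (𝓝 0) (𝓝 0) := by
        simpa [Real.zero_rpow hκ.ne'] using (Real.continuous_rpow_const hκ.le).tendsto 0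
      simpa using ENNReal.Tendsto.const_mul
        (ENNReal.tendsto_ofReal (hpow.mono_left nhdsWithin_le_nhds)) (Or.inr hD)
    have hεR : ∀ᶠ ε in 𝓝[>] (0 : ℝ), ε ∈ Ioc (0 : ℝ) 1 ∧ ε < R :=
      (show ∀ᶠ ε in 𝓝[>] (0 : ℝ), ε ∈ Ioc (0 : ℝ) 1 from Ioc_mem_nhdsGT one_pos).and
        (nhdsWithin_le_nhds (Iio_mem_nhds hR))
    obtain ⟨ε, ⟨hε, hεR⟩, hεδ⟩ := (hεR.and (hlim.eventually_le_const hδ)).exists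
    exact ⟨ε, hε, hεR, hεδ⟩
  set V : ℝ≥0 := (μ Ω ^ (1 - 1 / p)).toNNReal
  refine ⟨((ε ^ finrank ℝ E)⁻¹ * (K * ε⁻¹)).toNNReal * V, fun φ M hφ hM =>
    ⟨kernelMean μ k ε (Ω.indicator φ), ?_⟩⟩
  have hint := integrable_indicator_of_eLpNorm_le hΩ hμΩ hp.le hφ.continuous.aestronglyMeasurable
    (le_self_add.trans hM)
  have hA : ∫ z, ‖Ω.indicator φ z‖ ∂μ ≤ (V * M : ℝ≥0) :=
    integral_norm_indicator_le hΩ hμΩ hp.le hφ.continuous.aestronglyMeasurable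
      (le_self_add.trans hM)
  obtain ⟨hlip, hbound⟩ := hk.lipschitzWith_kernelMean hε.1 hε.2 hint hA
  refine ⟨by rwa [mul_assoc], fun x => by simpa [mul_assoc] using hbound x, ?_⟩
  exact (hest ε hε hεR φ hφ).trans (by gcongr; exact le_add_self.trans hM)

end Trace

/-- The trace operator from `W^{1,p}(μ)` to `L^r(ν)` is bounded and compact, and `ν` is finite. -/
structure HasCompactTrace {E : Type*} [NormedAddCommGroup E] [NormedSpace ℝ E] [MeasurableSpace E]
    (p r : ℝ≥0∞) (μ ν : Measure E) : Prop where
  measure_univ_lt_top : ν univ < ⊤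
  traceBounded : TraceBounded p r μ ν
  traceCompact : TraceCompact p r μ ν

namespace HasCompactTrace

variable {E : Type*} [NormedAddCommGroup E] [NormedSpace ℝ E] [MeasurableSpace E] {p r : ℝ≥0∞}
  {μ ν ν' : Measure E}

lemma zero : HasCompactTrace p r μ 0 :=
  ⟨by simp, ⟨0, by simp⟩, fun _ _ _ _ => ⟨id, strictMono_id, by simp [CauchySeqLp]⟩⟩

lemma mono_measure (h : HasCompactTrace p r μ ν) (hle : ν' ≤ ν) : HasCompactTrace p r μ ν' :=
  ⟨(hle univ).trans_lt h.1, h.2.mono_measure hle, h.3.mono_measure hle⟩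

lemma add_measure (hr : 1 ≤ r) (hr' : r ≠ ⊤) (h : HasCompactTrace p r μ ν)
    (h' : HasCompactTrace p r μ ν') : HasCompactTrace p r μ (ν + ν') :=
  ⟨ENNReal.add_lt_top.2 ⟨h.1, h'.1⟩, h.2.add_measure hr hr' h'.2, h.3.add_measure hr hr' h'.3⟩

end HasCompactTrace

section Frontier

variable {E : Type*} [NormedAddCommGroup E] [InnerProductSpace ℝ E] [FiniteDimensional ℝ E]
  [MeasurableSpace E] [BorelSpace E] {Ω : Set E} {p r : ℝ}

lemma isCompact_frontier_of_isBounded {X : Type*} [PseudoMetricSpace X] [ProperSpace X]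
    {Ω : Set X} (hb : Bornology.IsBounded Ω) : IsCompact (frontier Ω) :=
  hb.isCompact_closure.of_isClosed_subset isClosed_frontier frontier_subset_closure

lemma IsInteriorCone.hasCompactTrace {x₀ e : E} {ρ R : ℝ} (hc : IsInteriorCone Ω x₀ e ρ R)
    (hΩ : IsOpen Ω) (hb : Bornology.IsBounded Ω) (hp : 1 < p) (hpr : p ≤ r)
    (hsub : (finrank ℝ E : ℝ) / p - (finrank ℝ E - 1 : ℝ) / r < 1) :
    HasCompactTrace (ENNReal.ofReal p) (ENNReal.ofReal r) (volume.restrict Ω)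
      (μH[(finrank ℝ E : ℝ) - 1].restrict (frontier Ω ∩ ball x₀ (R / 4))) := by
  set ν : Measure E := μH[(finrank ℝ E : ℝ) - 1].restrict (frontier Ω ∩ ball x₀ (R / 4)) with hν
  have : Nontrivial E := ⟨e, 0, by rintro rfl; simpa using hc.norm_axis⟩
  have hd : (0 : ℝ) ≤ finrank ℝ E - 1 := sub_nonneg.2 (by exact_mod_cast finrank_pos)
  have hR := hc.radius_pos
  have hr : 1 ≤ ENNReal.ofReal r := by simpa using hp.le.trans hpr
  obtain ⟨C, hC, hreg⟩ := hc.exists_upperAhlforsRegular hΩ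
  have hfin : ν univ < ⊤ := by
    have hball : ν univ = ν (ball x₀ (R / 4)) := by
      rw [hν, Measure.restrict_apply_univ, Measure.restrict_apply measurableSet_ball,
        inter_eq_right.2 inter_subset_right]
    rw [hball]
    exact (hreg x₀ (R / 4) (by linarith)).trans_lt (by finiteness)
  have : IsFiniteMeasure ν := ⟨hfin⟩
  have hcone : ∀ᵐ x ∂ν, ∀ y ∈ ball e ρ, ∀ t, 0 < t → t < R → x + t • y ∈ Ω := by
    filter_upwards [ae_restrict_mem (isClosed_frontier.measurableSet.inter measurableSet_ball)]
      with x hx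
    exact hc.add_smul_mem x hx.1 ((mem_ball.1 hx.2).trans (by linarith))
  have happrox := hreg.hasLipschitzApproximation (μ := volume) hC hd hp hpr hsub hc.norm_axis.le
    hc.aperture_pos hc.aperture_le_one hR hΩ.measurableSet hb.measure_lt_top.ne hcone
  exact ⟨hfin, happrox.traceBounded hr, happrox.traceCompact hr ENNReal.ofReal_ne_top⟩

lemma HasInteriorCones.hasCompactTrace (hcones : HasInteriorCones Ω) (hΩ : IsOpen Ω)
    (hb : Bornology.IsBounded Ω) (hp : 1 < p) (hpr : p ≤ r)
    (hsub : (finrank ℝ E : ℝ) / p - (finrank ℝ E - 1 : ℝ) / r < 1) :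
    HasCompactTrace (ENNReal.ofReal p) (ENNReal.ofReal r) (volume.restrict Ω)
      (μH[(finrank ℝ E : ℝ) - 1].restrict (frontier Ω)) := by
  have hr : 1 ≤ ENNReal.ofReal r := by simpa using hp.le.trans hpr
  refine (isCompact_frontier_of_isBounded hb).induction_on
    (p := fun A => HasCompactTrace (ENNReal.ofReal p) (ENNReal.ofReal r) (volume.restrict Ω)
      (μH[(finrank ℝ E : ℝ) - 1].restrict A)) (by simp [HasCompactTrace.zero])
    (fun A B hAB h => h.mono_measure (Measure.restrict_mono hAB le_rfl))
    (fun A B hA hB => (hA.add_measure hr ENNReal.ofReal_ne_top hB).mono_measure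
      (Measure.restrict_union_le A B)) fun x hx => ?_
  obtain ⟨e, ρ, R, hc⟩ := hcones x hx
  exact ⟨_, inter_mem_nhdsWithin _ (ball_mem_nhds x (by linarith [hc.radius_pos])),
    hc.hasCompactTrace hΩ hb hp hpr hsub⟩

end Frontier

/-! ### Uniform convexity -/

lemma norm_le_one_of_rpow_add_rpow_eq_one {V : Type*} [NormedAddCommGroup V] {p : ℝ} {a b : V}
    (hp : 0 < p) (h : ‖a‖ ^ p + ‖b‖ ^ p = 1) : ‖a‖ ≤ 1 := by
  by_contra! hlt
  linarith [Real.one_lt_rpow hlt hp, Real.rpow_nonneg (norm_nonneg b) p]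

section StrictConvex

variable {V : Type*} [NormedAddCommGroup V] [NormedSpace ℝ V] [StrictConvexSpace ℝ V] {p : ℝ}

lemma norm_half_smul_add_rpow_lt (hp : 1 < p) {a b : V} (hab : a ≠ b) :
    ‖(1 / 2 : ℝ) • (a + b)‖ ^ p < (‖a‖ ^ p + ‖b‖ ^ p) / 2 := by
  have hp0 : 0 < p := by linarith
  rcases eq_or_ne ‖a‖ ‖b‖ with hn | hn
  · rw [← hn, add_self_div_two]
    exact Real.rpow_lt_rpow (norm_nonneg _) ((norm_midpoint_lt_iff hn).2 hab) hp0
  · calc ‖(1 / 2 : ℝ) • (a + b)‖ ^ p ≤ (1 / 2 * ‖a‖ + 1 / 2 * ‖b‖) ^ p := by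
          rw [norm_smul, Real.norm_of_nonneg (by norm_num), ← mul_add]
          gcongr
          exact norm_add_le a b
      _ < 1 / 2 * ‖a‖ ^ p + 1 / 2 * ‖b‖ ^ p := by
          simpa only [smul_eq_mul] using (strictConvexOn_rpow hp).2 (norm_nonneg a) (norm_nonneg b)
            hn one_half_pos one_half_pos (by norm_num)
      _ = _ := by ring

lemma norm_half_smul_add_rpow_le (hp : 1 < p) (a b : V) :
    ‖(1 / 2 : ℝ) • (a + b)‖ ^ p ≤ (‖a‖ ^ p + ‖b‖ ^ p) / 2 := by
  rcases eq_or_ne a b with rfl | h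
  · rw [← two_smul ℝ a, smul_smul]
    norm_num
  · exact (norm_half_smul_add_rpow_lt hp h).le

variable [FiniteDimensional ℝ V]

lemma exists_le_sub_norm_half_smul_add_rpow (hp : 1 < p) {ε : ℝ} (hε : 0 < ε) :
    ∃ δ > 0, ∀ a b : V, ‖a‖ ^ p + ‖b‖ ^ p = 1 → ε ≤ ‖a - b‖ ^ p →
      δ ≤ 1 / 2 - ‖(1 / 2 : ℝ) • (a + b)‖ ^ p := by
  have hp0 : 0 < p := by linarith
  have : ProperSpace V := FiniteDimensional.proper ℝ V
  have hcont {f : V × V → V} (hf : Continuous f) : Continuous fun w => ‖f w‖ ^ p :=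
    hf.norm.rpow_const fun _ => Or.inr hp0.le
  set K : Set (V × V) := {w | ‖w.1‖ ^ p + ‖w.2‖ ^ p = 1 ∧ ε ≤ ‖w.1 - w.2‖ ^ p}
  have hK : IsCompact K := by
    refine isCompact_of_isClosed_isBounded ?_ ?_
    · exact (isClosed_eq ((hcont continuous_fst).add (hcont continuous_snd))
        continuous_const).inter
        (isClosed_le continuous_const (hcont (continuous_fst.sub continuous_snd)))
    · refine (isBounded_closedBall (x := (0 : V × V)) (r := 1)).subset fun w hw => ?_
      rw [mem_closedBall_zero_iff, Prod.norm_def]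
      exact max_le (norm_le_one_of_rpow_add_rpow_eq_one hp0 hw.1)
        (norm_le_one_of_rpow_add_rpow_eq_one hp0 ((add_comm _ _).trans hw.1))
  obtain ⟨δ, hδ, hle⟩ := hK.exists_forall_le' (a := 0)
    (f := fun w => 1 / 2 - ‖(1 / 2 : ℝ) • (w.1 + w.2)‖ ^ p)
    (continuous_const.sub (hcont (by fun_prop))).continuousOn fun w hw => by
      have hne : w.1 ≠ w.2 := by
        intro h
        have hzero := hw.2
        rw [h, sub_self, norm_zero, Real.zero_rpow hp0.ne'] at hzero
        linarith
      simpa [hw.1] using norm_half_smul_add_rpow_lt hp hne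
  exact ⟨δ, hδ, fun a b hab hε => hle (a, b) ⟨hab, hε⟩⟩

lemma eventually_norm_sub_rpow_le_of_eq_one (hp : 1 < p) {ε : ℝ} (hε : 0 < ε) :
    ∀ᶠ C : ℝ in atTop, ∀ a b : V, ‖a‖ ^ p + ‖b‖ ^ p = 1 →
      ‖a - b‖ ^ p + C * ‖(1 / 2 : ℝ) • (a + b)‖ ^ p ≤ ε + C / 2 := by
  obtain ⟨δ, hδ, hgap⟩ := exists_le_sub_norm_half_smul_add_rpow (V := V) hp hε
  filter_upwards [eventually_ge_atTop (2 ^ p / δ)] with C hC a b hab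
  have hp0 : 0 < p := by linarith
  have hC0 : 0 ≤ C := le_trans (by positivity) hC
  have hmid := norm_half_smul_add_rpow_le hp a b
  rw [hab] at hmid
  rcases lt_or_ge (‖a - b‖ ^ p) ε with hlt | hge
  · nlinarith
  · have hsub : ‖a - b‖ ^ p ≤ 2 ^ p := by
      have ha := norm_le_one_of_rpow_add_rpow_eq_one hp0 hab
      have hb := norm_le_one_of_rpow_add_rpow_eq_one hp0 ((add_comm _ _).trans hab)
      exact Real.rpow_le_rpow (norm_nonneg _) (by linarith [norm_sub_le a b]) hp0.le
    have hCδ := (div_le_iff₀ hδ).1 hC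
    nlinarith [mul_le_mul_of_nonneg_left (hgap a b hab hge) hC0]

lemma eventually_norm_sub_rpow_le (hp : 1 < p) {ε : ℝ} (hε : 0 < ε) :
    ∀ᶠ C : ℝ in atTop, ∀ a b : V, ‖a - b‖ ^ p + C * ‖(1 / 2 : ℝ) • (a + b)‖ ^ p ≤
      (ε + C / 2) * (‖a‖ ^ p + ‖b‖ ^ p) := by
  filter_upwards [eventually_norm_sub_rpow_le_of_eq_one (V := V) hp hε] with C hC a b
  have hp0 : 0 < p := by linarith
  set σ := ‖a‖ ^ p + ‖b‖ ^ p with hσ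
  rcases (show 0 ≤ σ by positivity).eq_or_lt' with h0 | hpos
  · have hab : ‖a‖ ^ p = 0 ∧ ‖b‖ ^ p = 0 :=
      (add_eq_zero_iff_of_nonneg (by positivity) (by positivity)).1 h0
    simp only [Real.rpow_eq_zero (norm_nonneg _) hp0.ne', norm_eq_zero] at hab
    simp [h0, hab.1, hab.2, Real.zero_rpow hp0.ne']
  · set s := σ ^ (-p⁻¹)
    have hs : 0 < s := Real.rpow_pos_of_pos hpos _
    have hscale (c : V) : ‖s • c‖ ^ p = σ⁻¹ * ‖c‖ ^ p := by
      rw [norm_smul, Real.norm_of_nonneg hs.le, Real.mul_rpow hs.le (norm_nonneg _),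
        ← Real.rpow_mul hpos.le, neg_mul, inv_mul_cancel₀ hp0.ne', Real.rpow_neg_one]
    have hunit := hC (s • a) (s • b) (by
      rw [hscale, hscale, ← mul_add, ← hσ, inv_mul_cancel₀ hpos.ne'])
    rw [← smul_sub, ← smul_add, smul_comm (1 / 2 : ℝ) s, hscale, hscale] at hunit
    calc ‖a - b‖ ^ p + C * ‖(1 / 2 : ℝ) • (a + b)‖ ^ p
        = σ * (σ⁻¹ * ‖a - b‖ ^ p + C * (σ⁻¹ * ‖(1 / 2 : ℝ) • (a + b)‖ ^ p)) := by
          field_simp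
      _ ≤ σ * (ε + C / 2) := by gcongr
      _ = _ := mul_comm _ _

lemma eventually_enorm_sub_rpow_le (hp : 1 < p) {ε : ℝ≥0} (hε : 0 < ε) :
    ∀ᶠ C : ℝ≥0 in atTop, ∀ a b : V, ‖a - b‖ₑ ^ p + C * ‖(1 / 2 : ℝ) • (a + b)‖ₑ ^ p ≤
      (ε + C / 2) * (‖a‖ₑ ^ p + ‖b‖ₑ ^ p) := by
  have hreal := eventually_norm_sub_rpow_le (V := V) hp (NNReal.coe_pos.2 hε)
  filter_upwards [NNReal.tendsto_coe_atTop.2 tendsto_id |>.eventually hreal] with C hC a b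
  have hp0 : 0 ≤ p := by linarith
  have hnn : ‖a - b‖₊ ^ p + C * ‖(1 / 2 : ℝ) • (a + b)‖₊ ^ p ≤
      (ε + C / 2) * (‖a‖₊ ^ p + ‖b‖₊ ^ p) := by
    exact_mod_cast hC a b
  simp only [enorm_eq_nnnorm, ← ENNReal.coe_rpow_of_nonneg _ hp0]
  have hC2 : (C : ℝ≥0∞) / 2 = (C / 2 : ℝ≥0) := by simp
  rw [hC2]
  exact_mod_cast hnn

end StrictConvex

/-- Points of the sublevel sets of `Φ` in `S` at which midpoint convexity is almost an equality are
close to each other, their distance being measured by `Φ (a - b)`. -/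
def IsUniformlyMidconvexOn {X : Type*} [AddCommGroup X] [Module ℝ X] (S : Set X)
    (Φ : X → ℝ≥0∞) : Prop :=
  ∀ B ≠ ⊤, ∀ ε > 0, ∃ δ > 0, ∀ a ∈ S, ∀ b ∈ S, Φ a ≤ B → Φ b ≤ B →
    (Φ a + Φ b) / 2 ≤ Φ ((1 / 2 : ℝ) • (a + b)) + δ → Φ (a - b) ≤ ε

lemma IsUniformlyMidconvexOn.mono {X : Type*} [AddCommGroup X] [Module ℝ X] {S S' : Set X}
    {Φ : X → ℝ≥0∞} (h : IsUniformlyMidconvexOn S Φ) (hS : S' ⊆ S) :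
    IsUniformlyMidconvexOn S' Φ := fun B hB ε hε => by
  obtain ⟨δ, hδ, hclose⟩ := h B hB ε hε
  exact ⟨δ, hδ, fun a ha b hb => hclose a (hS ha) b (hS hb)⟩

lemma tendsto_inv_add_one_nhds_zero :
    Tendsto (fun n : ℕ => (n + 1 : ℝ≥0∞)⁻¹) atTop (𝓝 0) := by
  exact_mod_cast ENNReal.tendsto_inv_nat_nhds_zero.comp (tendsto_add_atTop_nat 1)

lemma exists_iSup_add_inv_lt {a : ℕ → ℝ≥0∞} (ha : Monotone a) (hL : ⨆ n, a n ≠ ⊤) {δ : ℝ≥0∞}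
    (hδ : 0 < δ) : ∃ N : ℕ, (⨆ n, a n) + (N + 1 : ℝ≥0∞)⁻¹ < a N + δ := by
  have hleft := tendsto_inv_add_one_nhds_zero.const_add (⨆ n, a n)
  rw [add_zero] at hleft
  exact (hleft.eventually_lt ((tendsto_atTop_iSup ha).add_const δ)
    (ENNReal.lt_add_right hL hδ.ne')).exists

/-- Almost minimizers of `Φ` on `H n` form a Cauchy sequence, since the midpoint of two of them
competes with both. -/
lemma IsUniformlyMidconvexOn.exists_tendsto_sub {X : Type*} [AddCommGroup X] [Module ℝ X]
    {H : ℕ → Set X} {Φ : X → ℝ≥0∞} {l : ℝ≥0∞} (hΦ : IsUniformlyMidconvexOn (H 0) Φ)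
    (hH : ∀ n, Convex ℝ (H n)) (hanti : Antitone H) (hl : l ≠ ⊤)
    (hinf : ∀ n, ⨅ x ∈ H n, Φ x ≤ l) :
    ∃ w : ℕ → X, (∀ n, w n ∈ H n) ∧ (∀ n, Φ (w n) ≤ l + (n + 1 : ℝ≥0∞)⁻¹) ∧
      Tendsto (fun k : ℕ × ℕ => Φ (w k.1 - w k.2)) atTop (𝓝 0) := by
  set a : ℕ → ℝ≥0∞ := fun n => ⨅ x ∈ H n, Φ x
  have ha : Monotone a := fun n m hnm => biInf_mono (hanti hnm)
  set L := ⨆ n, a n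
  have hLl : L ≤ l := iSup_le hinf
  have hL : L ≠ ⊤ := ne_top_of_le_ne_top hl hLl
  have hchoose (n : ℕ) : ∃ x ∈ H n, Φ x < a n + (n + 1 : ℝ≥0∞)⁻¹ := by
    have hlt : a n < a n + (n + 1 : ℝ≥0∞)⁻¹ := ENNReal.lt_add_right
      (ne_top_of_le_ne_top hl (hinf n)) (ENNReal.inv_ne_zero.2 (by finiteness))
    simpa only [a, iInf_lt_iff, exists_prop] using hlt
  choose w hw hwa using hchoose
  have hwL (N n : ℕ) (hn : N ≤ n) : Φ (w n) ≤ L + (N + 1 : ℝ≥0∞)⁻¹ :=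
    (hwa n).le.trans (by gcongr; exact le_iSup a n)
  refine ⟨w, hw, fun n => (hwL n n le_rfl).trans (by gcongr), ENNReal.tendsto_nhds_zero.2
    fun ε hε => ?_⟩
  obtain ⟨δ, hδ, hclose⟩ := hΦ (L + 1) (by finiteness) ε hε
  obtain ⟨N, hN⟩ := exists_iSup_add_inv_lt ha hL hδ
  have hone : (N + 1 : ℝ≥0∞)⁻¹ ≤ 1 := ENNReal.inv_le_one.2 le_add_self
  filter_upwards [eventually_ge_atTop (N, N)] with ⟨m, n⟩ ⟨hm, hn⟩
  have hbound (k : ℕ) (hk : N ≤ k) : Φ (w k) ≤ L + 1 := (hwL N k hk).trans (by gcongr)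
  refine hclose _ (hanti m.zero_le (hw m)) _ (hanti n.zero_le (hw n)) (hbound m hm)
    (hbound n hn) ?_
  have hmid : (1 / 2 : ℝ) • (w m + w n) ∈ H N := by
    rw [smul_add]
    exact hH N (hanti hm (hw m)) (hanti hn (hw n)) (by norm_num) (by norm_num) (by norm_num)
  calc (Φ (w m) + Φ (w n)) / 2
      ≤ ((L + (N + 1 : ℝ≥0∞)⁻¹) + (L + (N + 1 : ℝ≥0∞)⁻¹)) / 2 := by
        gcongr
        exacts [hwL N m hm, hwL N n hn]
    _ = L + (N + 1 : ℝ≥0∞)⁻¹ := by rw [← mul_two, ENNReal.mul_div_cancel_right (by simp) (by simp)]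
    _ ≤ a N + δ := hN.le
    _ ≤ Φ ((1 / 2 : ℝ) • (w m + w n)) + δ := by
        gcongr
        exact iInf₂_le _ hmid

/-! ### Sobolev functions as limits of smooth functions -/

section Gradient

variable {E : Type*} [NormedAddCommGroup E] [InnerProductSpace ℝ E] [CompleteSpace E] {φ ψ : E → ℝ}

lemma continuous_gradient {n : WithTop ℕ∞} (hφ : ContDiff ℝ n φ) (hn : n ≠ 0) :
    Continuous (gradient φ) :=
  (InnerProductSpace.toDual ℝ E).symm.continuous.comp (hφ.continuous_fderiv hn)

lemma norm_gradient (φ : E → ℝ) (x : E) : ‖gradient φ x‖ = ‖fderiv ℝ φ x‖ := by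
  rw [gradient, LinearIsometryEquiv.norm_map]

lemma gradient_add (hφ : Differentiable ℝ φ) (hψ : Differentiable ℝ ψ) :
    gradient (φ + ψ) = gradient φ + gradient ψ := by
  funext x
  simp only [Pi.add_apply, gradient, fderiv_add (hφ x) (hψ x), map_add]

lemma gradient_const_smul (hφ : Differentiable ℝ φ) (c : ℝ) :
    gradient (c • φ) = c • gradient φ := by
  funext x
  simp [gradient, fderiv_const_smul (hφ x) c]

lemma gradient_sub (hφ : Differentiable ℝ φ) (hψ : Differentiable ℝ ψ) :
    gradient (φ - ψ) = gradient φ - gradient ψ := by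
  funext x
  simp only [Pi.sub_apply, gradient, fderiv_sub (hφ x) (hψ x), map_sub]

end Gradient

lemma memLp_restrict_of_continuous {X F : Type*} [PseudoMetricSpace X] [ProperSpace X]
    [MeasurableSpace X] [OpensMeasurableSpace X] [NormedAddCommGroup F] {μ : Measure X} {s : Set X}
    {f : X → F} (hf : Continuous f) (hs : Bornology.IsBounded s) (hsm : MeasurableSet s)
    (hμs : μ s < ⊤) (p : ℝ≥0∞) : MemLp f p (μ.restrict s) := by
  obtain ⟨C, hC⟩ := hs.isCompact_closure.exists_bound_of_continuousOn hf.continuousOn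
  have : IsFiniteMeasure (μ.restrict s) := ⟨by rwa [Measure.restrict_apply_univ]⟩
  refine MemLp.of_bound hf.aestronglyMeasurable C ?_
  filter_upwards [ae_restrict_mem hsm] with x hx using hC x (subset_closure hx)

lemma tendsto_integral_mul_of_tendsto_eLpNorm {X : Type*} [MeasurableSpace X] {μ : Measure X}
    [IsFiniteMeasure μ] {p : ℝ≥0∞} (hp : 1 ≤ p) (hp' : p ≠ ⊤) {f : ℕ → X → ℝ} {g h : X → ℝ} {B : ℝ}
    (hf : ∀ n, MemLp (f n) p μ) (hg : MemLp g p μ) (hh : AEStronglyMeasurable h μ)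
    (hB : ∀ x, ‖h x‖ ≤ B) (hlim : Tendsto (fun n => eLpNorm (f n - g) p μ) atTop (𝓝 0)) :
    Tendsto (fun n => ∫ x, f n x * h x ∂μ) atTop (𝓝 (∫ x, g x * h x ∂μ)) := by
  have hL1 := tendsto_eLpNorm_of_exponent_le le_rfl hp hp' (fun n => (hf n).1.sub hg.1) hlim
  have hint {k : X → ℝ} (hk : MemLp k p μ) : Integrable (fun x => k x * h x) μ :=
    (hk.integrable hp).mul_bdd hh (ae_of_all _ hB)
  refine tendsto_integral_of_L1' _ (hint hg).1 (Eventually.of_forall fun n => hint (hf n)) ?_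
  have hmul := ENNReal.Tendsto.const_mul hL1 (a := ENNReal.ofReal B)
    (Or.inr ENNReal.ofReal_ne_top)
  rw [mul_zero] at hmul
  refine tendsto_of_tendsto_of_tendsto_of_le_of_le tendsto_const_nhds hmul (fun _ => zero_le)
    fun n => ?_
  refine eLpNorm_le_mul_eLpNorm_of_ae_le_mul (ae_of_all _ fun x => ?_) 1
  simp only [Pi.sub_apply]
  rw [← sub_mul, norm_mul, mul_comm]
  gcongr
  exact hB x

lemma TraceBounded.tendsto_eLpNorm {E : Type*} [NormedAddCommGroup E] [NormedSpace ℝ E]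
    [MeasurableSpace E] {μ ν : Measure E} {p r : ℝ≥0∞} (h : TraceBounded p r μ ν) {ι : Type*}
    {l : Filter ι} {φ : ι → E → ℝ} (hφ : ∀ i, ContDiff ℝ 1 (φ i))
    (hlim : Tendsto (fun i => smoothW1pNorm p μ (φ i)) l (𝓝 0)) :
    Tendsto (fun i => eLpNorm (φ i) r ν) l (𝓝 0) := by
  obtain ⟨C, hC⟩ := h
  refine tendsto_of_tendsto_of_tendsto_of_le_of_le tendsto_const_nhds ?_ (fun _ => zero_le)
    fun i => hC _ (hφ i)
  simpa using ENNReal.Tendsto.const_mul hlim (Or.inr ENNReal.coe_ne_top)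

section Sobolev

variable {N : ℕ} {Ω : Set (Euc N)} {p r : ℝ} {u : Euc N → ℝ} {g : Euc N → Euc N} {T : Euc N → ℝ}
  {φ ψ : ℕ → Euc N → ℝ}

lemma smoothW1pNorm_eq_add_eLpNorm_gradient {μ : Measure (Euc N)} {p : ℝ≥0∞} (φ : Euc N → ℝ) :
    smoothW1pNorm p μ φ = eLpNorm φ p μ + eLpNorm (gradient φ) p μ := by
  rw [smoothW1pNorm, eLpNorm_congr_norm_ae (ae_of_all _ (norm_gradient φ))]

lemma TendstoW1p.tendsto_smoothW1pNorm_sub (hp : 1 ≤ p)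
    (hu : AEStronglyMeasurable u (volume.restrict Ω))
    (hg : AEStronglyMeasurable g (volume.restrict Ω)) (hφ : ∀ n, ContDiff ℝ ∞ (φ n))
    (hψ : ∀ n, ContDiff ℝ ∞ (ψ n)) (hφu : TendstoW1p Ω p φ u g) (hψu : TendstoW1p Ω p ψ u g) :
    Tendsto (fun k : ℕ × ℕ => smoothW1pNorm (ENNReal.ofReal p) (volume.restrict Ω)
      (φ k.1 - ψ k.2)) atTop (𝓝 0) := by
  have hp1 : 1 ≤ ENNReal.ofReal p := by simpa using hp
  have hsum := ((hφu.1.comp tendsto_fst).add (hψu.1.comp tendsto_snd)).add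
    ((hφu.2.comp tendsto_fst).add (hψu.2.comp tendsto_snd))
  rw [prod_atTop_atTop_eq, add_zero, add_zero] at hsum
  refine tendsto_of_tendsto_of_tendsto_of_le_of_le tendsto_const_nhds hsum (fun _ => zero_le)
    fun ⟨m, n⟩ => ?_
  have hm := hφ m
  have hn := hψ n
  dsimp only
  rw [smoothW1pNorm_eq_add_eLpNorm_gradient,
    gradient_sub (hm.differentiable (by simp)) (hn.differentiable (by simp)),
    ← sub_sub_sub_cancel_right (φ m) (ψ n) u,
    ← sub_sub_sub_cancel_right (gradient (φ m)) (gradient (ψ n)) g]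
  exact add_le_add
    (eLpNorm_sub_le (hm.continuous.aestronglyMeasurable.sub hu)
      (hn.continuous.aestronglyMeasurable.sub hu) hp1)
    (eLpNorm_sub_le ((continuous_gradient hm (by simp)).aestronglyMeasurable.sub hg)
      ((continuous_gradient hn (by simp)).aestronglyMeasurable.sub hg) hp1)

lemma TendstoW1p.tendsto_eLpNorm_surf_sub
    (hbd : TraceBounded (ENNReal.ofReal p) (ENNReal.ofReal r) (volume.restrict Ω) (surf Ω))
    (hp : 1 ≤ p) (hu : AEStronglyMeasurable u (volume.restrict Ω))
    (hg : AEStronglyMeasurable g (volume.restrict Ω)) (hφ : ∀ n, ContDiff ℝ ∞ (φ n))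
    (hψ : ∀ n, ContDiff ℝ ∞ (ψ n)) (hφu : TendstoW1p Ω p φ u g) (hψu : TendstoW1p Ω p ψ u g) :
    Tendsto (fun k : ℕ × ℕ => eLpNorm (φ k.1 - ψ k.2) (ENNReal.ofReal r) (surf Ω)) atTop (𝓝 0) :=
  hbd.tendsto_eLpNorm (fun k => ((hφ k.1).sub (hψ k.2)).of_le (by simp))
    (hφu.tendsto_smoothW1pNorm_sub hp hu hg hφ hψ hψu)

lemma memLp_surf_of_continuous [IsFiniteMeasure (surf Ω)] (hb : Bornology.IsBounded Ω)
    {φ : Euc N → ℝ} (hφ : Continuous φ) (r : ℝ≥0∞) : MemLp φ r (surf Ω) :=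
  memLp_restrict_of_continuous hφ (hb.closure.subset frontier_subset_closure)
    isClosed_frontier.measurableSet
    (by simpa [surf] using measure_lt_top (surf Ω) univ) r

lemma IsTrace.exists_tendsto_eLpNorm [IsFiniteMeasure (surf Ω)] (hT : IsTrace Ω p u g T)
    (hbd : TraceBounded (ENNReal.ofReal p) (ENNReal.ofReal r) (volume.restrict Ω) (surf Ω))
    (hb : Bornology.IsBounded Ω) (hp : 1 ≤ p) (hpr : p ≤ r)
    (hu : AEStronglyMeasurable u (volume.restrict Ω))
    (hg : AEStronglyMeasurable g (volume.restrict Ω)) :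
    MemLp T (ENNReal.ofReal r) (surf Ω) ∧ ∃ ψ : ℕ → Euc N → ℝ, (∀ n, ContDiff ℝ ∞ (ψ n)) ∧
      TendstoW1p Ω p ψ u g ∧
      Tendsto (fun n => eLpNorm (ψ n - T) (ENNReal.ofReal r) (surf Ω)) atTop (𝓝 0) := by
  obtain ⟨hTp, ψ, hψ, hψu, hψT⟩ := hT
  have hp1 : 1 ≤ ENNReal.ofReal p := by simpa using hp
  have hpr1 : ENNReal.ofReal p ≤ ENNReal.ofReal r := ENNReal.ofReal_le_ofReal hpr
  have hψmem (n : ℕ) := memLp_surf_of_continuous hb (hψ n).continuous (ENNReal.ofReal r)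
  obtain ⟨T', -, hT', hlim⟩ := CauchySeqLp.exists_tendsto (hp1.trans hpr1) hψmem
    (hψu.tendsto_eLpNorm_surf_sub hbd hp hu hg hψ hψ hψu)
  have hlimp := tendsto_eLpNorm_of_exponent_le hp1 hpr1 ENNReal.ofReal_ne_top
    (fun n => (hψmem n).1.sub hT'.1) hlim
  have hae : T' =ᵐ[surf Ω] T :=
    ae_eq_of_tendsto_eLpNorm hp1 (fun n => (hψmem n).1) hT'.1 hTp.1 hlimp hψT
  exact ⟨hT'.ae_eq hae, ψ, hψ, hψu, hlim.congr fun n => eLpNorm_congr_ae (.sub .rfl hae)⟩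

lemma IsTrace.tendsto_eLpNorm [IsFiniteMeasure (surf Ω)] (hT : IsTrace Ω p u g T)
    (hbd : TraceBounded (ENNReal.ofReal p) (ENNReal.ofReal r) (volume.restrict Ω) (surf Ω))
    (hb : Bornology.IsBounded Ω) (hp : 1 ≤ p) (hpr : p ≤ r)
    (hu : AEStronglyMeasurable u (volume.restrict Ω))
    (hg : AEStronglyMeasurable g (volume.restrict Ω)) (hφ : ∀ n, ContDiff ℝ ∞ (φ n))
    (hφu : TendstoW1p Ω p φ u g) :
    Tendsto (fun n => eLpNorm (φ n - T) (ENNReal.ofReal r) (surf Ω)) atTop (𝓝 0) := by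
  have hr1 : 1 ≤ ENNReal.ofReal r := by simpa using hp.trans hpr
  obtain ⟨hTr, ψ, hψ, hψu, hψT⟩ := hT.exists_tendsto_eLpNorm hbd hb hp hpr hu hg
  have hdiff := (hφu.tendsto_eLpNorm_surf_sub hbd hp hu hg hφ hψ hψu).comp tendsto_atTop_diagonal
  refine tendsto_of_tendsto_of_tendsto_of_le_of_le tendsto_const_nhds
    (by simpa using hdiff.add hψT) (fun _ => zero_le) fun n => ?_
  simp only [← sub_add_sub_cancel (φ n) (ψ n) T]
  exact eLpNorm_add_le ((hφ n).continuous.sub (hψ n).continuous).aestronglyMeasurable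
    ((hψ n).continuous.aestronglyMeasurable.sub hTr.1) hr1

lemma isWeakGradient_gradient {φ : Euc N → ℝ} (hφ : ContDiff ℝ ∞ φ) :
    IsWeakGradient Ω φ (gradient φ) := by
  intro ψ hψ hψc hψΩ v
  have hdφ : Continuous fun x => fderiv ℝ φ x v :=
    (hφ.continuous_fderiv (by simp)).clm_apply continuous_const
  have hdψ : Continuous fun x => fderiv ℝ ψ x v :=
    (hψ.continuous_fderiv (by simp)).clm_apply continuous_const
  have hψzero (x : Euc N) (hx : x ∉ Ω) : ψ x = 0 :=
    image_eq_zero_of_notMem_tsupport fun h => hx (hψΩ h)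
  have hdψzero (x : Euc N) (hx : x ∉ Ω) : fderiv ℝ ψ x v = 0 := by
    have : fderiv ℝ ψ x = 0 :=
      image_eq_zero_of_notMem_tsupport fun h => hx (hψΩ (tsupport_fderiv_subset ℝ h))
    rw [this, zero_apply]
  rw [setIntegral_eq_integral_of_forall_compl_eq_zero fun x hx => by rw [hdψzero x hx, mul_zero],
    setIntegral_eq_integral_of_forall_compl_eq_zero fun x hx => by rw [hψzero x hx, zero_mul],
    integral_mul_fderiv_eq_neg_fderiv_mul_of_integrable]
  · simp_rw [inner_gradient_left, mul_comm]
  · exact (hdφ.mul hψ.continuous).integrable_of_hasCompactSupport hψc.mul_left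
  · exact (hφ.continuous.mul hdψ).integrable_of_hasCompactSupport (hψc.fderiv_apply ℝ v).mul_left
  · exact (hφ.continuous.mul hψ.continuous).integrable_of_hasCompactSupport hψc.mul_left
  · exact fun x _ => hφ.differentiable (by simp) x
  · exact fun x _ => hψ.differentiable (by simp) x

lemma memLp_restrict_of_contDiff (hΩ : IsOpen Ω) (hb : Bornology.IsBounded Ω) {φ : Euc N → ℝ}
    (hφ : ContDiff ℝ ∞ φ) (p : ℝ≥0∞) :
    MemLp φ p (volume.restrict Ω) ∧ MemLp (gradient φ) p (volume.restrict Ω) :=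
  ⟨memLp_restrict_of_continuous hφ.continuous hb hΩ.measurableSet hb.measure_lt_top p,
    memLp_restrict_of_continuous (continuous_gradient hφ (by simp)) hb hΩ.measurableSet
      hb.measure_lt_top p⟩

lemma memW1p_of_contDiff (hΩ : IsOpen Ω) (hb : Bornology.IsBounded Ω) {φ : Euc N → ℝ}
    (hφ : ContDiff ℝ ∞ φ) : MemW1p Ω p φ (gradient φ) :=
  ⟨(memLp_restrict_of_contDiff hΩ hb hφ _).1, (memLp_restrict_of_contDiff hΩ hb hφ _).2,
    isWeakGradient_gradient hφ⟩

lemma isTrace_of_contDiff [IsFiniteMeasure (surf Ω)] (hb : Bornology.IsBounded Ω) {φ : Euc N → ℝ}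
    (hφ : ContDiff ℝ ∞ φ) : IsTrace Ω p φ (gradient φ) φ :=
  ⟨memLp_surf_of_continuous hb hφ.continuous _, fun _ => φ, fun _ => hφ,
    ⟨by simp, by simp⟩, by simp⟩

lemma tendsto_eLpNorm_inner_const_sub {μ : Measure (Euc N)} {p : ℝ≥0∞} {f : ℕ → Euc N → Euc N}
    (hlim : Tendsto (fun n => eLpNorm (f n - g) p μ) atTop (𝓝 0)) (v : Euc N) :
    Tendsto (fun n => eLpNorm ((fun x => ⟪f n x, v⟫) - fun x => ⟪g x, v⟫) p μ) atTop (𝓝 0) := by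
  have hmul := ENNReal.Tendsto.const_mul hlim (a := ENNReal.ofReal ‖v‖)
    (Or.inr ENNReal.ofReal_ne_top)
  rw [mul_zero] at hmul
  refine tendsto_of_tendsto_of_tendsto_of_le_of_le tendsto_const_nhds hmul (fun _ => zero_le)
    fun n => ?_
  refine eLpNorm_le_mul_eLpNorm_of_ae_le_mul (ae_of_all _ fun x => ?_) _
  rw [Pi.sub_apply, ← inner_sub_left, mul_comm]
  exact norm_inner_le_norm _ _

lemma TendstoW1p.memW1p (hlim : TendstoW1p Ω p φ u g) (hΩ : IsOpen Ω)
    (hb : Bornology.IsBounded Ω) (hp : 1 ≤ p) (hφ : ∀ n, ContDiff ℝ ∞ (φ n))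
    (hu : MemLp u (ENNReal.ofReal p) (volume.restrict Ω))
    (hg : MemLp g (ENNReal.ofReal p) (volume.restrict Ω)) : MemW1p Ω p u g := by
  refine ⟨hu, hg, fun ψ hψ hψc hψΩ v => ?_⟩
  have hp1 : 1 ≤ ENNReal.ofReal p := by simpa using hp
  have : IsFiniteMeasure (volume.restrict Ω) :=
    ⟨by rw [Measure.restrict_apply_univ]; exact hb.measure_lt_top⟩
  have hdψ : Continuous fun x => fderiv ℝ ψ x v :=
    (hψ.continuous_fderiv (by simp)).clm_apply continuous_const
  obtain ⟨B, hB⟩ := hdψ.bounded_above_of_compact_support (hψc.fderiv_apply ℝ v)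
  obtain ⟨B', hB'⟩ := hψ.continuous.bounded_above_of_compact_support hψc
  have hφmem (n : ℕ) := memLp_restrict_of_contDiff hΩ hb (hφ n) (ENNReal.ofReal p)
  have hleft := tendsto_integral_mul_of_tendsto_eLpNorm hp1 ENNReal.ofReal_ne_top
    (fun n => (hφmem n).1) hu hdψ.aestronglyMeasurable hB hlim.1
  have hright := tendsto_integral_mul_of_tendsto_eLpNorm hp1 ENNReal.ofReal_ne_top
    (fun n => (hφmem n).2.inner_const v) (hg.inner_const v) hψ.continuous.aestronglyMeasurable hB'
    (tendsto_eLpNorm_inner_const_sub hlim.2 v)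
  simp_rw [mul_comm (ψ _)]
  refine tendsto_nhds_unique hleft (hright.neg.congr fun n => ?_)
  rw [isWeakGradient_gradient (hφ n) ψ hψ hψc hψΩ v]
  simp_rw [mul_comm]

end Sobolev

/-! ### The Sobolev energy -/

section Energy

variable {N : ℕ} {Ω : Set (Euc N)} {p r : ℝ} {u : Euc N → ℝ} {g : Euc N → Euc N} {T : Euc N → ℝ}
  {φ : ℕ → Euc N → ℝ}

lemma sobolevEnergy_eq_eLpNorm_rpow (hp : 0 < p)
    (hu : AEStronglyMeasurable u (volume.restrict Ω)) :
    sobolevEnergy Ω p u g = eLpNorm g (ENNReal.ofReal p) (volume.restrict Ω) ^ p +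
      eLpNorm u (ENNReal.ofReal p) (volume.restrict Ω) ^ p := by
  rw [sobolevEnergy, lintegral_add_right' _ (hu.enorm.pow_const p)]
  simp only [eLpNorm_eq_lintegral_rpow_enorm_toReal (p := ENNReal.ofReal p) (by simpa using hp)
    ENNReal.ofReal_ne_top, ENNReal.toReal_ofReal hp.le, one_div]
  rw [ENNReal.rpow_inv_rpow hp.ne', ENNReal.rpow_inv_rpow hp.ne']

lemma sobolevEnergy_ne_top (hp : 0 < p) (hu : MemLp u (ENNReal.ofReal p) (volume.restrict Ω))
    (hg : MemLp g (ENNReal.ofReal p) (volume.restrict Ω)) : sobolevEnergy Ω p u g ≠ ⊤ := by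
  rw [sobolevEnergy_eq_eLpNorm_rpow hp hu.1]
  exact ENNReal.add_ne_top.2 ⟨ENNReal.rpow_ne_top_of_nonneg hp.le hg.eLpNorm_ne_top,
    ENNReal.rpow_ne_top_of_nonneg hp.le hu.eLpNorm_ne_top⟩

lemma eLpNorm_le_sobolevEnergy_rpow_inv (hp : 0 < p)
    (hu : AEStronglyMeasurable u (volume.restrict Ω)) :
    eLpNorm u (ENNReal.ofReal p) (volume.restrict Ω) ≤ sobolevEnergy Ω p u g ^ p⁻¹ ∧
      eLpNorm g (ENNReal.ofReal p) (volume.restrict Ω) ≤ sobolevEnergy Ω p u g ^ p⁻¹ := by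
  rw [ENNReal.le_rpow_inv_iff hp, ENNReal.le_rpow_inv_iff hp, sobolevEnergy_eq_eLpNorm_rpow hp hu]
  exact ⟨le_add_self, le_self_add⟩

lemma sobolevEnergy_const_smul (hp : 0 ≤ p) (c : ℝ) (u : Euc N → ℝ) (g : Euc N → Euc N) :
    sobolevEnergy Ω p (c • u) (c • g) = ‖c‖ₑ ^ p * sobolevEnergy Ω p u g := by
  simp only [sobolevEnergy, Pi.smul_apply, enorm_smul, ENNReal.mul_rpow_of_nonneg _ _ hp, ← mul_add]
  exact lintegral_const_mul' _ _ (ENNReal.rpow_ne_top_of_nonneg hp enorm_ne_top)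

lemma TendstoW1p.tendsto_sobolevEnergy (hφu : TendstoW1p Ω p φ u g) (hp : 1 ≤ p)
    (hφ : ∀ n, ContDiff ℝ ∞ (φ n)) (hu : MemLp u (ENNReal.ofReal p) (volume.restrict Ω))
    (hg : MemLp g (ENNReal.ofReal p) (volume.restrict Ω)) :
    Tendsto (fun n => sobolevEnergy Ω p (φ n) (gradient (φ n))) atTop
      (𝓝 (sobolevEnergy Ω p u g)) := by
  have hp1 : 1 ≤ ENNReal.ofReal p := by simpa using hp
  have hp0 : 0 < p := zero_lt_one.trans_le hp
  have hmeas (n : ℕ) : AEStronglyMeasurable (φ n) (volume.restrict Ω) :=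
    (hφ n).continuous.aestronglyMeasurable
  have hmeas' (n : ℕ) : AEStronglyMeasurable (gradient (φ n)) (volume.restrict Ω) :=
    (continuous_gradient (hφ n) (by simp)).aestronglyMeasurable
  simp_rw [sobolevEnergy_eq_eLpNorm_rpow hp0 hu.1,
    fun n => sobolevEnergy_eq_eLpNorm_rpow (g := gradient (φ n)) hp0 (hmeas n)]
  exact ((tendsto_eLpNorm_of_tendsto_eLpNorm_sub hp1 hmeas' hg hφu.2).ennrpow_const p).add
    ((tendsto_eLpNorm_of_tendsto_eLpNorm_sub hp1 hmeas hu hφu.1).ennrpow_const p)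

lemma MemW1p.memW1p0_of_sobolevEnergy_eq_zero (h : MemW1p Ω p u g) (hp : 0 < p)
    (h0 : sobolevEnergy Ω p u g = 0) : MemW1p0 Ω p u g := by
  rw [sobolevEnergy_eq_eLpNorm_rpow hp h.1.1, add_eq_zero, ENNReal.rpow_eq_zero_iff_of_pos hp,
    ENNReal.rpow_eq_zero_iff_of_pos hp] at h0
  have hgrad (x : Euc N) : gradient (fun _ : Euc N => (0 : ℝ)) x = 0 := by simp [gradient]
  have hu : eLpNorm (fun x => -u x) (ENNReal.ofReal p) (volume.restrict Ω) = 0 :=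
    (eLpNorm_neg u _ _).trans h0.2
  have hg : eLpNorm (fun x => -g x) (ENNReal.ofReal p) (volume.restrict Ω) = 0 :=
    (eLpNorm_neg g _ _).trans h0.1
  refine ⟨h, fun _ _ => 0, fun n => ⟨contDiff_const, .zero, ?_⟩, ?_, ?_⟩
  · exact (tsupport_eq_empty_iff.2 rfl).trans_subset (empty_subset _)
  · simp only [zero_sub, hu, tendsto_const_nhds]
  · simp only [hgrad, zero_sub, hg, tendsto_const_nhds]

lemma IsTrace.ae_eq_zero_of_memW1p0 [IsFiniteMeasure (surf Ω)] (hT : IsTrace Ω p u g T)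
    (hbd : TraceBounded (ENNReal.ofReal p) (ENNReal.ofReal r) (volume.restrict Ω) (surf Ω))
    (hΩ : IsOpen Ω) (hb : Bornology.IsBounded Ω) (hp : 1 ≤ p) (hpr : p ≤ r)
    (h0 : MemW1p0 Ω p u g) : T =ᵐ[surf Ω] 0 := by
  obtain ⟨hW, φ, hφ, hφu⟩ := h0
  have hlim := hT.tendsto_eLpNorm hbd hb hp hpr hW.1.1 hW.2.1.1 (fun n => (hφ n).1) hφu
  have hφzero (n : ℕ) : φ n =ᵐ[surf Ω] 0 := by
    filter_upwards [ae_restrict_mem isClosed_frontier.measurableSet] with x hx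
    rw [hΩ.frontier_eq] at hx
    exact image_eq_zero_of_notMem_tsupport fun h => hx.2 ((hφ n).2.2 h)
  have hnorm (n : ℕ) : eLpNorm (φ n - T) (ENNReal.ofReal r) (surf Ω) =
      eLpNorm T (ENNReal.ofReal r) (surf Ω) := by
    rw [eLpNorm_congr_ae ((hφzero n).sub .rfl), zero_sub, eLpNorm_neg]
  simp_rw [hnorm] at hlim
  refine (eLpNorm_eq_zero_iff hT.1.1 ?_).1 (tendsto_nhds_unique tendsto_const_nhds hlim)
  simpa using zero_lt_one.trans_le (hp.trans hpr)

lemma exists_tendstoW1p_of_tendsto_sobolevEnergy_sub (hΩ : IsOpen Ω) (hb : Bornology.IsBounded Ω)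
    (hp : 1 ≤ p) (hφ : ∀ n, ContDiff ℝ ∞ (φ n))
    (hcauchy : Tendsto (fun k : ℕ × ℕ =>
      sobolevEnergy Ω p (φ k.1 - φ k.2) (gradient (φ k.1 - φ k.2))) atTop (𝓝 0)) :
    ∃ u g, MemW1p Ω p u g ∧ TendstoW1p Ω p φ u g := by
  have hp1 : 1 ≤ ENNReal.ofReal p := by simpa using hp
  have hp0 : 0 < p := zero_lt_one.trans_le hp
  have hroot := hcauchy.ennrpow_const p⁻¹
  rw [ENNReal.zero_rpow_of_pos (inv_pos.2 hp0)] at hroot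
  have hle (k : ℕ × ℕ) := eLpNorm_le_sobolevEnergy_rpow_inv (Ω := Ω) hp0
    (u := φ k.1 - φ k.2) (g := gradient (φ k.1 - φ k.2))
    ((hφ k.1).continuous.sub (hφ k.2).continuous).aestronglyMeasurable
  have hdiff (n : ℕ) : Differentiable ℝ (φ n) := (hφ n).differentiable (by simp)
  obtain ⟨u, -, hu, hφu⟩ := CauchySeqLp.exists_tendsto hp1
    (fun n => (memLp_restrict_of_contDiff hΩ hb (hφ n) _).1)
    (tendsto_of_tendsto_of_tendsto_of_le_of_le tendsto_const_nhds hroot (fun _ => zero_le)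
      fun k => (hle k).1)
  obtain ⟨g, -, hg, hφg⟩ := CauchySeqLp.exists_tendsto hp1
    (fun n => (memLp_restrict_of_contDiff hΩ hb (hφ n) _).2)
    (tendsto_of_tendsto_of_tendsto_of_le_of_le tendsto_const_nhds hroot (fun _ => zero_le)
      fun k => by rw [← gradient_sub (hdiff _) (hdiff _)]; exact (hle k).2)
  exact ⟨u, g, TendstoW1p.memW1p ⟨hφu, hφg⟩ hΩ hb hp hφ hu hg, hφu, hφg⟩

/-! ### Uniform convexity of the energy -/

lemma isUniformlyMidconvexOn_of_forall_exists_le {V : Type*} [AddCommGroup V] [Module ℝ V]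
    {S : Set V} {Φ : V → ℝ≥0∞}
    (h : ∀ ε : ℝ≥0, 0 < ε → ∃ C : ℝ≥0, ∀ a ∈ S, ∀ b ∈ S,
      Φ (a - b) + C * Φ ((1 / 2 : ℝ) • (a + b)) ≤ (ε + C / 2) * (Φ a + Φ b)) :
    IsUniformlyMidconvexOn S Φ := by
  intro B hB ε hε
  obtain ⟨ε', hε', hε'B⟩ := ENNReal.exists_nnreal_pos_mul_lt (a := 2 * B) (b := ε / 2)
    (by finiteness) (ENNReal.half_pos hε.ne').ne'
  obtain ⟨C, hC⟩ := h ε' hε'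
  obtain ⟨δ, hδ, hδC⟩ := ENNReal.exists_nnreal_pos_mul_lt (a := C) (b := ε / 2) (by finiteness)
    (ENNReal.half_pos hε.ne').ne'
  refine ⟨δ, by exact_mod_cast hδ, fun a ha b hb haB hbB hmid => ?_⟩
  have hsum : Φ a + Φ b ≤ 2 * B := by rw [two_mul]; gcongr
  have hab := hC a ha b hb
  have hfin : C * Φ ((1 / 2 : ℝ) • (a + b)) ≠ ⊤ :=
    ne_top_of_le_ne_top (b := (ε' + C / 2) * (2 * B)) (by finiteness)
      (le_add_self.trans (hab.trans (by gcongr)))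
  refine (ENNReal.add_le_add_iff_right hfin).1 (hab.trans ?_)
  calc (ε' + C / 2) * (Φ a + Φ b) = ε' * (Φ a + Φ b) + C * ((Φ a + Φ b) / 2) := by
        simp only [div_eq_mul_inv]; ring
    _ ≤ ε' * (2 * B) + C * (Φ ((1 / 2 : ℝ) • (a + b)) + δ) := by gcongr
    _ = (ε' * (2 * B) + δ * C) + C * Φ ((1 / 2 : ℝ) • (a + b)) := by ring
    _ ≤ (ε / 2 + ε / 2) + C * Φ ((1 / 2 : ℝ) • (a + b)) := by gcongr
    _ = ε + C * Φ ((1 / 2 : ℝ) • (a + b)) := by rw [ENNReal.add_halves]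

lemma exists_sobolevEnergy_sub_add_le (hp : 1 < p) {ε : ℝ≥0} (hε : 0 < ε) :
    ∃ C : ℝ≥0, ∀ φ ∈ {φ : Euc N → ℝ | ContDiff ℝ ∞ φ}, ∀ ψ ∈ {ψ : Euc N → ℝ | ContDiff ℝ ∞ ψ},
      sobolevEnergy Ω p (φ - ψ) (gradient (φ - ψ)) +
          C * sobolevEnergy Ω p ((1 / 2 : ℝ) • (φ + ψ)) (gradient ((1 / 2 : ℝ) • (φ + ψ))) ≤
        (ε + C / 2) * (sobolevEnergy Ω p φ (gradient φ) + sobolevEnergy Ω p ψ (gradient ψ)) := by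
  obtain ⟨C, hCg, hC⟩ := ((eventually_enorm_sub_rpow_le (V := Euc N) hp hε).and
    (eventually_enorm_sub_rpow_le (V := ℝ) hp hε)).exists
  refine ⟨C, fun φ (hφ : ContDiff ℝ ∞ φ) ψ (hψ : ContDiff ℝ ∞ ψ) => ?_⟩
  have hdφ : Differentiable ℝ φ := hφ.differentiable (by simp)
  have hdψ : Differentiable ℝ ψ := hψ.differentiable (by simp)
  rw [gradient_sub hdφ hdψ, gradient_const_smul (hdφ.add hdψ), gradient_add hdφ hdψ]
  have hmeas {χ : Euc N → ℝ} (hχ : ContDiff ℝ ∞ χ) :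
      AEMeasurable (fun x => ‖gradient χ x‖ₑ ^ p + ‖χ x‖ₑ ^ p) (volume.restrict Ω) :=
    (((continuous_gradient hχ (by simp)).enorm.measurable.pow_const p).add
      (hχ.continuous.enorm.measurable.pow_const p)).aemeasurable
  simp only [sobolevEnergy]
  rw [← lintegral_const_mul' _ _ ENNReal.coe_ne_top, ← lintegral_add_left' (hmeas hφ),
    ← lintegral_const_mul' _ _ (by finiteness)]
  refine (le_lintegral_add _ _).trans (lintegral_mono fun x => ?_)
  calc _ = (‖gradient φ x - gradient ψ x‖ₑ ^ p +
          C * ‖(1 / 2 : ℝ) • (gradient φ x + gradient ψ x)‖ₑ ^ p) +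
        (‖φ x - ψ x‖ₑ ^ p + C * ‖(1 / 2 : ℝ) • (φ x + ψ x)‖ₑ ^ p) := by
        simp only [Pi.sub_apply, Pi.smul_apply, Pi.add_apply]; ring
    _ ≤ (ε + C / 2) * (‖gradient φ x‖ₑ ^ p + ‖gradient ψ x‖ₑ ^ p) +
        (ε + C / 2) * (‖φ x‖ₑ ^ p + ‖ψ x‖ₑ ^ p) := add_le_add (hCg _ _) (hC _ _)
    _ = _ := by ring

lemma isUniformlyMidconvexOn_sobolevEnergy (hp : 1 < p) :
    IsUniformlyMidconvexOn {φ : Euc N → ℝ | ContDiff ℝ ∞ φ}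
      fun φ => sobolevEnergy Ω p φ (gradient φ) :=
  isUniformlyMidconvexOn_of_forall_exists_le fun _ hε => exists_sobolevEnergy_sub_add_le hp hε

end Energy

/-! ### Boundary integrals and the optimal constant -/

lemma tendsto_eLpNorm_const_smul_sub {X F : Type*} [MeasurableSpace X] {μ : Measure X}
    [NormedAddCommGroup F] [NormedSpace ℝ F] {p : ℝ≥0∞} {f : ℕ → X → F} {g : X → F}
    (hlim : Tendsto (fun n => eLpNorm (f n - g) p μ) atTop (𝓝 0)) (c : ℝ) :
    Tendsto (fun n => eLpNorm (c • f n - c • g) p μ) atTop (𝓝 0) := by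
  simp only [← smul_sub, eLpNorm_const_smul]
  simpa using ENNReal.Tendsto.const_mul hlim (Or.inr (enorm_ne_top (x := c)))

lemma exists_pos_lt_measure_compl_closedBall {X : Type*} [MetricSpace X] [MeasurableSpace X]
    [MeasurableSingletonClass X] {μ : Measure X} [NullSingletonClass μ] {c : ℝ≥0∞}
    (hc : c < μ univ) (x : X) : ∃ ε > 0, c < μ (closedBall x ε)ᶜ := by
  have hmono : Monotone fun n : ℕ => (closedBall x (1 / (n + 1)))ᶜ := fun m n hmn =>
    compl_subset_compl.2 (closedBall_subset_closedBall (by gcongr))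
  have hunion : {x}ᶜ ⊆ ⋃ n : ℕ, (closedBall x (1 / (n + 1)))ᶜ := fun y hy => by
    obtain ⟨n, hn⟩ := exists_nat_one_div_lt (dist_pos.2 (mem_compl_singleton_iff.1 hy))
    exact mem_iUnion.2 ⟨n, by simpa using hn⟩
  have hlt : c < ⨆ n : ℕ, μ (closedBall x (1 / (n + 1)))ᶜ :=
    calc c < μ univ := hc
      _ = μ {x}ᶜ := by rw [measure_compl (by measurability) (by simp), measure_singleton, tsub_zero]
      _ ≤ μ (⋃ n : ℕ, (closedBall x (1 / (n + 1)))ᶜ) := measure_mono hunion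
      _ = ⨆ n : ℕ, μ (closedBall x (1 / (n + 1)))ᶜ := hmono.measure_iUnion
  obtain ⟨n, hn⟩ := lt_iSup_iff.1 hlt
  exact ⟨1 / (n + 1), by positivity, hn⟩

section OptTraceConst

variable {N : ℕ} {Ω : Set (Euc N)} {p q r α : ℝ} {u : Euc N → ℝ} {g : Euc N → Euc N} {T : Euc N → ℝ}

lemma surf_apply (A : Set (Euc N)) : surf Ω A = μH[(N : ℝ) - 1] (frontier Ω ∩ A) := by
  rw [surf, Measure.restrict_apply' isClosed_frontier.measurableSet, inter_comm]

lemma surf_univ : surf Ω univ = μH[(N : ℝ) - 1] (frontier Ω) := by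
  rw [surf_apply, inter_univ]

lemma nullSingletonClass_surf (hN : 2 ≤ N) : NullSingletonClass (surf Ω) := by
  have hN' : (2 : ℝ) ≤ N := by exact_mod_cast hN
  have := Measure.nullSingletonClass_hausdorff (Euc N) (d := (N : ℝ) - 1) (by linarith)
  rw [surf]
  infer_instance

lemma bdryLqPow_eq_eLpNorm_rpow (hq : 0 < q) (T : Euc N → ℝ) :
    bdryLqPow Ω q T = eLpNorm T (ENNReal.ofReal q) (surf Ω) ^ q := by
  rw [bdryLqPow, eLpNorm_eq_lintegral_rpow_enorm_toReal (by simpa using hq) ENNReal.ofReal_ne_top,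
    ENNReal.toReal_ofReal hq.le, one_div, ENNReal.rpow_inv_rpow hq.ne']

lemma bdryLqPow_eq_zero_iff (hq : 0 < q) (hT : AEStronglyMeasurable T (surf Ω)) :
    bdryLqPow Ω q T = 0 ↔ T =ᵐ[surf Ω] 0 := by
  rw [bdryLqPow_eq_eLpNorm_rpow hq, ENNReal.rpow_eq_zero_iff_of_pos hq,
    eLpNorm_eq_zero_iff hT (by simpa using hq)]

lemma bdryLqPow_const_smul (hq : 0 ≤ q) (c : ℝ) (T : Euc N → ℝ) :
    bdryLqPow Ω q (c • T) = ‖c‖ₑ ^ q * bdryLqPow Ω q T := by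
  simp only [bdryLqPow, Pi.smul_apply, enorm_smul, ENNReal.mul_rpow_of_nonneg _ _ hq]
  exact lintegral_const_mul' _ _ (ENNReal.rpow_ne_top_of_nonneg hq enorm_ne_top)

lemma TendstoW1p.const_smul {φ : ℕ → Euc N → ℝ} (hφu : TendstoW1p Ω p φ u g)
    (hφ : ∀ n, Differentiable ℝ (φ n)) (c : ℝ) :
    TendstoW1p Ω p (fun n => c • φ n) (c • u) (c • g) := by
  refine ⟨tendsto_eLpNorm_const_smul_sub hφu.1 c, ?_⟩
  simp only [fun n => gradient_const_smul (hφ n) c]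
  exact tendsto_eLpNorm_const_smul_sub hφu.2 c

lemma IsTrace.const_smul (hT : IsTrace Ω p u g T) (c : ℝ) :
    IsTrace Ω p (c • u) (c • g) (c • T) := by
  obtain ⟨hTp, φ, hφ, hφu, hφT⟩ := hT
  exact ⟨hTp.const_smul c, fun n => c • φ n, fun n => contDiff_const.smul (hφ n),
    hφu.const_smul (fun n => (hφ n).differentiable (by simp)) c,
    tendsto_eLpNorm_const_smul_sub hφT c⟩

lemma IsTrace.admissible [IsFiniteMeasure (surf Ω)] (hT : IsTrace Ω p u g T)
    (hbd : TraceBounded (ENNReal.ofReal p) (ENNReal.ofReal r) (volume.restrict Ω) (surf Ω))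
    (hΩ : IsOpen Ω) (hb : Bornology.IsBounded Ω) (hp : 1 ≤ p) (hpr : p ≤ r)
    (hW : MemW1p Ω p u g) (hq : 0 < q) (hT0 : bdryLqPow Ω q T ≠ 0) : Admissible Ω p u g T :=
  ⟨hW, fun h0 => hT0 ((bdryLqPow_eq_zero_iff hq hT.1.1).2
    (hT.ae_eq_zero_of_memW1p0 hbd hΩ hb hp hpr h0)), hT⟩

lemma exists_rayleighQuot_lt_of_optTraceConst_lt {M : ℝ≥0∞} (h : optTraceConst Ω p q α < M) :
    ∃ u g T, Admissible Ω p u g T ∧ ENNReal.ofReal α * surf Ω univ ≤ surf Ω {x | T x = 0} ∧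
      rayleighQuot Ω p q u g T < M := by
  obtain ⟨_, ⟨Γ, hΓΩ, -, hΓ, rfl⟩, hΓM⟩ := sInf_lt_iff.1 h
  obtain ⟨_, ⟨u, g, T, hadm, hTΓ, rfl⟩, hM⟩ := sInf_lt_iff.1 hΓM
  refine ⟨u, g, T, hadm, ?_, hM⟩
  rw [surf_univ, ← hΓ, surf_apply]
  exact measure_mono_ae (hTΓ.mono fun x hx hxΓ => ⟨hΓΩ hxΓ, hx hxΓ⟩)

lemma optTraceConst_le_rayleighQuot [IsFiniteMeasure (surf Ω)] (hN : 2 ≤ N)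
    (hadm : Admissible Ω p u g T)
    (hzero : ENNReal.ofReal α * surf Ω univ ≤ surf Ω {x | T x = 0}) :
    optTraceConst Ω p q α ≤ rayleighQuot Ω p q u g T := by
  have := nullSingletonClass_surf (Ω := Ω) hN
  have hnull : NullMeasurableSet {x | T x = 0} (surf Ω) :=
    nullMeasurableSet_eq_fun hadm.2.2.1.1.aemeasurable aemeasurable_const
  obtain ⟨A, hAT, hA, hAeq⟩ := hnull.exists_measurable_subset_ae_eq
  obtain ⟨Γ, hΓA, hΓm, hΓ⟩ := exists_measurableSet_subset_measure_eq (surf Ω)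
    ((isClosed_frontier (s := Ω)).measurableSet.inter hA) (c := ENNReal.ofReal α * surf Ω univ) (by
      rwa [surf_apply (frontier Ω ∩ A), ← inter_assoc, inter_self, ← surf_apply,
        measure_congr hAeq])
  have hΓΩ : Γ ⊆ frontier Ω := hΓA.trans inter_subset_left
  have htrace : traceConst Ω p q Γ ≤ rayleighQuot Ω p q u g T :=
    sInf_le ⟨u, g, T, hadm, ae_of_all _ fun x hx => hAT (hΓA hx).2, rfl⟩
  refine le_trans (sInf_le ⟨Γ, hΓΩ, hΓm.nullMeasurableSet, ?_, rfl⟩) htrace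
  rw [← surf_univ, ← hΓ, surf_apply, inter_eq_right.2 hΓΩ]

lemma optTraceConst_lt_top (hN : 2 ≤ N) (hΩ : IsOpen Ω) (hb : Bornology.IsBounded Ω)
    (htrace : HasCompactTrace (ENNReal.ofReal p) (ENNReal.ofReal r) (volume.restrict Ω) (surf Ω))
    (hsurf : surf Ω ≠ 0) (hp : 1 ≤ p) (hpr : p ≤ r) (hq : 0 < q) (hα : α < 1) :
    optTraceConst Ω p q α < ⊤ := by
  have : IsFiniteMeasure (surf Ω) := ⟨htrace.measure_univ_lt_top⟩
  have := nullSingletonClass_surf (Ω := Ω) hN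
  obtain ⟨x, hx⟩ := Measure.nonempty_support hsurf
  have hαlt : ENNReal.ofReal α * surf Ω univ < surf Ω univ := by
    simpa using ENNReal.mul_lt_mul_left (by simpa using hsurf) (measure_ne_top _ univ)
      (ENNReal.ofReal_lt_one.2 hα)
  obtain ⟨ε, hε, hαε⟩ := exists_pos_lt_measure_compl_closedBall hαlt x
  let β : ContDiffBump x := ⟨ε / 2, ε, by positivity, by linarith⟩
  have hβ : ContDiff ℝ ∞ β := β.contDiff
  have htr : IsTrace Ω p β (gradient β) β := isTrace_of_contDiff hb hβ
  have hβ0 : bdryLqPow Ω q β ≠ 0 := fun h0 => by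
    refine ((Measure.mem_support_iff_forall x).1 hx _ (ball_mem_nhds x hε)).ne' ?_
    refine measure_mono_null (fun y hy => ?_) (ae_iff.1 ((bdryLqPow_eq_zero_iff hq htr.1.1).1 h0))
    exact (β.pos_of_mem_ball hy).ne'
  have hadm := htr.admissible htrace.traceBounded hΩ hb hp hpr (memW1p_of_contDiff hΩ hb hβ) hq hβ0
  have hzero : ENNReal.ofReal α * surf Ω univ ≤ surf Ω {y | β y = 0} :=
    hαε.le.trans <| measure_mono fun y hy =>
      β.zero_of_le_dist (not_le.1 (mem_closedBall.not.1 hy)).le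
  refine (optTraceConst_le_rayleighQuot hN hadm hzero).trans_lt (ENNReal.div_lt_top ?_ ?_)
  · exact sobolevEnergy_ne_top (zero_lt_one.trans_le hp) hadm.1.1 hadm.1.2.1
  · exact (ENNReal.rpow_pos_of_nonneg (pos_iff_ne_zero.2 hβ0) (by positivity)).ne'

lemma exists_sobolevEnergy_lt_of_optTraceConst_lt [IsFiniteMeasure (surf Ω)]
    (hbd : TraceBounded (ENNReal.ofReal p) (ENNReal.ofReal r) (volume.restrict Ω) (surf Ω))
    (hb : Bornology.IsBounded Ω) (hp : 1 ≤ p) (hpr : p ≤ r) (hq : 0 < q) (hqr : q ≤ r) {M : ℝ≥0∞}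
    (h : optTraceConst Ω p q α < M) :
    ∃ u g T, MemLp u (ENNReal.ofReal p) (volume.restrict Ω) ∧
      MemLp g (ENNReal.ofReal p) (volume.restrict Ω) ∧ IsTrace Ω p u g T ∧ bdryLqPow Ω q T = 1 ∧
      ENNReal.ofReal α * surf Ω univ ≤ surf Ω {x | T x = 0} ∧ sobolevEnergy Ω p u g < M := by
  have hp0 : 0 < p := zero_lt_one.trans_le hp
  obtain ⟨u, g, T, ⟨hW, hW0, hT⟩, hzero, hM⟩ := exists_rayleighQuot_lt_of_optTraceConst_lt h
  set b := bdryLqPow Ω q T with hb_def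
  have hbtop : b ≠ ⊤ := by
    rw [hb_def, bdryLqPow_eq_eLpNorm_rpow hq]
    have hTr := (hT.exists_tendsto_eLpNorm hbd hb hp hpr hW.1.1 hW.2.1.1).1
    exact ENNReal.rpow_ne_top_of_nonneg hq.le
      (hTr.mono_exponent (ENNReal.ofReal_le_ofReal hqr)).eLpNorm_ne_top
  have hb0 : b ≠ 0 := fun h0 => hW0 (hW.memW1p0_of_sobolevEnergy_eq_zero hp0 (by
    by_contra hE
    rw [rayleighQuot, ← hb_def, h0, ENNReal.zero_rpow_of_pos (by positivity),
      ENNReal.div_zero hE] at hM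
    exact not_top_lt hM))
  have hroot : (b ^ q⁻¹)⁻¹ ≠ ⊤ :=
    ENNReal.inv_ne_top.2 (ENNReal.rpow_pos (pos_iff_ne_zero.2 hb0) hbtop).ne'
  set c := ((b ^ q⁻¹)⁻¹).toReal
  have hc (s : ℝ) : ‖c‖ₑ ^ s = (b ^ (s / q))⁻¹ := by
    rw [Real.enorm_toReal hroot, ENNReal.inv_rpow, ← ENNReal.rpow_mul, inv_mul_eq_div]
  have hc0 : c ≠ 0 := (ENNReal.toReal_pos (ENNReal.inv_ne_zero.2
    (ENNReal.rpow_ne_top_of_nonneg (by positivity) hbtop)) hroot).ne'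
  refine ⟨c • u, c • g, c • T, hW.1.const_smul c, hW.2.1.const_smul c, hT.const_smul c, ?_, ?_, ?_⟩
  · rw [bdryLqPow_const_smul hq.le, hc, div_self hq.ne', ENNReal.rpow_one,
      ENNReal.inv_mul_cancel hb0 hbtop]
  · simpa [hc0] using hzero
  · rwa [sobolevEnergy_const_smul hp0.le, hc, mul_comm, ← div_eq_mul_inv]

lemma IsTrace.exists_contDiff_sobolevEnergy_lt [IsFiniteMeasure (surf Ω)] (hT : IsTrace Ω p u g T)
    (hbd : TraceBounded (ENNReal.ofReal p) (ENNReal.ofReal r) (volume.restrict Ω) (surf Ω))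
    (hb : Bornology.IsBounded Ω) (hp : 1 ≤ p) (hpr : p ≤ r)
    (hu : MemLp u (ENNReal.ofReal p) (volume.restrict Ω))
    (hg : MemLp g (ENNReal.ofReal p) (volume.restrict Ω)) {M η : ℝ≥0∞}
    (hM : sobolevEnergy Ω p u g < M) (hη : 0 < η) :
    ∃ φ : Euc N → ℝ, ContDiff ℝ ∞ φ ∧ eLpNorm (φ - T) (ENNReal.ofReal r) (surf Ω) ≤ η ∧
      sobolevEnergy Ω p φ (gradient φ) < M := by
  obtain ⟨-, φ, hφ, hφu, hφT⟩ := hT.exists_tendsto_eLpNorm hbd hb hp hpr hu.1 hg.1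
  obtain ⟨n, hnT, hnM⟩ := ((hφT.eventually_le_const hη).and
    ((hφu.tendsto_sobolevEnergy hp hφ hu hg).eventually_lt_const hM)).exists
  exact ⟨φ n, hφ n, hnT, hnM⟩

end OptTraceConst

/-! ### Passing to the limit in a minimizing sequence -/

lemma le_measure_eq_of_tendsto_eLpNorm {X F : Type*} [MeasurableSpace X] {μ : Measure X}
    [IsFiniteMeasure μ] [NormedAddCommGroup F] {r : ℝ≥0∞} (hr : r ≠ 0) {f : ℕ → X → F} {g : X → F}
    (hf : ∀ n, AEStronglyMeasurable (f n) μ) (hg : AEStronglyMeasurable g μ)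
    (hlim : Tendsto (fun n => eLpNorm (f n - g) r μ) atTop (𝓝 0)) {c : ℝ≥0∞} {a : F}
    (hc : ∀ n, c ≤ μ {x | f n x = a}) : c ≤ μ {x | g x = a} := by
  obtain ⟨ns, -, hns⟩ := (tendstoInMeasure_of_tendsto_eLpNorm hr hf hg hlim).exists_seq_tendsto_ae
  let A (n : ℕ) : Set X := ⋃ k ≥ n, {x | f (ns k) x = a}
  have hA (n : ℕ) : NullMeasurableSet (A n) μ :=
    .iUnion fun k => .iUnion fun _ =>
      (hf (ns k)).nullMeasurableSet_eq_fun aestronglyMeasurable_const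
  have hanti : Antitone A := fun m n hmn => biUnion_subset_biUnion_left fun k hk => hmn.trans hk
  calc c ≤ ⨅ n, μ (A n) := le_iInf fun n =>
        (hc (ns n)).trans (measure_mono fun x hx => mem_iUnion₂.2 ⟨n, le_rfl, hx⟩)
    _ = μ (⋂ n, A n) := (hanti.measure_iInter hA ⟨0, measure_ne_top μ _⟩).symm
    _ ≤ μ {x | g x = a} := measure_mono_ae <| hns.mono fun x hx (hxA : x ∈ ⋂ n, A n) => by
        have hfreq : ∃ᶠ k in atTop, f (ns k) x = a := frequently_atTop.2 fun n => by
          simpa [A] using mem_iInter.1 hxA n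
        exact tendsto_nhds_unique_of_frequently_eq hx tendsto_const_nhds hfreq

lemma convex_setOf_eLpNorm_sub_le {X F : Type*} [MeasurableSpace X] {μ : Measure X}
    [NormedAddCommGroup F] [NormedSpace ℝ F] {r : ℝ≥0∞} (hr : 1 ≤ r) {g : X → F}
    (hg : AEStronglyMeasurable g μ) (δ : ℝ≥0∞) :
    Convex ℝ {f : X → F | AEStronglyMeasurable f μ ∧ eLpNorm (f - g) r μ ≤ δ} := by
  intro f hf h hh a b ha hb hab
  refine ⟨(hf.1.const_smul a).add (hh.1.const_smul b), ?_⟩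
  calc eLpNorm (a • f + b • h - g) r μ = eLpNorm (a • (f - g) + b • (h - g)) r μ := by
        congr 1
        rw [smul_sub, smul_sub, sub_add_sub_comm, ← add_smul, hab, one_smul]
    _ ≤ ‖a‖ₑ * eLpNorm (f - g) r μ + ‖b‖ₑ * eLpNorm (h - g) r μ := by
        simpa only [eLpNorm_const_smul] using
          eLpNorm_add_le ((hf.1.sub hg).const_smul a) ((hh.1.sub hg).const_smul b) hr
    _ ≤ ‖a‖ₑ * δ + ‖b‖ₑ * δ := by gcongr; exacts [hf.2, hh.2]
    _ = δ := by
        rw [← add_mul, Real.enorm_of_nonneg ha, Real.enorm_of_nonneg hb, ← ENNReal.ofReal_add ha hb,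
          hab, ENNReal.ofReal_one, one_mul]

lemma convex_setOf_contDiff {E F : Type*} [NormedAddCommGroup E] [NormedSpace ℝ E]
    [NormedAddCommGroup F] [NormedSpace ℝ F] (n : WithTop ℕ∞) :
    Convex ℝ {f : E → F | ContDiff ℝ n f} := fun _ hf _ hg a b _ _ _ =>
  (ContDiff.const_smul a hf).add (ContDiff.const_smul b hg)

section Minimizing

variable {N : ℕ} {Ω : Set (Euc N)} {p q r α : ℝ} {T : Euc N → ℝ} {φ : ℕ → Euc N → ℝ}

lemma tendsto_bdryLqPow [IsFiniteMeasure (surf Ω)] (hq : 1 ≤ q) (hqr : q ≤ r)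
    {t : ℕ → Euc N → ℝ} (ht : ∀ n, AEStronglyMeasurable (t n) (surf Ω))
    (hT : MemLp T (ENNReal.ofReal r) (surf Ω))
    (hlim : Tendsto (fun n => eLpNorm (t n - T) (ENNReal.ofReal r) (surf Ω)) atTop (𝓝 0)) :
    Tendsto (fun n => bdryLqPow Ω q (t n)) atTop (𝓝 (bdryLqPow Ω q T)) := by
  have hq1 : 1 ≤ ENNReal.ofReal q := by simpa using hq
  have hle : ENNReal.ofReal q ≤ ENNReal.ofReal r := ENNReal.ofReal_le_ofReal hqr
  simp only [bdryLqPow_eq_eLpNorm_rpow (zero_lt_one.trans_le hq)]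
  exact (tendsto_eLpNorm_of_tendsto_eLpNorm_sub hq1 ht (hT.mono_exponent hle)
    (tendsto_eLpNorm_of_exponent_le hq1 hle ENNReal.ofReal_ne_top
      (fun n => (ht n).sub hT.1) hlim)).ennrpow_const q

lemma smoothW1pNorm_le_sobolevEnergy_rpow_inv (hp : 0 < p) {φ : Euc N → ℝ}
    (hφ : AEStronglyMeasurable φ (volume.restrict Ω)) :
    smoothW1pNorm (ENNReal.ofReal p) (volume.restrict Ω) φ ≤
      2 * sobolevEnergy Ω p φ (gradient φ) ^ p⁻¹ := by
  rw [smoothW1pNorm_eq_add_eLpNorm_gradient, two_mul]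
  have hle := eLpNorm_le_sobolevEnergy_rpow_inv (g := gradient φ) hp hφ
  exact add_le_add hle.1 hle.2

/-- Almost minimizers of the energy over the functions whose boundary values are close to `T`
converge strongly, by uniform convexity, so no weak compactness in `W^{1,p}(Ω)` is needed. -/
lemma exists_isTrace_sobolevEnergy_le_liminf [IsFiniteMeasure (surf Ω)] (hΩ : IsOpen Ω)
    (hb : Bornology.IsBounded Ω) (hp : 1 < p) (hpr : p ≤ r) (hφ : ∀ n, ContDiff ℝ ∞ (φ n))
    (hT : MemLp T (ENNReal.ofReal r) (surf Ω))
    (hlim : Tendsto (fun n => eLpNorm (φ n - T) (ENNReal.ofReal r) (surf Ω)) atTop (𝓝 0))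
    (hl : liminf (fun n => sobolevEnergy Ω p (φ n) (gradient (φ n))) atTop ≠ ⊤) :
    ∃ u g, MemW1p Ω p u g ∧ IsTrace Ω p u g T ∧
      sobolevEnergy Ω p u g ≤
        liminf (fun n => sobolevEnergy Ω p (φ n) (gradient (φ n))) atTop := by
  set l := liminf (fun n => sobolevEnergy Ω p (φ n) (gradient (φ n))) atTop
  have hpr' : ENNReal.ofReal p ≤ ENNReal.ofReal r := ENNReal.ofReal_le_ofReal hpr
  have hp1 : 1 ≤ ENNReal.ofReal p := by simpa using hp.le
  have hmeas {ψ : Euc N → ℝ} (hψ : ContDiff ℝ ∞ ψ) : AEStronglyMeasurable ψ (surf Ω) :=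
    hψ.continuous.aestronglyMeasurable
  let H (n : ℕ) : Set (Euc N → ℝ) := {ψ | ContDiff ℝ ∞ ψ} ∩ {ψ | AEStronglyMeasurable ψ (surf Ω) ∧
    eLpNorm (ψ - T) (ENNReal.ofReal r) (surf Ω) ≤ (n + 1 : ℝ≥0∞)⁻¹}
  have hanti : Antitone H := fun m n hmn ψ hψ => ⟨hψ.1, hψ.2.1, hψ.2.2.trans (by gcongr)⟩
  have hinf (n : ℕ) : ⨅ ψ ∈ H n, sobolevEnergy Ω p ψ (gradient ψ) ≤ l := by
    have hpos : (0 : ℝ≥0∞) < (n + 1 : ℝ≥0∞)⁻¹ := ENNReal.inv_pos.2 (by finiteness)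
    refine le_liminf_of_le (by isBoundedDefault) ?_
    filter_upwards [hlim.eventually_le_const hpos] with k hk
    exact iInf₂_le (φ k) ⟨hφ k, hmeas (hφ k), hk⟩
  have hconv : IsUniformlyMidconvexOn (H 0) fun ψ => sobolevEnergy Ω p ψ (gradient ψ) :=
    (isUniformlyMidconvexOn_sobolevEnergy hp).mono inter_subset_left
  obtain ⟨w, hwH, hwl, hw⟩ := hconv.exists_tendsto_sub
    (fun n => (convex_setOf_contDiff ∞).inter
      (convex_setOf_eLpNorm_sub_le (hp1.trans hpr') hT.1 _)) hanti hl hinf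
  have hwT : Tendsto (fun n => eLpNorm (w n - T) (ENNReal.ofReal r) (surf Ω)) atTop (𝓝 0) :=
    tendsto_of_tendsto_of_tendsto_of_le_of_le tendsto_const_nhds tendsto_inv_add_one_nhds_zero
      (fun _ => zero_le) fun n => (hwH n).2.2
  have hws (n : ℕ) : ContDiff ℝ ∞ (w n) := (hwH n).1
  obtain ⟨u, g, hW, hwu⟩ := exists_tendstoW1p_of_tendsto_sobolevEnergy_sub hΩ hb hp.le hws hw
  refine ⟨u, g, hW, ⟨hT.mono_exponent hpr', w, hws, hwu, ?_⟩, ?_⟩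
  · exact tendsto_eLpNorm_of_exponent_le hp1 hpr' ENNReal.ofReal_ne_top
      (fun n => (hmeas (hws n)).sub hT.1) hwT
  · refine le_of_tendsto_of_tendsto' (hwu.tendsto_sobolevEnergy hp.le hws hW.1 hW.2.1) ?_ hwl
    simpa using tendsto_inv_add_one_nhds_zero.const_add l

lemma HasCompactTrace.exists_tendsto_of_sobolevEnergy_le
    (htrace : HasCompactTrace (ENNReal.ofReal p) (ENNReal.ofReal r) (volume.restrict Ω) (surf Ω))
    (hp : 0 < p) (hr : 1 ≤ r) (hφ : ∀ n, ContDiff ℝ 1 (φ n)) {M : ℝ≥0∞} (hM : M ≠ ⊤)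
    (hφM : ∀ n, sobolevEnergy Ω p (φ n) (gradient (φ n)) ≤ M) :
    ∃ T, ∃ ns : ℕ → ℕ, StrictMono ns ∧ MemLp T (ENNReal.ofReal r) (surf Ω) ∧
      Tendsto (fun n => eLpNorm (φ (ns n) - T) (ENNReal.ofReal r) (surf Ω)) atTop (𝓝 0) := by
  have hR : 2 * M ^ p⁻¹ ≠ ⊤ :=
    ENNReal.mul_ne_top (by finiteness) (ENNReal.rpow_ne_top_of_nonneg (by positivity) hM)
  have hnorm (n : ℕ) : smoothW1pNorm (ENNReal.ofReal p) (volume.restrict Ω) (φ n) ≤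
      (2 * M ^ p⁻¹).toNNReal := by
    rw [ENNReal.coe_toNNReal hR]
    refine (smoothW1pNorm_le_sobolevEnergy_rpow_inv hp
      (hφ n).continuous.aestronglyMeasurable).trans ?_
    gcongr
    exact hφM n
  obtain ⟨C, hC⟩ := htrace.traceBounded
  have hmem (n : ℕ) : MemLp (φ n) (ENNReal.ofReal r) (surf Ω) :=
    ⟨(hφ n).continuous.aestronglyMeasurable, (hC _ (hφ n)).trans_lt
      (ENNReal.mul_lt_top ENNReal.coe_lt_top ((hnorm n).trans_lt ENNReal.coe_lt_top))⟩
  obtain ⟨ns, hns, hcauchy⟩ := htrace.traceCompact φ hφ _ hnorm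
  obtain ⟨T, -, hT, hlim⟩ := hcauchy.exists_tendsto (by simpa using hr) fun n => hmem (ns n)
  exact ⟨T, ns, hns, hT, hlim⟩

lemma exists_seq_contDiff_minimizing
    (htrace : HasCompactTrace (ENNReal.ofReal p) (ENNReal.ofReal r) (volume.restrict Ω) (surf Ω))
    (hb : Bornology.IsBounded Ω) (hp : 1 ≤ p) (hpr : p ≤ r) (hq : 0 < q) (hqr : q ≤ r)
    (hl : optTraceConst Ω p q α ≠ ⊤) :
    ∃ φ t : ℕ → Euc N → ℝ, (∀ n, ContDiff ℝ ∞ (φ n)) ∧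
      (∀ n, sobolevEnergy Ω p (φ n) (gradient (φ n)) ≤ optTraceConst Ω p q α + (n + 1 : ℝ≥0∞)⁻¹) ∧
      (∀ n, AEStronglyMeasurable (t n) (surf Ω)) ∧
      Tendsto (fun n => eLpNorm (φ n - t n) (ENNReal.ofReal r) (surf Ω)) atTop (𝓝 0) ∧
      (∀ n, bdryLqPow Ω q (t n) = 1) ∧
      ∀ n, ENNReal.ofReal α * surf Ω univ ≤ surf Ω {x | t n x = 0} := by
  have : IsFiniteMeasure (surf Ω) := ⟨htrace.measure_univ_lt_top⟩
  have hex (n : ℕ) : ∃ φ t : Euc N → ℝ, ContDiff ℝ ∞ φ ∧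
      sobolevEnergy Ω p φ (gradient φ) ≤ optTraceConst Ω p q α + (n + 1 : ℝ≥0∞)⁻¹ ∧
      AEStronglyMeasurable t (surf Ω) ∧
      eLpNorm (φ - t) (ENNReal.ofReal r) (surf Ω) ≤ (n + 1 : ℝ≥0∞)⁻¹ ∧ bdryLqPow Ω q t = 1 ∧
      ENNReal.ofReal α * surf Ω univ ≤ surf Ω {x | t x = 0} := by
    have hpos : (0 : ℝ≥0∞) < (n + 1 : ℝ≥0∞)⁻¹ := ENNReal.inv_pos.2 (by finiteness)
    obtain ⟨u, g, t, hu, hg, ht, ht1, hzero, hM⟩ :=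
      exists_sobolevEnergy_lt_of_optTraceConst_lt htrace.traceBounded hb hp hpr hq hqr
        (ENNReal.lt_add_right hl hpos.ne')
    obtain ⟨φ, hφ, hφt, hφM⟩ :=
      ht.exists_contDiff_sobolevEnergy_lt htrace.traceBounded hb hp hpr hu hg hM hpos
    exact ⟨φ, t, hφ, hφM.le, ht.1.1, hφt, ht1, hzero⟩
  choose φ t hφ hφM ht hφt ht1 hzero using hex
  exact ⟨φ, t, hφ, hφM, ht, tendsto_of_tendsto_of_tendsto_of_le_of_le tendsto_const_nhds
    tendsto_inv_add_one_nhds_zero (fun _ => zero_le) hφt, ht1, hzero⟩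

lemma exists_tendsto_contDiff_liminf_sobolevEnergy_le
    (htrace : HasCompactTrace (ENNReal.ofReal p) (ENNReal.ofReal r) (volume.restrict Ω) (surf Ω))
    (hb : Bornology.IsBounded Ω) (hp : 1 ≤ p) (hpr : p ≤ r) (hq : 1 ≤ q) (hqr : q ≤ r)
    (hl : optTraceConst Ω p q α ≠ ⊤) :
    ∃ (φ : ℕ → Euc N → ℝ) (T : Euc N → ℝ), (∀ n, ContDiff ℝ ∞ (φ n)) ∧
      MemLp T (ENNReal.ofReal r) (surf Ω) ∧
      Tendsto (fun n => eLpNorm (φ n - T) (ENNReal.ofReal r) (surf Ω)) atTop (𝓝 0) ∧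
      liminf (fun n => sobolevEnergy Ω p (φ n) (gradient (φ n))) atTop ≤ optTraceConst Ω p q α ∧
      bdryLqPow Ω q T = 1 ∧ ENNReal.ofReal α * surf Ω univ ≤ surf Ω {x | T x = 0} := by
  have : IsFiniteMeasure (surf Ω) := ⟨htrace.measure_univ_lt_top⟩
  have hr : 1 ≤ ENNReal.ofReal r := by simpa using hq.trans hqr
  obtain ⟨φ, t, hφ, hφM, ht, hφt, ht1, hzero⟩ :=
    exists_seq_contDiff_minimizing htrace hb hp hpr (zero_lt_one.trans_le hq) hqr hl
  have hφ1 (n : ℕ) : ContDiff ℝ 1 (φ n) := (hφ n).of_le (by exact_mod_cast le_top)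
  obtain ⟨T, ns, hns, hT, hφT⟩ := htrace.exists_tendsto_of_sobolevEnergy_le
    (zero_lt_one.trans_le hp) (hq.trans hqr) hφ1 (M := optTraceConst Ω p q α + 1) (by finiteness)
    fun n => (hφM n).trans (by gcongr; simp)
  have htT : Tendsto (fun n => eLpNorm (t (ns n) - T) (ENNReal.ofReal r) (surf Ω)) atTop (𝓝 0) := by
    refine tendsto_of_tendsto_of_tendsto_of_le_of_le tendsto_const_nhds
      (by simpa using (hφt.comp hns.tendsto_atTop).add hφT) (fun _ => zero_le) fun n => ?_
    have hmeas : AEStronglyMeasurable (φ (ns n)) (surf Ω) :=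
      (hφ (ns n)).continuous.aestronglyMeasurable
    simpa [eLpNorm_sub_comm] using eLpNorm_add_le ((ht (ns n)).sub hmeas) (hmeas.sub hT.1) hr
  have hM : Tendsto (fun n : ℕ => optTraceConst Ω p q α + (n + 1 : ℝ≥0∞)⁻¹) atTop
      (𝓝 (optTraceConst Ω p q α)) := by
    simpa using tendsto_inv_add_one_nhds_zero.const_add (optTraceConst Ω p q α)
  refine ⟨φ ∘ ns, T, fun n => hφ (ns n), hT, hφT, ?_, ?_, ?_⟩
  · rw [← (hM.comp hns.tendsto_atTop).liminf_eq]
    exact liminf_le_liminf (Eventually.of_forall fun n => hφM (ns n))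
  · refine tendsto_nhds_unique (tendsto_bdryLqPow hq hqr (fun n => ht (ns n)) hT htT) ?_
    simp [ht1]
  · exact le_measure_eq_of_tendsto_eLpNorm (zero_lt_one.trans_le hr).ne' (fun n => ht (ns n))
      hT.1 htT fun n => hzero (ns n)

end Minimizing

lemma subcritical_max_exponent {d p q : ℝ} (hd : 1 < d) (hp : 1 < p)
    (hsub : p < d → q < p * (d - 1) / (d - p)) : d / p - (d - 1) / max p q < 1 := by
  have hp0 : 0 < p := zero_lt_one.trans hp
  have hr0 : 0 < max p q := lt_max_of_lt_left hp0
  rcases lt_or_ge p d with hpd | hpd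
  · have hdp : 0 < d - p := sub_pos.2 hpd
    have hr : max p q < p * (d - 1) / (d - p) := by
      refine max_lt ?_ (hsub hpd)
      rw [lt_div_iff₀ hdp]
      exact mul_lt_mul_of_pos_left (by linarith) hp0
    have hlt : (d - p) / p < (d - 1) / max p q := by
      rw [div_lt_div_iff₀ hp0 hr0, mul_comm, mul_comm (d - 1)]
      exact (lt_div_iff₀ hdp).1 hr
    rw [sub_div, div_self hp0.ne'] at hlt
    linarith
  · have hdp : d / p ≤ 1 := (div_le_one hp0).2 hpd
    have hr : 0 < (d - 1) / max p q := div_pos (sub_pos.2 hd) hr0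
    linarith

theorem exists_extremal_optTraceConst_general {N : ℕ} (hN : 2 ≤ N) (Ω : Set (Euc N))
    (hΩo : IsOpen Ω) (hΩb : Bornology.IsBounded Ω) (hΩn : Ω.Nonempty) (hΩc : HasInteriorCones Ω)
    (p q : ℝ) (hp : 1 < p) (hq : 1 ≤ q)
    (hsub : p < (N : ℝ) → q < p * ((N : ℝ) - 1) / ((N : ℝ) - p)) (α : ℝ)
    (hα : α ∈ Set.Ico (0 : ℝ) 1) :
    ∃ (u : Euc N → ℝ) (g : Euc N → Euc N) (T : Euc N → ℝ),
      Admissible Ω p u g T ∧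
      ENNReal.ofReal α * μH[(N : ℝ) - 1] (frontier Ω) ≤
        μH[(N : ℝ) - 1] {x ∈ frontier Ω | T x = 0} ∧
      0 < bdryLqPow Ω q T ∧ bdryLqPow Ω q T < ⊤ ∧
      optTraceConst Ω p q α = rayleighQuot Ω p q u g T := by
  have hq0 : 0 < q := zero_lt_one.trans_le hq
  have hpr : p ≤ max p q := le_max_left p q
  have htrace : HasCompactTrace (ENNReal.ofReal p) (ENNReal.ofReal (max p q))
      (volume.restrict Ω) (surf Ω) := by
    simpa [surf] using hΩc.hasCompactTrace hΩo hΩb hp hpr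
      (by simpa using subcritical_max_exponent (by exact_mod_cast hN) hp hsub)
  have : IsFiniteMeasure (surf Ω) := ⟨htrace.measure_univ_lt_top⟩
  have : Nontrivial (Euc N) := Module.nontrivial_of_finrank_pos (R := ℝ) (by simp; lia)
  have hsurf : surf Ω ≠ 0 := by
    rw [← Measure.measure_univ_ne_zero, surf_univ]
    simpa using (hausdorffMeasure_frontier_pos hΩo hΩb hΩn).ne'
  have hl := optTraceConst_lt_top hN hΩo hΩb htrace hsurf hp.le hpr hq0 hα.2
  obtain ⟨φ, T, hφ, hTr, hφT, hφl, hT1, hzero⟩ := exists_tendsto_contDiff_liminf_sobolevEnergy_le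
    htrace hΩb hp.le hpr hq (le_max_right p q) hl.ne
  obtain ⟨u, g, hW, hT, hle⟩ := exists_isTrace_sobolevEnergy_le_liminf hΩo hΩb hp hpr hφ hTr hφT
    (hφl.trans_lt hl).ne
  have hadm : Admissible Ω p u g T :=
    hT.admissible htrace.traceBounded hΩo hΩb hp.le hpr hW hq0 (by simp [hT1])
  refine ⟨u, g, T, hadm, ?_, by simp [hT1], by simp [hT1], ?_⟩
  · simpa [surf_apply, surf_univ, ofPred_and] using hzero
  · refine (optTraceConst_le_rayleighQuot hN hadm hzero).antisymm ?_
    simpa [rayleighQuot, hT1] using hle.trans hφl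

end

/-- For every `α ∈ (0,1)` there is `u ∈ W^{1,p}(Ω) \ W^{1,p}_0(Ω)` (with weak gradient `g` and
trace `T`) whose trace vanishes on a subset of `∂Ω` of `H^{N-1}`-measure at least
`α H^{N-1}(∂Ω)` and whose Rayleigh quotient (with positive finite denominator) equals `𝒮(α)`. -/
theorem exists_extremal_optTraceConst {N : ℕ} (hN : 2 ≤ N) (Ω : Set (Euc N))
    (hΩo : IsOpen Ω) (hΩb : Bornology.IsBounded Ω) (hΩc : IsConnected Ω)
    (hΩs : HasSmoothBoundary Ω)
    (p q : ℝ) (hp : 1 < p) (hq : 1 ≤ q)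
    (hsub : p < (N : ℝ) → q < p * ((N : ℝ) - 1) / ((N : ℝ) - p))
    (α : ℝ) (hα : α ∈ Set.Ioo (0 : ℝ) 1) :
    ∃ (u : Euc N → ℝ) (g : Euc N → Euc N) (T : Euc N → ℝ),
      Admissible Ω p u g T ∧
      ENNReal.ofReal α * μH[(N : ℝ) - 1] (frontier Ω) ≤
        μH[(N : ℝ) - 1] {x ∈ frontier Ω | T x = 0} ∧
      0 < bdryLqPow Ω q T ∧ bdryLqPow Ω q T < ⊤ ∧
      optTraceConst Ω p q α = rayleighQuot Ω p q u g T :=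
  exists_extremal_optTraceConst_general hN Ω hΩo hΩb hΩc.nonempty hΩs.hasInteriorCones p q hp hq
    hsub α ⟨hα.1.le, hα.2⟩
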